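/- arXiv:1903.02385 — 5 statements merged into one kernel-verified Lean document; each statement's English description precedes it below -/
import Mathlib

section
/- Let v, w : ℝ → ℝ be C⁴ positive solutions of the ODE v''''(t) − A·v''(t) + B·v(t) = g(v(t)) with inf_{t ∈ ℝ} v(t) = 0 and inf_{t ∈ ℝ} w(t) = 0. Then there exists τ ∈ ℝ such that w(t) = v(t + τ) for all t ∈ ℝ. In particular, the positive solution with infimum 0 is unique up to translations. -/
open Real Filter Set

noncomputable section

/-- Conditions (G) on the nonlinearity `g`, extended to `[0,∞)` by `g 0 = 0`. -/
def CondG (n : ℕ) (g : ℝ → ℝ) : Prop :=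
  ContDiffOn ℝ 1 g (Set.Ioi 0) ∧
  (∀ t > 0, 0 < g t) ∧
  Filter.Tendsto g (nhdsWithin 0 (Set.Ioi 0)) (nhds 0) ∧
  (∀ t > 0, g t / t < deriv g t ∧ deriv g t ≤ (((n : ℝ) + 4) / ((n : ℝ) - 4)) * (g t / t)) ∧
  (∃ β : ℝ, 0 ≤ β ∧ β < (n : ℝ) ^ 2 * ((n : ℝ) - 4) ^ 2 / 16 ∧
    Filter.Tendsto (deriv g) (nhdsWithin 0 (Set.Ioi 0)) (nhds β)) ∧
  (∃ q c : ℝ, 1 < q ∧ 0 < c ∧ ∀ t ≥ 1, c * t ^ q ≤ g t) ∧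
  g 0 = 0

/-- `v` solves the ODE `v'''' - A v'' + B v = g(v)` on all of `ℝ`. -/
def IsSol (A B : ℝ) (g v : ℝ → ℝ) : Prop :=
  ∀ t : ℝ, iteratedDeriv 4 v t - A * iteratedDeriv 2 v t + B * v t = g (v t)

theorem le_of_dn {f f' : ℝ → ℝ} {a b : ℝ} (hab : a ≤ b) (hf : ∀ t ∈ Icc a b, HasDerivAt f (f' t) t)
    (h : ∀ t ∈ Ioo a b, 0 ≤ f' t) : f a ≤ f b := by
  have hm : MonotoneOn f (Icc a b) := by
    apply monotoneOn_of_deriv_nonneg (convex_Icc a b)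
    · exact fun t ht => (hf t ht).continuousAt.continuousWithinAt
    · intro t ht
      rw [interior_Icc] at ht
      exact (hf t (Ioo_subset_Icc_self ht)).differentiableAt.differentiableWithinAt
    · intro t ht
      rw [interior_Icc] at ht
      rw [(hf t (Ioo_subset_Icc_self ht)).deriv]
      exact h t ht
  exact hm (left_mem_Icc.2 hab) (right_mem_Icc.2 hab) hab

theorem lin_of_dn {f f' : ℝ → ℝ} {a b c : ℝ} (hab : a ≤ b)
    (hf : ∀ t ∈ Icc a b, HasDerivAt f (f' t) t)
    (h : ∀ t ∈ Ioo a b, c ≤ f' t) : f a + c * (b - a) ≤ f b := by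
  have := le_of_dn (f := fun t => f t - c * t) (f' := fun t => f' t - c * 1) hab
    (fun t ht => (hf t ht).sub ((hasDerivAt_id t).const_mul c))
    (fun t ht => by have := h t ht; linarith)
  linarith

theorem lin_of_dn' {f f' : ℝ → ℝ} {a b c : ℝ} (hab : a ≤ b)
    (hf : ∀ t ∈ Icc a b, HasDerivAt f (f' t) t)
    (h : ∀ t ∈ Ioo a b, f' t ≤ c) : f b ≤ f a + c * (b - a) := by
  have := lin_of_dn (f := fun t => - f t) (f' := fun t => - f' t) (c := -c) hab
    (fun t ht => (hf t ht).neg)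
    (fun t ht => by have := h t ht; linarith)
  linarith

theorem exp_grow {f f' : ℝ → ℝ} {a b k : ℝ} (hab : a ≤ b)
    (hf : ∀ t ∈ Icc a b, HasDerivAt f (f' t) t)
    (h : ∀ t ∈ Ioo a b, k * f t ≤ f' t) : f a * exp (k * (b - a)) ≤ f b := by
  have h1 := le_of_dn (f := fun t => f t * exp (-k * t))
    (f' := fun t => f' t * exp (-k * t) + f t * (exp (-k * t) * (-k * 1))) hab
    (fun t ht => (hf t ht).mul (((hasDerivAt_id t).const_mul (-k)).exp))
    (fun t ht => by
      have := h t ht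
      have he := exp_pos (-k * t)
      have : 0 ≤ exp (-k * t) * (f' t - k * f t) := mul_nonneg he.le (by linarith)
      nlinarith)
  have e1 : exp (k * (b - a)) = exp (-k * a) * exp (k * b) := by
    rw [← Real.exp_add]; congr 1; ring
  have e2 : exp (-k * b) * exp (k * b) = 1 := by
    rw [← Real.exp_add]; simp
  calc f a * exp (k * (b - a)) = (f a * exp (-k * a)) * exp (k * b) := by rw [e1]; ring
    _ ≤ (f b * exp (-k * b)) * exp (k * b) := mul_le_mul_of_nonneg_right h1 (exp_pos _).le
    _ = f b := by rw [mul_assoc, e2, mul_one]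

/-- Blow-up lemma. -/
theorem blowup {v v1 v2 v3 v4 : ℝ → ℝ} {t0 c q : ℝ} (hc : 0 < c) (hq : 1 < q)
    (d0 : ∀ t, HasDerivAt v (v1 t) t) (d1 : ∀ t, HasDerivAt v1 (v2 t) t)
    (d2 : ∀ t, HasDerivAt v2 (v3 t) t) (d3 : ∀ t, HasDerivAt v3 (v4 t) t)
    (h0 : ∀ t ≥ t0, 0 ≤ v t) (h1 : ∀ t ≥ t0, 0 < v1 t) (h2 : ∀ t ≥ t0, 0 ≤ v2 t)
    (h3 : ∀ t ≥ t0, 0 ≤ v3 t) (h4 : ∀ t ≥ t0, c * v t ^ q ≤ v4 t) : False := by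
  set u : ℝ → ℝ := fun t => v t - v t0 with hu
  have du : ∀ t, HasDerivAt u (v1 t) t := fun t => (d0 t).sub_const _
  have u0 : u t0 = 0 := by simp [hu]
  have unn : ∀ t ≥ t0, 0 ≤ u t := by
    intro t ht
    have := le_of_dn (f := u) ht (fun s _ => du s) (fun s hs => (h1 s hs.1.le).le)
    linarith
  have hv4 : ∀ t ≥ t0, c * u t ^ q ≤ v4 t := by
    intro t ht
    refine le_trans ?_ (h4 t ht)
    have : u t ^ q ≤ v t ^ q :=
      Real.rpow_le_rpow (unn t ht) (by have := h0 t0 le_rfl; simp only [hu]; linarith) (by linarith)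
    exact mul_le_mul_of_nonneg_left this hc.le
  have dup : ∀ p : ℝ, 1 ≤ p → ∀ t, HasDerivAt (fun t => u t ^ p) (v1 t * p * u t ^ (p - 1)) t :=
    fun p hp t => (du t).rpow_const (Or.inr hp)
  have s1 : ∀ t ≥ t0, c / (q + 1) * u t ^ (q + 1) ≤ v3 t * v1 t := by
    intro t ht
    have := le_of_dn (f := fun t => v3 t * v1 t - c / (q + 1) * u t ^ (q + 1)) ht
      (fun s _ => ((d3 s).mul (d1 s)).sub ((dup (q + 1) (by linarith) s).const_mul _))
      (fun s hs => by
        have e : q + 1 - 1 = q := by ring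
        rw [e]
        have a1 := hv4 s hs.1.le
        have a2 := mul_nonneg (h3 s hs.1.le) (h2 s hs.1.le)
        have a3 := h1 s hs.1.le
        have : c / (q + 1) * (v1 s * (q + 1) * u s ^ q) = v1 s * (c * u s ^ q) := by
          field_simp
        rw [this]
        nlinarith)
    simp only [u0] at this
    rw [Real.zero_rpow (by linarith)] at this
    have := mul_nonneg (h3 t0 le_rfl) (h1 t0 le_rfl).le
    linarith
  have s2 : ∀ t ≥ t0, c / (q + 1) / (q + 2) * u t ^ (q + 2) ≤ v2 t * v1 t ^ 2 := by
    intro t ht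
    have := le_of_dn (f := fun t => v2 t * v1 t ^ 2 - c / (q + 1) / (q + 2) * u t ^ (q + 2)) ht
      (fun s _ => ((d2 s).mul ((d1 s).pow 2)).sub ((dup (q + 2) (by linarith) s).const_mul _))
      (fun s hs => by
        have e : q + 2 - 1 = q + 1 := by ring
        rw [e]
        have a1 := s1 s hs.1.le
        have a3 := h1 s hs.1.le
        have a2 := mul_nonneg (mul_nonneg (h2 s hs.1.le) (h2 s hs.1.le)) a3.le
        have : c / (q + 1) / (q + 2) * (v1 s * (q + 2) * u s ^ (q + 1))
            = v1 s * (c / (q + 1) * u s ^ (q + 1)) := by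
          field_simp
        rw [this]
        have a4 := mul_le_mul_of_nonneg_left a1 a3.le
        simp only [Nat.cast_ofNat, Nat.add_one_sub_one, pow_one, Pi.pow_apply]
        nlinarith)
    simp only [u0] at this
    rw [Real.zero_rpow (by linarith)] at this
    have := mul_nonneg (h2 t0 le_rfl) (sq_nonneg (v1 t0))
    linarith
  set c4 := 4 * (c / (q + 1) / (q + 2) / (q + 3)) with hc4
  have c4pos : 0 < c4 := by positivity
  have s3 : ∀ t ≥ t0, c4 * u t ^ (q + 3) ≤ v1 t ^ 4 := by
    intro t ht
    have := le_of_dn (f := fun t => v1 t ^ 4 - c4 * u t ^ (q + 3)) ht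
      (fun s _ => ((d1 s).pow 4).sub ((dup (q + 3) (by linarith) s).const_mul _))
      (fun s hs => by
        have e : q + 3 - 1 = q + 2 := by ring
        rw [e]
        have a1 := s2 s hs.1.le
        have a3 := h1 s hs.1.le
        have : c4 * (v1 s * (q + 3) * u s ^ (q + 2))
            = 4 * (v1 s * (c / (q + 1) / (q + 2) * u s ^ (q + 2))) := by
          rw [hc4]; field_simp
        rw [this]
        have a4 := mul_le_mul_of_nonneg_left a1 a3.le
        simp only [Nat.cast_ofNat]
        norm_num
        nlinarith)
    simp only [u0] at this
    rw [Real.zero_rpow (by linarith)] at this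
    have := pow_nonneg (h1 t0 le_rfl).le 4
    linarith
  set c5 := c4 ^ (1 / 4 : ℝ) with hc5
  have c5pos : 0 < c5 := by positivity
  have s4 : ∀ t ≥ t0, c5 * u t ^ ((q + 3) / 4) ≤ v1 t := by
    intro t ht
    have hn : 0 ≤ u t ^ ((q + 3) / 4) := Real.rpow_nonneg (unn t ht) _
    refine le_of_pow_le_pow_left₀ (n := 4) (by norm_num) (h1 t ht).le ?_
    refine le_trans (le_of_eq ?_) (s3 t ht)
    rw [mul_pow, hc5, ← Real.rpow_natCast, ← Real.rpow_natCast, ← Real.rpow_mul c4pos.le,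
      ← Real.rpow_mul (unn t ht)]
    norm_num
  -- final step
  have ut1 : ∀ t ≥ t0 + 1, 0 < u t := by
    intro t ht
    have h5 : ∀ s ≥ t0, v1 t0 ≤ v1 s := fun s hs => le_of_dn hs (fun r _ => d1 r)
      (fun r hr => h2 r hr.1.le)
    have := lin_of_dn (f := u) (f' := v1) (c := v1 t0) (a := t0) (b := t) (by linarith)
      (fun s _ => du s) (fun s hs => h5 s hs.1.le)
    have h6 := h1 t0 le_rfl
    nlinarith
  set r := (q - 1) / 4 with hr
  have rpos : 0 < r := by rw [hr]; linarith
  have s5 : ∀ t ≥ t0 + 1, u t ^ (-r) ≤ u (t0 + 1) ^ (-r) + (-(r * c5)) * (t - (t0 + 1)) := by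
    intro t ht
    refine lin_of_dn' (f := fun t => u t ^ (-r)) (f' := fun t => v1 t * (-r) * u t ^ (-r - 1)) ht
      (fun s hs => (du s).rpow_const (Or.inl (ut1 s hs.1).ne')) ?_
    intro s hs
    have hs0 : 0 < u s := ut1 s hs.1.le
    have a1 := s4 s (by linarith [hs.1])
    have a2 : 0 < u s ^ (-r - 1) := Real.rpow_pos_of_pos hs0 _
    have a3 : u s ^ ((q + 3) / 4) * u s ^ (-r - 1) = 1 := by
      rw [← Real.rpow_add hs0]
      have : (q + 3) / 4 + (-r - 1) = 0 := by rw [hr]; ring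
      rw [this, Real.rpow_zero]
    have a4 := mul_le_mul_of_nonneg_right a1 a2.le
    rw [mul_assoc, a3, mul_one] at a4
    nlinarith
  have K := u (t0 + 1) ^ (-r)
  have := s5 (t0 + 1 + (u (t0 + 1) ^ (-r)) / (r * c5)) (by
    have := Real.rpow_nonneg (ut1 (t0+1) le_rfl).le (-r)
    have : 0 ≤ (u (t0 + 1) ^ (-r)) / (r * c5) := by positivity
    linarith)
  have h7 : 0 < u (t0 + 1 + (u (t0 + 1) ^ (-r)) / (r * c5)) ^ (-r) := by
    apply Real.rpow_pos_of_pos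
    apply ut1
    have := Real.rpow_nonneg (ut1 (t0+1) le_rfl).le (-r)
    have : 0 ≤ (u (t0 + 1) ^ (-r)) / (r * c5) := by positivity
    linarith
  have h8 : -(r * c5) * (t0 + 1 + u (t0 + 1) ^ (-r) / (r * c5) - (t0 + 1)) = - u (t0 + 1) ^ (-r) := by
    field_simp
    ring
  rw [h8] at this
  linarith

/-- Cone lemma: initial data in the cone force growth, contradicting boundedness. -/
theorem cone {l m M t0 : ℝ} {z z1 z2 z3 h : ℝ → ℝ} (hl : 0 < l) (hm : 0 < m)
    (d0 : ∀ t, HasDerivAt z (z1 t) t) (d1 : ∀ t, HasDerivAt z1 (z2 t) t)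
    (d2 : ∀ t, HasDerivAt z2 (z3 t) t)
    (d3 : ∀ t, HasDerivAt z3 ((l ^ 2 + m ^ 2) * z2 t - l ^ 2 * m ^ 2 * z t + h t) t)
    (hh : ∀ t, 0 ≤ z t → 0 ≤ h t)
    (i0 : z t0 = 0) (i1 : z1 t0 = 0) (i2 : 0 ≤ z2 t0) (i3 : 0 ≤ z3 t0) (i4 : 0 < z2 t0 + z3 t0)
    (hM : ∀ t, z t ≤ M) : False := by
  set y : ℝ → ℝ := fun t => z2 t - m ^ 2 * z t with hy
  set y1 : ℝ → ℝ := fun t => z3 t - m ^ 2 * z1 t with hy1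
  have dy : ∀ t, HasDerivAt y (y1 t) t := fun t => (d2 t).sub ((d0 t).const_mul _)
  have dy1 : ∀ t, HasDerivAt y1 (l ^ 2 * y t + h t) t := by
    intro t
    refine ((d3 t).sub ((d1 t).const_mul (m ^ 2))).congr_deriv ?_
    simp only [hy]; ring
  set p : ℝ → ℝ := fun t => y1 t + l * y t with hp
  have dp : ∀ t, HasDerivAt p (l * p t + h t) t := by
    intro t
    refine ((dy1 t).add ((dy t).const_mul l)).congr_deriv ?_
    simp only [hp]; ring
  set q : ℝ → ℝ := fun t => z1 t + m * z t with hq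
  have dq : ∀ t, HasDerivAt q (m * q t + y t) t := by
    intro t
    refine ((d1 t).add ((d0 t).const_mul m)).congr_deriv ?_
    simp only [hq, hy]; ring
  have y0 : y t0 = z2 t0 := by simp [hy, i0]
  have y10 : y1 t0 = z3 t0 := by simp [hy1, i1]
  have q0 : q t0 = 0 := by simp [hq, i0, i1]
  have p0 : 0 < p t0 := by
    simp only [hp, y0, y10]
    rcases i2.eq_or_lt with e | e
    · rw [← e] at i4 ⊢; linarith
    · have := mul_pos hl e; linarith
  have gen : ∀ t1 ≥ t0, (∀ t ∈ Ico t0 t1, 0 < p t) →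
      ∀ t ∈ Icc t0 t1, 0 ≤ y t ∧ 0 ≤ q t ∧ 0 ≤ z t := by
    intro t1 ht1 hpp
    have A1 : ∀ t ∈ Icc t0 t1, 0 ≤ y t := by
      intro t ht
      have := exp_grow (f := y) (k := -l) ht.1 (fun s _ => dy s) (fun s hs => by
        have := hpp s ⟨hs.1.le, hs.2.trans_le ht.2⟩
        simp only [hp] at this; linarith)
      refine le_trans ?_ this
      rw [y0]; positivity
    have A2 : ∀ t ∈ Icc t0 t1, 0 ≤ q t := by
      intro t ht
      have := exp_grow (f := q) (k := m) ht.1 (fun s _ => dq s) (fun s hs => by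
        have := A1 s ⟨hs.1.le, hs.2.le.trans ht.2⟩
        linarith)
      rwa [q0, zero_mul] at this
    have A3 : ∀ t ∈ Icc t0 t1, 0 ≤ z t := by
      intro t ht
      have := exp_grow (f := z) (k := -m) ht.1 (fun s _ => d0 s) (fun s hs => by
        have := A2 s ⟨hs.1.le, hs.2.le.trans ht.2⟩
        simp only [hq] at this; linarith)
      rwa [i0, zero_mul] at this
    exact fun t ht => ⟨A1 t ht, A2 t ht, A3 t ht⟩
  have ppos : ∀ t ≥ t0, 0 < p t := by
    by_contra hcon
    push Not at hcon
    obtain ⟨tb, htb, hpb⟩ := hcon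
    have pc : Continuous p := continuous_iff_continuousAt.2 fun t => (dp t).continuousAt
    set S := Icc t0 tb ∩ {t | p t ≤ 0} with hS
    have Sc : IsCompact S := isCompact_Icc.inter_right (isClosed_le pc continuous_const)
    obtain ⟨t1, ht1, hmin⟩ := Sc.exists_isLeast ⟨tb, ⟨htb, le_rfl⟩, hpb⟩
    have hpp : ∀ t ∈ Ico t0 t1, 0 < p t := by
      intro t ht
      by_contra hc
      have := hmin (a := t) ⟨⟨ht.1, ht.2.le.trans ht1.1.2⟩, not_lt.1 hc⟩
      exact absurd ht.2 (not_lt.2 this)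
    have hg := gen t1 ht1.1.1 hpp
    have := exp_grow (f := p) (k := l) ht1.1.1 (fun s _ => dp s) (fun s hs => by
        have := hh s (hg s (Ioo_subset_Icc_self hs)).2.2
        linarith)
    have h2 : p t1 ≤ 0 := ht1.2
    have : 0 < p t0 * exp (l * (t1 - t0)) := by positivity
    linarith
  have all : ∀ t ≥ t0, 0 ≤ y t ∧ 0 ≤ q t ∧ 0 ≤ z t := fun t ht =>
    gen t ht (fun s hs => ppos s hs.1) t ⟨ht, le_rfl⟩
  have y1n : ∀ t ≥ t0, 0 ≤ y1 t := by
    intro t ht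
    have := le_of_dn (f := y1) ht (fun s _ => dy1 s) (fun s hs => by
      have a1 := all s hs.1.le
      have a2 := hh s a1.2.2
      have := a1.1
      positivity)
    linarith
  have ypos : 0 < y (t0 + 1) := by
    have mono : ∀ s ≥ t0, y t0 ≤ y s := fun s hs =>
      le_of_dn hs (fun r _ => dy r) (fun r hr => y1n r hr.1.le)
    rcases i2.eq_or_lt with e | e
    · have y1m : ∀ s ≥ t0, y1 t0 ≤ y1 s := fun s hs =>
        le_of_dn hs (fun r _ => dy1 r) (fun s hs => by
          have a1 := all s hs.1.le
          have a2 := hh s a1.2.2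
          have := a1.1
          positivity)
      have := lin_of_dn (f := y) (a := t0) (b := t0 + 1) (by linarith) (fun s _ => dy s)
        (fun s hs => y1m s hs.1.le)
      rw [y0, y10] at this
      linarith
    · have := mono (t0 + 1) (by linarith)
      linarith
  set ε := y (t0 + 1) with hε
  have z2b : ∀ t ≥ t0 + 1, ε ≤ z2 t := by
    intro t ht
    have a1 : y (t0 + 1) ≤ y t := le_of_dn ht (fun r _ => dy r)
      (fun r hr => y1n r (by linarith [hr.1]))
    have a2 := (all t (by linarith)).2.2
    have a3 : y t = z2 t - m ^ 2 * z t := rfl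
    have : 0 ≤ m ^ 2 * z t := by positivity
    linarith
  have z1n : 0 ≤ z1 (t0 + 1) := by
    have := le_of_dn (f := z1) (a := t0) (b := t0 + 1) (by linarith) (fun s _ => d1 s) (fun s hs => by
      have a := all s hs.1.le
      have a2 := a.2.2
      have a1 := a.1
      have a3 : y s = z2 s - m ^ 2 * z s := rfl
      have : 0 ≤ m ^ 2 * z s := by positivity
      linarith)
    linarith
  have z1b : ∀ t ≥ t0 + 2, ε ≤ z1 t := by
    intro t ht
    have := lin_of_dn (f := z1) (a := t0 + 1) (b := t) (by linarith) (fun s _ => d1 s)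
      (fun s hs => z2b s hs.1.le)
    nlinarith
  have hz : ∀ t ≥ t0 + 2, ε * (t - (t0 + 2)) ≤ z t := by
    intro t ht
    have := lin_of_dn (f := z) (a := t0 + 2) (b := t) (by linarith) (fun s _ => d0 s)
      (fun s hs => z1b s hs.1.le)
    have := (all (t0 + 2) (by linarith)).2.2
    linarith
  have hM0 : 0 ≤ M := i0 ▸ hM t0
  have f1 := hz (t0 + 2 + (M + 1) / ε) (by
    have : 0 ≤ (M + 1) / ε := by positivity
    linarith)
  have f2 := hM (t0 + 2 + (M + 1) / ε)
  have f3 : ε * (t0 + 2 + (M + 1) / ε - (t0 + 2)) = M + 1 := by field_simp; ring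
  linarith

/-- The facts about the nonlinearity that are used below; `G` is the primitive of `g`. -/
structure GG (g G : ℝ → ℝ) : Prop where
  pos : ∀ t > 0, 0 < g t
  mono : ∀ s t, 0 < s → s ≤ t → g s ≤ g t
  supl : ∀ s k, 0 < s → 1 ≤ k → k * g s ≤ g (k * s)
  lip : ∀ M > 0, ∃ K ≥ 0, ∀ a b, 0 < a → a ≤ M → 0 < b → b ≤ M → |g a - g b| ≤ K * |a - b|
  pw : ∃ q c : ℝ, 1 < q ∧ 0 < c ∧ ∀ t ≥ 1, c * t ^ q ≤ g t
  cont : ∀ t > 0, ContinuousAt g t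
  dG : ∀ s > 0, HasDerivAt G (g s) s
  cG : Continuous G
  G0 : G 0 = 0
  Glt : ∀ s > 0, 2 * G s < s * g s
  Gs : ∀ s k, 0 < s → 1 < k → k ^ 2 * G s < G (k * s)

theorem GG_of_CondG {n : ℕ} (hn : 5 ≤ n) {g : ℝ → ℝ} (hg : CondG n g) : ∃ G, GG g G := by
  obtain ⟨hC, hpos, h0, hd, -, hpw, hg0⟩ := hg
  have hn' : (5 : ℝ) ≤ n := by exact_mod_cast hn
  have hdiff : ∀ t > 0, HasDerivAt g (deriv g t) t := fun t ht =>
    ((hC.differentiableOn (by norm_num)).differentiableAt (Ioi_mem_nhds ht)).hasDerivAt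
  have hdpos : ∀ t > 0, 0 < deriv g t := fun t ht =>
    (div_pos (hpos t ht) ht).trans (hd t ht).1
  have hmono : ∀ s t, 0 < s → s ≤ t → g s ≤ g t := fun s t hs hst =>
    le_of_dn hst (fun r hr => hdiff r (hs.trans_le hr.1)) (fun r hr => (hdpos r (hs.trans hr.1)).le)
  have hquot : ∀ s t, 0 < s → s ≤ t → g s / s ≤ g t / t := by
    intro s t hs hst
    refine le_of_dn (f := fun s => g s / s) hst
      (fun r hr => (hdiff r (hs.trans_le hr.1)).div (hasDerivAt_id r) (hs.trans_le hr.1).ne') ?_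
    intro r hr
    have hr0 : 0 < r := hs.trans hr.1
    have := (hd r hr0).1
    rw [div_lt_iff₀ hr0] at this
    apply div_nonneg _ (by positivity)
    simp only [id_eq, mul_one]; linarith
  have hcI : ContinuousOn g (Ici 0) := by
    intro x hx
    rcases (show (0:ℝ) ≤ x from hx).eq_or_lt with e | e
    · subst e
      have : ContinuousWithinAt g (Ioi 0) 0 := by
        unfold ContinuousWithinAt; rw [hg0]; exact h0
      exact continuousWithinAt_Ioi_iff_Ici.1 this
    · exact (hdiff x e).continuousAt.continuousWithinAt
  set gt : ℝ → ℝ := fun s => g (max s 0) with hgt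
  have gtc : Continuous gt := by
    have : ContinuousOn gt univ := hcI.comp (by fun_prop) (fun x _ => mem_Ici.2 (le_max_right _ _))
    exact continuousOn_univ.1 this
  set G : ℝ → ℝ := fun s => ∫ x in (0:ℝ)..s, gt x with hG
  have dGt : ∀ s, HasDerivAt G (gt s) s := fun s => gtc.integral_hasStrictDerivAt 0 s |>.hasDerivAt
  have dG : ∀ s > 0, HasDerivAt G (g s) s := by
    intro s hs
    have := dGt s
    rwa [show gt s = g s by simp [hgt, max_eq_left hs.le]] at this
  have cG : Continuous G := continuous_iff_continuousAt.2 fun s => (dGt s).continuousAt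
  have G0 : G 0 = 0 := by simp [hG]
  have Glt : ∀ s > 0, 2 * G s < s * g s := by
    have hm : StrictMonoOn (fun s => s * g s - 2 * G s) (Ici 0) := by
      apply strictMonoOn_of_deriv_pos (convex_Ici 0)
      · exact (continuousOn_id.mul hcI).sub (continuousOn_const.mul cG.continuousOn)
      · intro x hx
        rw [interior_Ici] at hx
        have hx' : 0 < x := hx
        have hD : HasDerivAt (fun s => s * g s - 2 * G s) (1 * g x + x * deriv g x - 2 * g x) x :=
          ((hasDerivAt_id x).mul (hdiff x hx)).sub ((dG x hx).const_mul 2)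
        rw [hD.deriv]
        have := (hd x hx).1
        rw [div_lt_iff₀ hx'] at this
        linarith
    intro s hs
    have := hm (mem_Ici.2 le_rfl) (mem_Ici.2 hs.le) hs
    simp only [G0, hg0] at this
    linarith
  refine ⟨G, hpos, hmono, ?_, ?_, hpw, fun t ht => (hdiff t ht).continuousAt, dG, cG, G0, Glt, ?_⟩
  · intro s k hs hk
    have := hquot s (k * s) hs (by nlinarith)
    rw [div_le_div_iff₀ hs (by positivity)] at this
    have : s * (k * g s) ≤ s * g (k * s) := by linarith
    exact le_of_mul_le_mul_left this hs
  · intro M hM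
    have hc0 : 0 ≤ ((n : ℝ) + 4) / ((n : ℝ) - 4) := div_nonneg (by linarith) (by linarith)
    refine ⟨((n : ℝ) + 4) / ((n : ℝ) - 4) * (g M / M),
      mul_nonneg hc0 (div_pos (hpos M hM) hM).le, ?_⟩
    intro a b ha ha' hb hb'
    have := Convex.norm_image_sub_le_of_norm_deriv_le (f := g) (s := Ioc 0 M)
      (C := ((n : ℝ) + 4) / ((n : ℝ) - 4) * (g M / M)) (x := b) (y := a)
      (fun x hx => (hdiff x hx.1).differentiableAt) (fun x hx => by
        rw [Real.norm_eq_abs, abs_of_pos (hdpos x hx.1)]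
        exact (hd x hx.1).2.trans (mul_le_mul_of_nonneg_left (hquot x M hx.1 hx.2) hc0))
      (convex_Ioc 0 M) ⟨hb, hb'⟩ ⟨ha, ha'⟩
    simpa [Real.norm_eq_abs] using this
  · intro s k hs hk
    have hm : StrictMonoOn (fun s => G s / s ^ 2) (Ioi 0) := by
      have hdd : ∀ x > 0, HasDerivAt (fun s => G s / s ^ 2)
          ((g x * x ^ 2 - G x * (2 * x)) / (x ^ 2) ^ 2) x := by
        intro x hx
        refine ((dG x hx).div (hasDerivAt_pow 2 x) (by positivity)).congr_deriv ?_
        norm_num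
      apply strictMonoOn_of_deriv_pos (convex_Ioi 0)
      · exact fun x hx => (hdd x hx).continuousAt.continuousWithinAt
      · intro x hx
        rw [interior_Ioi] at hx
        have hx' : 0 < x := hx
        rw [(hdd x hx').deriv]
        apply div_pos _ (by positivity)
        have := mul_pos hx' (sub_pos.2 (Glt x hx'))
        nlinarith
    have hks : 0 < k * s := by positivity
    have := hm (mem_Ioi.2 hs) (mem_Ioi.2 hks) (by nlinarith)
    simp only at this
    rw [div_lt_div_iff₀ (by positivity) (by positivity)] at this
    have h2 : 0 < s ^ 2 := by positivity
    have : s ^ 2 * (k ^ 2 * G s) < s ^ 2 * G (k * s) := by nlinarith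
    exact lt_of_mul_lt_mul_left this h2.le

/-- Positive solutions, with named derivatives. -/
structure Sol (l m : ℝ) (g v v1 v2 v3 : ℝ → ℝ) : Prop where
  d0 : ∀ t, HasDerivAt v (v1 t) t
  d1 : ∀ t, HasDerivAt v1 (v2 t) t
  d2 : ∀ t, HasDerivAt v2 (v3 t) t
  d3 : ∀ t, HasDerivAt v3 ((l ^ 2 + m ^ 2) * v2 t - l ^ 2 * m ^ 2 * v t + g (v t)) t
  pos : ∀ t, 0 < v t

theorem hasDerivAt_refl {f f' : ℝ → ℝ} (a : ℝ) (h : ∀ t, HasDerivAt f (f' t) t) (t : ℝ) :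
    HasDerivAt (fun t => f (a - t)) (- f' (a - t)) t := by
  have := (h (a - t)).comp t ((hasDerivAt_id t).const_sub a)
  exact this.congr_deriv (by ring)

theorem hasDerivAt_shift {f f' : ℝ → ℝ} (a : ℝ) (h : ∀ t, HasDerivAt f (f' t) t) (t : ℝ) :
    HasDerivAt (fun t => f (t + a)) (f' (t + a)) t := by
  have := (h (t + a)).comp t ((hasDerivAt_id t).add_const a)
  exact this.congr_deriv (by ring)

theorem Sol.refl {l m : ℝ} {g v v1 v2 v3 : ℝ → ℝ} (h : Sol l m g v v1 v2 v3) (a : ℝ) :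
    Sol l m g (fun t => v (a - t)) (fun t => - v1 (a - t)) (fun t => v2 (a - t))
      (fun t => - v3 (a - t)) where
  d0 := hasDerivAt_refl a h.d0
  d1 t := (hasDerivAt_refl a h.d1 t).neg.congr_deriv (neg_neg _)
  d2 := hasDerivAt_refl a h.d2
  d3 t := by
    refine (hasDerivAt_refl a h.d3 t).neg.congr_deriv ?_
    ring
  pos t := h.pos _

theorem Sol.shift {l m : ℝ} {g v v1 v2 v3 : ℝ → ℝ} (h : Sol l m g v v1 v2 v3) (a : ℝ) :
    Sol l m g (fun t => v (t + a)) (fun t => v1 (t + a)) (fun t => v2 (t + a))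
      (fun t => v3 (t + a)) where
  d0 := hasDerivAt_shift a h.d0
  d1 := hasDerivAt_shift a h.d1
  d2 := hasDerivAt_shift a h.d2
  d3 := hasDerivAt_shift a h.d3
  pos t := h.pos _

theorem Sol.y_nonpos_aux {l m : ℝ} {g G v v1 v2 v3 : ℝ → ℝ} (hl : 0 < l) (hG : GG g G)
    (h : Sol l m g v v1 v2 v3) (t0 : ℝ) (h1 : 0 < v2 t0 - m ^ 2 * v t0)
    (h2 : 0 ≤ v3 t0 - m ^ 2 * v1 t0) : False := by
  set y : ℝ → ℝ := fun t => v2 t - m ^ 2 * v t with hy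
  set y1 : ℝ → ℝ := fun t => v3 t - m ^ 2 * v1 t with hy1
  have dy : ∀ t, HasDerivAt y (y1 t) t := fun t => (h.d2 t).sub ((h.d0 t).const_mul _)
  have dy1 : ∀ t, HasDerivAt y1 (l ^ 2 * y t + g (v t)) t := by
    intro t
    refine ((h.d3 t).sub ((h.d1 t).const_mul (m ^ 2))).congr_deriv ?_
    simp only [hy]; ring
  set p : ℝ → ℝ := fun t => y1 t + l * y t with hp
  have dp : ∀ t, HasDerivAt p (l * p t + g (v t)) t := by
    intro t
    refine ((dy1 t).add ((dy t).const_mul l)).congr_deriv ?_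
    simp only [hp]; ring
  have gp : ∀ t, 0 < g (v t) := fun t => hG.pos _ (h.pos t)
  have p0 : 0 < p t0 := add_pos_of_nonneg_of_pos h2 (mul_pos hl h1)
  have ppos : ∀ t ≥ t0, 0 < p t := by
    intro t ht
    have := exp_grow (f := p) (k := l) ht (fun s _ => dp s) (fun s _ => by linarith [gp s])
    refine lt_of_lt_of_le ?_ this
    positivity
  have ypos : ∀ t ≥ t0, 0 < y t := by
    intro t ht
    have := exp_grow (f := y) (k := -l) ht (fun s _ => dy s) (fun s hs => by
      have := ppos s hs.1.le
      simp only [hp] at this; linarith)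
    refine lt_of_lt_of_le ?_ this
    positivity
  have y1n : ∀ t ≥ t0, 0 ≤ y1 t := by
    intro t ht
    have := le_of_dn (f := y1) ht (fun s _ => dy1 s) (fun s hs => by
      have a1 := ypos s hs.1.le
      have a2 := gp s
      positivity)
    exact h2.trans this
  set ε := y t0 with hε
  have v2b : ∀ t ≥ t0, ε ≤ v2 t := by
    intro t ht
    have a1 : y t0 ≤ y t := le_of_dn ht (fun r _ => dy r) (fun r hr => y1n r hr.1.le)
    have a3 : y t = v2 t - m ^ 2 * v t := rfl
    have a4 := h.pos t
    have : 0 ≤ m ^ 2 * v t := by positivity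
    linarith
  have v1b : ∀ t ≥ t0, v1 t0 + ε * (t - t0) ≤ v1 t := fun t ht =>
    lin_of_dn ht (fun s _ => h.d1 s) (fun s hs => v2b s hs.1.le)
  have hεp : 0 < ε := h1
  set t1 := t0 + (|v1 t0| + 1) / ε with ht1
  have t1ge : t0 ≤ t1 := by
    have : 0 ≤ (|v1 t0| + 1) / ε := by positivity
    linarith
  have v1c : ∀ t ≥ t1, 1 ≤ v1 t := by
    intro t ht
    have a1 := v1b t (t1ge.trans ht)
    have a2 : ε * (t1 - t0) = |v1 t0| + 1 := by rw [ht1]; field_simp; ring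
    have a3 := mul_le_mul_of_nonneg_left ht hεp.le
    have := neg_abs_le (v1 t0)
    nlinarith
  have v0c : ∀ t ≥ t1 + 1, 1 ≤ v t := by
    intro t ht
    have := lin_of_dn (f := v) (a := t1) (b := t) (c := 1) (by linarith) (fun s _ => h.d0 s)
      (fun s hs => v1c s hs.1.le)
    have := h.pos t1
    linarith
  obtain ⟨q, c, hq, hc, hqc⟩ := hG.pw
  refine blowup (t0 := t1 + 1) hc hq h.d0 h.d1 h.d2 h.d3 (fun t _ => (h.pos t).le)
    (fun t ht => lt_of_lt_of_le one_pos (v1c t (by linarith)))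
    (fun t ht => hεp.le.trans (v2b t (by linarith))) ?_ ?_
  · intro t ht
    have a1 := y1n t (by linarith)
    have a2 := v1c t (by linarith)
    have : 0 ≤ m ^ 2 * v1 t := by positivity
    simp only [hy1] at a1
    linarith
  · intro t ht
    have a1 := hqc (v t) (v0c t ht)
    have a2 := ypos t (by linarith)
    have a3 : 0 < v2 t := hεp.trans_le (v2b t (by linarith))
    have a4 : (l ^ 2 + m ^ 2) * v2 t - l ^ 2 * m ^ 2 * v t + g (v t)
      = l ^ 2 * y t + m ^ 2 * v2 t + g (v t) := by simp only [hy]; ring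
    rw [a4]
    have : 0 ≤ l ^ 2 * y t + m ^ 2 * v2 t := by positivity
    linarith

theorem Sol.y_nonpos {l m : ℝ} {g G v v1 v2 v3 : ℝ → ℝ} (hl : 0 < l) (hG : GG g G)
    (h : Sol l m g v v1 v2 v3) (t : ℝ) : v2 t ≤ m ^ 2 * v t := by
  by_contra hc
  push Not at hc
  rcases le_total 0 (v3 t - m ^ 2 * v1 t) with h3 | h3
  · exact h.y_nonpos_aux hl hG t (by linarith) h3
  · have h' := h.refl (2 * t)
    have e : 2 * t - t = t := by ring
    refine h'.y_nonpos_aux hl hG t ?_ ?_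
    · simp only [e]; linarith
    · simp only [e]; linarith

theorem harnack_aux {k : ℝ} (hk : 0 ≤ k) {u u1 u2 : ℝ → ℝ} (d0 : ∀ t, HasDerivAt u (u1 t) t)
    (d1 : ∀ t, HasDerivAt u1 (u2 t) t) (hu : ∀ t, 0 ≤ u t) (h2 : ∀ t, u2 t ≤ k ^ 2 * u t) (t : ℝ) :
    u1 t ≤ k * u t := by
  by_contra hc
  push Not at hc
  set r : ℝ → ℝ := fun t => u1 t - k * u t with hr
  have dr : ∀ t, HasDerivAt (fun s => - r s) (-(u2 t - k * u1 t)) t :=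
    fun t => ((d1 t).sub ((d0 t).const_mul k)).neg
  have rp : 0 < r t := by simp only [hr]; linarith
  have rb : ∀ s ≤ t, r t ≤ r s := by
    intro s hs
    have := exp_grow (f := fun s => - r s) (k := -k) hs (fun x _ => dr x) (fun x _ => by
      have := h2 x
      simp only [hr]; nlinarith)
    have e1 : exp (-k * (t - s)) ≤ 1 := by
      rw [Real.exp_le_one_iff]; nlinarith
    have e2 := exp_pos (-k * (t - s))
    by_contra hcc
    push Not at hcc
    nlinarith
  have := lin_of_dn (f := u) (a := t - (u t + 1) / r t) (b := t) (c := r t) (by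
      have := hu t
      have : 0 ≤ (u t + 1) / r t := by positivity
      linarith) (fun s _ => d0 s) (fun s hs => by
      have := rb s hs.2.le
      have h3 : r s = u1 s - k * u s := rfl
      have := mul_nonneg hk (hu s)
      linarith)
  have e : r t * (t - (t - (u t + 1) / r t)) = u t + 1 := by field_simp; ring
  rw [e] at this
  linarith [hu (t - (u t + 1) / r t)]

theorem harnack {k : ℝ} (hk : 0 ≤ k) {u u1 u2 : ℝ → ℝ} (d0 : ∀ t, HasDerivAt u (u1 t) t)
    (d1 : ∀ t, HasDerivAt u1 (u2 t) t) (hu : ∀ t, 0 ≤ u t) (h2 : ∀ t, u2 t ≤ k ^ 2 * u t) (t : ℝ) :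
    |u1 t| ≤ k * u t := by
  rw [abs_le]
  refine ⟨?_, harnack_aux hk d0 d1 hu h2 t⟩
  have := harnack_aux (u := fun s => u (0 - s)) (u1 := fun s => - u1 (0 - s))
    (u2 := fun s => u2 (0 - s)) hk (hasDerivAt_refl 0 d0)
    (fun t => (hasDerivAt_refl 0 d1 t).neg.congr_deriv (neg_neg _)) (fun s => hu _) (fun s => h2 _) (-t)
  simp at this
  linarith

theorem harnack_up {k : ℝ} {u u1 : ℝ → ℝ} (hk : 0 ≤ k) (d0 : ∀ t, HasDerivAt u (u1 t) t)
    (hu : ∀ t, 0 ≤ u t)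
    (h : ∀ t, |u1 t| ≤ k * u t) (t s : ℝ) (hs : s ∈ Icc t (t + 1)) :
    u s ≤ exp k * u t ∧ exp (-k) * u t ≤ u s := by
  constructor
  · have := exp_grow (f := fun s => - u s) (k := k) hs.1 (fun x _ => (d0 x).neg) (fun x _ => by
      have := (abs_le.1 (h x)).2; linarith)
    have e : exp (k * (s - t)) ≤ exp k := Real.exp_le_exp.2 (by nlinarith [hs.1, hs.2])
    have := mul_le_mul_of_nonneg_right e (hu t)
    linarith
  · have := exp_grow (f := u) (k := -k) hs.1 (fun x _ => d0 x) (fun x _ => by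
      have := (abs_le.1 (h x)).1; linarith)
    have e : exp (-k) ≤ exp (-k * (s - t)) := Real.exp_le_exp.2 (by nlinarith [hs.1, hs.2])
    have := mul_le_mul_of_nonneg_right e (hu t)
    linarith

theorem source_bound {k : ℝ} {u u1 f : ℝ → ℝ} (hk : 0 ≤ k) (d0 : ∀ t, HasDerivAt u (u1 t) t)
    (d1 : ∀ t, HasDerivAt u1 (k ^ 2 * u t - f t) t) (hu : ∀ t, 0 ≤ u t) (hf : ∀ t, 0 ≤ f t)
    (t a : ℝ) (ha : ∀ s ∈ Icc t (t + 1), a ≤ f s) :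
    a ≤ (k ^ 2 * exp k + k + k * exp k) * u t := by
  have h := harnack hk d0 d1 hu (fun t => by linarith [hf t])
  have hU := harnack_up hk d0 hu h
  have := lin_of_dn' (f := u1) (a := t) (b := t + 1) (c := k ^ 2 * (exp k * u t) - a) (by linarith)
    (fun s _ => d1 s) (fun s hs => by
      have a1 := ha s (Ioo_subset_Icc_self hs)
      have a2 := mul_le_mul_of_nonneg_left (hU t s (Ioo_subset_Icc_self hs)).1 (sq_nonneg k)
      linarith)
  have b1 := (abs_le.1 (h t)).2
  have b2 := (abs_le.1 (h (t + 1))).1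
  have b3 := mul_le_mul_of_nonneg_left (hU t (t + 1) ⟨by linarith, le_rfl⟩).1 hk
  nlinarith

theorem Sol.bounds {l m : ℝ} {g G v v1 v2 v3 : ℝ → ℝ} (hl : 0 < l) (hm : 0 < m) (hG : GG g G)
    (h : Sol l m g v v1 v2 v3) :
    ∃ C > 0, (∀ t, v t ≤ C) ∧ ∀ t, |v1 t| ≤ C * v t ∧ |v2 t| ≤ C * v t ∧ |v3 t| ≤ C * v t := by
  set Y : ℝ → ℝ := fun t => m ^ 2 * v t - v2 t with hY
  set Y1 : ℝ → ℝ := fun t => m ^ 2 * v1 t - v3 t with hY1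
  have Yn : ∀ t, 0 ≤ Y t := fun t => by have := h.y_nonpos hl hG t; simp only [hY]; linarith
  have dY : ∀ t, HasDerivAt Y (Y1 t) t := fun t => ((h.d0 t).const_mul _).sub (h.d2 t)
  have dY1 : ∀ t, HasDerivAt Y1 (l ^ 2 * Y t - g (v t)) t := by
    intro t
    refine (((h.d1 t).const_mul (m ^ 2)).sub (h.d3 t)).congr_deriv ?_
    simp only [hY]; ring
  have vn : ∀ t, 0 ≤ v t := fun t => (h.pos t).le
  have gn : ∀ t, 0 ≤ g (v t) := fun t => (hG.pos _ (h.pos t)).le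
  have d1' : ∀ t, HasDerivAt v1 (m ^ 2 * v t - Y t) t := fun t =>
    (h.d1 t).congr_deriv (by simp only [hY]; ring)
  have hv := harnack hm.le h.d0 h.d1 vn (h.y_nonpos hl hG)
  have hYh := harnack hl.le dY dY1 Yn (fun t => by linarith [gn t])
  set C1 := m ^ 2 * exp m + m + m * exp m with hC1
  set C2 := l ^ 2 * exp l + l + l * exp l with hC2
  have C1p : 0 < C1 := by positivity
  have C2p : 0 < C2 := by positivity
  have b1 : ∀ t, Y t ≤ exp l * C1 * v t := by
    intro t
    have := source_bound hm.le h.d0 d1' vn Yn t (exp (-l) * Y t)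
      (fun s hs => (harnack_up hl.le dY Yn hYh t s hs).2)
    have h2 := mul_le_mul_of_nonneg_left this (exp_pos l).le
    rw [← mul_assoc, ← Real.exp_add] at h2
    simp at h2
    rw [mul_assoc]; exact h2
  have b2 : ∀ t, g (exp (-m) * v t) ≤ C2 * Y t := by
    intro t
    refine source_bound hl.le dY dY1 Yn gn t _ (fun s hs => ?_)
    exact hG.mono _ _ (mul_pos (exp_pos _) (h.pos t)) (harnack_up hm.le h.d0 vn hv t s hs).2
  obtain ⟨q, c, hq, hc, hqc⟩ := hG.pw
  set D := C2 * (exp l * C1) * exp m with hD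
  have Dp : 0 < D := by positivity
  have b3 : ∃ M > 0, ∀ t, v t ≤ M := by
    refine ⟨exp m * max 1 ((D / c) ^ (1 / (q - 1))), by positivity, fun t => ?_⟩
    set s := exp (-m) * v t with hs
    have sp : 0 < s := mul_pos (exp_pos _) (h.pos t)
    have ev : v t = exp m * s := by
      rw [hs, ← mul_assoc, ← Real.exp_add]; simp
    rw [ev]
    refine mul_le_mul_of_nonneg_left ?_ (exp_pos m).le
    rcases le_total s 1 with h1 | h1
    · exact h1.trans (le_max_left _ _)
    · refine le_trans ?_ (le_max_right _ _)
      have a1 := hqc s h1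
      have a2 := b2 t
      have a3 := mul_le_mul_of_nonneg_left (b1 t) C2p.le
      have a4 : C2 * (exp l * C1 * v t) = D * s := by rw [ev, hD]; ring
      have a5 : c * s ^ q ≤ D * s := by linarith
      have a6 : s ^ q = s ^ (q - 1) * s := by
        rw [← Real.rpow_add_one sp.ne']; congr 1; ring
      rw [a6, ← mul_assoc] at a5
      have a7 : s ^ (q - 1) ≤ D / c := by
        rw [le_div_iff₀ hc]
        have := le_of_mul_le_mul_right a5 sp
        linarith
      have a8 := Real.rpow_le_rpow (by positivity) a7 (z := 1 / (q - 1))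
        (by apply div_nonneg <;> linarith)
      rw [← Real.rpow_mul sp.le, mul_one_div_cancel (by linarith), Real.rpow_one] at a8
      exact a8
  obtain ⟨M, Mp, hM⟩ := b3
  set E := exp l * C1 with hE
  have Ep : 0 < E := by positivity
  refine ⟨M + m + (m ^ 2 + E) + (m ^ 2 * m + l * E), by positivity, fun t => ?_, fun t => ?_⟩
  · have : 0 < m + (m ^ 2 + E) + (m ^ 2 * m + l * E) := by positivity
    linarith [hM t]
  · have hvp := vn t
    have k0 : 0 ≤ M * v t := by positivity
    have k1 : 0 ≤ m * v t := by positivity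
    have k2 : 0 ≤ (m ^ 2 + E) * v t := by positivity
    have k3 : 0 ≤ (m ^ 2 * m + l * E) * v t := by positivity
    have hYt := b1 t
    have hYnt := Yn t
    have e2 : v2 t = m ^ 2 * v t - Y t := by simp only [hY]; ring
    have e3 : v3 t = m ^ 2 * v1 t - Y1 t := by simp only [hY1]; ring
    have k4 : 0 ≤ m ^ 2 * v t := by positivity
    have k5 : 0 ≤ E * v t := by positivity
    have f1 := hv t
    have f2 : |v2 t| ≤ (m ^ 2 + E) * v t := by
      rw [e2, abs_le]; constructor <;> nlinarith
    have f3 : |v3 t| ≤ (m ^ 2 * m + l * E) * v t := by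
      rw [e3]
      refine (abs_sub _ _).trans ?_
      rw [abs_mul, abs_of_nonneg (sq_nonneg m)]
      have g1 := mul_le_mul_of_nonneg_left f1 (sq_nonneg m)
      have g2 := (hYh t).trans (mul_le_mul_of_nonneg_left hYt hl.le)
      nlinarith
    refine ⟨?_, ?_, ?_⟩ <;> nlinarith

theorem ode_unique_fwd {l m K t0 : ℝ} {z z1 z2 z3 h : ℝ → ℝ} (hK : 0 ≤ K)
    (d0 : ∀ t, HasDerivAt z (z1 t) t) (d1 : ∀ t, HasDerivAt z1 (z2 t) t)
    (d2 : ∀ t, HasDerivAt z2 (z3 t) t)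
    (d3 : ∀ t, HasDerivAt z3 ((l ^ 2 + m ^ 2) * z2 t - l ^ 2 * m ^ 2 * z t + h t) t)
    (hh : ∀ t, |h t| ≤ K * |z t|)
    (i0 : z t0 = 0) (i1 : z1 t0 = 0) (i2 : z2 t0 = 0) (i3 : z3 t0 = 0) (t : ℝ) (ht : t0 ≤ t) :
    z t = 0 := by
  set a := l ^ 2 + m ^ 2 with ha
  set b := l ^ 2 * m ^ 2 with hb
  have ap : 0 ≤ a := by positivity
  have bp : 0 ≤ b := by positivity
  set N : ℝ → ℝ := fun t => z t ^ 2 + z1 t ^ 2 + z2 t ^ 2 + z3 t ^ 2 with hN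
  have dN : ∀ t, HasDerivAt (fun t => - N t) (-(2 * z t * z1 t + 2 * z1 t * z2 t + 2 * z2 t * z3 t
      + 2 * z3 t * (a * z2 t - b * z t + h t))) t := by
    intro t
    refine (((((d0 t).pow 2).add ((d1 t).pow 2)).add ((d2 t).pow 2)).add
      ((d3 t).pow 2)).neg.congr_deriv ?_
    norm_num
  have key := exp_grow (f := fun t => - N t) (k := 2 + a + b + K) ht (fun s _ => dN s) (by
    intro s _
    simp only [hN]
    have k1 : z3 s * h s ≤ K * (z s ^ 2 + z3 s ^ 2) / 2 := by
      have a1 : z3 s * h s ≤ |z3 s| * (K * |z s|) :=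
        (le_abs_self _).trans (by rw [abs_mul]; exact mul_le_mul_of_nonneg_left (hh s) (abs_nonneg _))
      have a2 : |z3 s| * |z s| ≤ (z s ^ 2 + z3 s ^ 2) / 2 := by
        nlinarith [sq_nonneg (|z3 s| - |z s|), sq_abs (z3 s), sq_abs (z s)]
      have := mul_le_mul_of_nonneg_left a2 hK
      linarith
    have k2 : a * (2 * z3 s * z2 s) ≤ a * (z3 s ^ 2 + z2 s ^ 2) :=
      mul_le_mul_of_nonneg_left (by nlinarith [sq_nonneg (z3 s - z2 s)]) ap
    have k3 : b * (-(2 * z3 s * z s)) ≤ b * (z3 s ^ 2 + z s ^ 2) :=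
      mul_le_mul_of_nonneg_left (by nlinarith [sq_nonneg (z3 s + z s)]) bp
    have k4 : 0 ≤ a * (z s ^ 2 + z1 s ^ 2) := by positivity
    have k5 : 0 ≤ b * (z1 s ^ 2 + z2 s ^ 2) := by positivity
    have k6 : 0 ≤ K * (z s ^ 2 + z1 s ^ 2 + z2 s ^ 2 + z3 s ^ 2) := by positivity
    have k7 : 0 ≤ K * (z1 s ^ 2 + z2 s ^ 2) := by positivity
    nlinarith [sq_nonneg (z s - z1 s), sq_nonneg (z1 s - z2 s), sq_nonneg (z2 s - z3 s)])
  have N0 : N t0 = 0 := by simp [hN, i0, i1, i2, i3]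
  rw [N0] at key
  simp only [neg_zero, zero_mul, hN] at key
  have : z t ^ 2 = 0 := by
    nlinarith [sq_nonneg (z t), sq_nonneg (z1 t), sq_nonneg (z2 t), sq_nonneg (z3 t)]
  exact pow_eq_zero_iff (by norm_num) |>.1 this

theorem Sol.eq_fwd {l m : ℝ} {g G v v1 v2 v3 w w1 w2 w3 : ℝ → ℝ} (hl : 0 < l) (hm : 0 < m)
    (hG : GG g G) (hv : Sol l m g v v1 v2 v3) (hw : Sol l m g w w1 w2 w3) (t0 : ℝ)
    (i0 : v t0 = w t0) (i1 : v1 t0 = w1 t0) (i2 : v2 t0 = w2 t0) (i3 : v3 t0 = w3 t0)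
    (t : ℝ) (ht : t0 ≤ t) : v t = w t := by
  obtain ⟨C, Cp, hC, -⟩ := hv.bounds hl hm hG
  obtain ⟨D, Dp, hD, -⟩ := hw.bounds hl hm hG
  obtain ⟨K, hK, hlip⟩ := hG.lip (C + D) (by linarith)
  have := ode_unique_fwd (l := l) (m := m) (K := K) (t0 := t0) (z := fun t => v t - w t)
    (z1 := fun t => v1 t - w1 t)
    (z2 := fun t => v2 t - w2 t) (z3 := fun t => v3 t - w3 t) (h := fun t => g (v t) - g (w t)) hK
    (fun t => (hv.d0 t).sub (hw.d0 t)) (fun t => (hv.d1 t).sub (hw.d1 t))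
    (fun t => (hv.d2 t).sub (hw.d2 t))
    (fun t => ((hv.d3 t).sub (hw.d3 t)).congr_deriv (by ring))
    (fun t => hlip _ _ (hv.pos t) (by linarith [hC t]) (hw.pos t) (by linarith [hD t]))
    (sub_eq_zero.2 i0) (sub_eq_zero.2 i1) (sub_eq_zero.2 i2) (sub_eq_zero.2 i3) t ht
  exact sub_eq_zero.1 this

theorem Sol.cone_aux {l m : ℝ} {g G v v1 v2 v3 w w1 w2 w3 : ℝ → ℝ} (hl : 0 < l) (hm : 0 < m)
    (hG : GG g G) (hv : Sol l m g v v1 v2 v3) (hw : Sol l m g w w1 w2 w3) (t0 k : ℝ) (hk : 1 ≤ k)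
    (i0 : v t0 = k * w t0) (i1 : v1 t0 = k * w1 t0) (i2 : k * w2 t0 ≤ v2 t0)
    (i3 : k * w3 t0 ≤ v3 t0)
    (i4 : k * w2 t0 < v2 t0 ∨ k * w3 t0 < v3 t0) : False := by
  obtain ⟨C, Cp, hC, -⟩ := hv.bounds hl hm hG
  refine cone (l := l) (m := m) (M := C) (t0 := t0) (z := fun t => v t - k * w t)
    (z1 := fun t => v1 t - k * w1 t) (z2 := fun t => v2 t - k * w2 t)
    (z3 := fun t => v3 t - k * w3 t)
    (h := fun t => g (v t) - k * g (w t)) hl hm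
    (fun t => (hv.d0 t).sub ((hw.d0 t).const_mul k)) (fun t => (hv.d1 t).sub ((hw.d1 t).const_mul k))
    (fun t => (hv.d2 t).sub ((hw.d2 t).const_mul k))
    (fun t => ((hv.d3 t).sub ((hw.d3 t).const_mul k)).congr_deriv (by ring)) ?_
    (by linarith) (by linarith) (by linarith)
    (by linarith) ?_ ?_
  · intro t ht
    have wp := hw.pos t
    have a1 := hG.supl (w t) k wp hk
    have a2 := hG.mono (k * w t) (v t) (by positivity) (by linarith)
    linarith
  · rcases i4 with h | h <;> linarith
  · intro t
    have wp := hw.pos t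
    have : 0 ≤ k * w t := by positivity
    linarith [hC t]

theorem Sol.cone {l m : ℝ} {g G v v1 v2 v3 w w1 w2 w3 : ℝ → ℝ} (hl : 0 < l) (hm : 0 < m)
    (hG : GG g G) (hv : Sol l m g v v1 v2 v3) (hw : Sol l m g w w1 w2 w3) (t0 k : ℝ) (hk : 1 ≤ k)
    (i0 : v t0 = k * w t0) (i1 : v1 t0 = k * w1 t0) (i2 : k * w2 t0 < v2 t0) : False := by
  rcases le_total (k * w3 t0) (v3 t0) with h | h
  · exact hv.cone_aux hl hm hG hw t0 k hk i0 i1 i2.le h (Or.inl i2)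
  · have e : 2 * t0 - t0 = t0 := by ring
    refine (hv.refl (2 * t0)).cone_aux hl hm hG (hw.refl (2 * t0)) t0 k hk ?_ ?_ ?_ ?_ (Or.inl ?_)
    all_goals simp only [e]
    all_goals linarith

theorem Sol.same {l m : ℝ} {g G v v1 v2 v3 w w1 w2 w3 : ℝ → ℝ} (hl : 0 < l) (hm : 0 < m)
    (hG : GG g G) (hv : Sol l m g v v1 v2 v3) (hw : Sol l m g w w1 w2 w3) (t0 : ℝ)
    (i0 : v t0 = w t0) (i1 : v1 t0 = w1 t0) (t : ℝ) : v t = w t := by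
  have i2 : v2 t0 = w2 t0 := by
    rcases lt_trichotomy (v2 t0) (w2 t0) with h | h | h
    · exact (hw.cone hl hm hG hv t0 1 le_rfl (by linarith) (by linarith) (by linarith)).elim
    · exact h
    · exact (hv.cone hl hm hG hw t0 1 le_rfl (by linarith) (by linarith) (by linarith)).elim
  have i3 : v3 t0 = w3 t0 := by
    rcases lt_trichotomy (v3 t0) (w3 t0) with h | h | h
    · exact (hw.cone_aux hl hm hG hv t0 1 le_rfl (by linarith) (by linarith) (by linarith)
        (by linarith) (Or.inr (by linarith))).elim
    · exact h
    · exact (hv.cone_aux hl hm hG hw t0 1 le_rfl (by linarith) (by linarith) (by linarith)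
        (by linarith) (Or.inr (by linarith))).elim
  rcases le_total t0 t with h | h
  · exact hv.eq_fwd hl hm hG hw t0 i0 i1 i2 i3 t h
  · have e : 2 * t0 - t0 = t0 := by ring
    have := (hv.refl (2 * t0)).eq_fwd hl hm hG (hw.refl (2 * t0)) t0 (by simp only [e, i0])
      (by simp only [e, i1]) (by simp only [e, i2]) (by simp only [e, i3]) (2 * t0 - t) (by linarith)
    simpa using this

theorem Sol.even {l m : ℝ} {g G v v1 v2 v3 : ℝ → ℝ} (hl : 0 < l) (hm : 0 < m)
    (hG : GG g G) (hv : Sol l m g v v1 v2 v3) (t0 : ℝ) (h : v1 t0 = 0) (t : ℝ) :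
    v t = v (2 * t0 - t) := by
  have e : 2 * t0 - t0 = t0 := by ring
  exact hv.same hl hm hG (hv.refl (2 * t0)) t0 (by simp only [e]) (by simp only [e, h, neg_zero]) t

theorem Sol.energy {l m : ℝ} {g G v v1 v2 v3 : ℝ → ℝ} (hl : 0 < l) (hm : 0 < m)
    (hG : GG g G) (hv : Sol l m g v v1 v2 v3) (hinf : ∀ ε > 0, ∃ t, v t < ε) (t : ℝ) :
    v3 t * v1 t - v2 t ^ 2 / 2 - (l ^ 2 + m ^ 2) / 2 * v1 t ^ 2 + l ^ 2 * m ^ 2 / 2 * v t ^ 2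
      - G (v t) = 0 := by
  set E : ℝ → ℝ := fun t => v3 t * v1 t - v2 t ^ 2 / 2 - (l ^ 2 + m ^ 2) / 2 * v1 t ^ 2
    + l ^ 2 * m ^ 2 / 2 * v t ^ 2 - G (v t) with hE
  have dE : ∀ t, HasDerivAt E 0 t := by
    intro t
    refine ((((((hv.d3 t).mul (hv.d1 t)).sub (((hv.d2 t).pow 2).div_const 2)).sub
      (((hv.d1 t).pow 2).const_mul ((l ^ 2 + m ^ 2) / 2))).add
      (((hv.d0 t).pow 2).const_mul (l ^ 2 * m ^ 2 / 2))).sub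
      ((hG.dG _ (hv.pos t)).comp t (hv.d0 t))).congr_deriv ?_
    norm_num
    ring
  have cE : ∀ s, E s = E t := fun s =>
    is_const_of_deriv_eq_zero (fun x => (dE x).differentiableAt) (fun x => (dE x).deriv) s t
  obtain ⟨C, Cp, -, hC⟩ := hv.bounds hl hm hG
  set K := C * C + C ^ 2 / 2 + (l ^ 2 + m ^ 2) / 2 * C ^ 2 + l ^ 2 * m ^ 2 / 2 with hK
  have bd : ∀ s, |E s| ≤ K * v s ^ 2 + |G (v s)| := by
    intro s
    obtain ⟨b1, b2, b3⟩ := hC s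
    have vp := hv.pos s
    have c1 : |v3 s * v1 s| ≤ (C * v s) * (C * v s) := by
      rw [abs_mul]; exact mul_le_mul b3 b1 (abs_nonneg _) (by positivity)
    have c2 : v2 s ^ 2 ≤ (C * v s) ^ 2 := by
      rw [← sq_abs]; exact pow_le_pow_left₀ (abs_nonneg _) b2 2
    have c3 : v1 s ^ 2 ≤ (C * v s) ^ 2 := by
      rw [← sq_abs]; exact pow_le_pow_left₀ (abs_nonneg _) b1 2
    have c4 : 0 ≤ (l ^ 2 + m ^ 2) / 2 := by positivity
    have c5 := mul_le_mul_of_nonneg_left c3 c4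
    have c6 : 0 ≤ (l ^ 2 + m ^ 2) / 2 * v1 s ^ 2 := by positivity
    have c7 : 0 ≤ l ^ 2 * m ^ 2 / 2 * v s ^ 2 := by positivity
    have c8 := abs_le.1 c1
    have c9 := sq_nonneg (v2 s)
    have c10 := neg_abs_le (G (v s))
    have c11 := le_abs_self (G (v s))
    have c12 : 0 ≤ (l ^ 2 + m ^ 2) / 2 * (C * v s) ^ 2 := by positivity
    have c13 := sq_nonneg (C * v s)
    have e : K * v s ^ 2 = (C * v s) * (C * v s) + (C * v s) ^ 2 / 2
      + (l ^ 2 + m ^ 2) / 2 * (C * v s) ^ 2 + l ^ 2 * m ^ 2 / 2 * v s ^ 2 := by rw [hK]; ring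
    rw [e, abs_le]
    simp only [hE]
    constructor <;> linarith [c8.1, c8.2]
  by_contra hne
  have hpos : 0 < |E t| := abs_pos.2 hne
  have hc : Continuous (fun s => K * s ^ 2 + |G s|) := by
    have := hG.cG; fun_prop
  have ht : Tendsto (fun s => K * s ^ 2 + |G s|) (nhds 0) (nhds 0) := by
    have := hc.tendsto 0
    simpa [hG.G0] using this
  obtain ⟨δ, hδ, hb⟩ := Metric.eventually_nhds_iff.1 (ht.eventually (gt_mem_nhds hpos))
  obtain ⟨s, hs⟩ := hinf δ hδ
  have := hb (y := v s) (by rw [Real.dist_eq, sub_zero, abs_of_pos (hv.pos s)]; exact hs)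
  have := bd s
  rw [cE s] at this
  linarith

theorem barbalat {f f1 f2 : ℝ → ℝ} {L C : ℝ} (hC : 0 < C) (d0 : ∀ t, HasDerivAt f (f1 t) t)
    (d1 : ∀ t, HasDerivAt f1 (f2 t) t) (h2 : ∀ t, |f2 t| ≤ C) (hf : Tendsto f atTop (nhds L)) :
    Tendsto f1 atTop (nhds 0) := by
  rw [Metric.tendsto_atTop] at hf ⊢
  intro ε hε
  set h := ε / (2 * C) with hh
  have hp : 0 < h := by positivity
  obtain ⟨N, hN⟩ := hf (h * ε / 8) (by positivity)
  refine ⟨N, fun t ht => ?_⟩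
  have a1 := abs_lt.1 (by simpa [Real.dist_eq] using hN t ht)
  have a2 := abs_lt.1 (by simpa [Real.dist_eq] using hN (t + h) (by linarith))
  have hch : C * h = ε / 2 := by rw [hh]; field_simp
  have lip : ∀ s ∈ Ioo t (t + h), f1 t - C * h ≤ f1 s ∧ f1 s ≤ f1 t + C * h := by
    intro s hs
    have b1 := lin_of_dn (f := f1) (c := -C) hs.1.le (fun r _ => d1 r)
      (fun r _ => (abs_le.1 (h2 r)).1)
    have b2 := lin_of_dn' (f := f1) (c := C) hs.1.le (fun r _ => d1 r)
      (fun r _ => (abs_le.1 (h2 r)).2)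
    have b3 := mul_le_mul_of_nonneg_left (show s - t ≤ h by linarith [hs.2]) hC.le
    constructor <;> linarith
  have c1 := lin_of_dn (f := f) (a := t) (b := t + h) (by linarith) (fun r _ => d0 r)
    (fun s hs => (lip s hs).1)
  have c2 := lin_of_dn' (f := f) (a := t) (b := t + h) (by linarith) (fun r _ => d0 r)
    (fun s hs => (lip s hs).2)
  rw [hch] at c1 c2
  have e : t + h - t = h := by ring
  rw [e] at c1 c2
  rw [Real.dist_eq, sub_zero, abs_lt]
  constructor
  · by_contra hc
    push Not at hc
    have := mul_le_mul_of_nonneg_right (show f1 t + ε / 2 ≤ -(ε / 2) by linarith) hp.le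
    nlinarith
  · by_contra hc
    push Not at hc
    have := mul_le_mul_of_nonneg_right (show ε / 2 ≤ f1 t - ε / 2 by linarith) hp.le
    nlinarith

theorem Sol.not_increasing {l m : ℝ} {g G v v1 v2 v3 : ℝ → ℝ} (hl : 0 < l) (hm : 0 < m)
    (hG : GG g G) (hv : Sol l m g v v1 v2 v3) (hinf : ∀ ε > 0, ∃ t, v t < ε)
    (h : ∀ t, 0 < v1 t) : False := by
  obtain ⟨C, Cp, hC, hb⟩ := hv.bounds hl hm hG
  have mono : Monotone v := fun s t hst => le_of_dn hst (fun r _ => hv.d0 r) (fun r _ => (h r).le)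
  have hbdd : BddAbove (range v) := ⟨C, by rintro _ ⟨t, rfl⟩; exact hC t⟩
  have ht := tendsto_atTop_ciSup mono hbdd
  set L := ⨆ t, v t with hL
  have Lp : 0 < L := (hv.pos 0).trans_le (le_ciSup hbdd 0)
  have cb : ∀ t, C * v t ≤ C * C := fun t => mul_le_mul_of_nonneg_left (hC t) Cp.le
  have CC : 0 < C * C := by positivity
  have t1 := barbalat CC hv.d0 hv.d1 (fun t => (hb t).2.1.trans (cb t)) ht
  have t2 := barbalat CC hv.d1 hv.d2 (fun t => (hb t).2.2.trans (cb t)) t1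
  have gC := hG.pos C Cp
  have t3 := barbalat (C := (l ^ 2 + m ^ 2) * (C * C) + l ^ 2 * m ^ 2 * C + g C) (by positivity)
    hv.d2 hv.d3 (fun t => by
      have a1 := (hb t).2.1.trans (cb t)
      have a2 : |(l ^ 2 + m ^ 2) * v2 t| ≤ (l ^ 2 + m ^ 2) * (C * C) := by
        rw [abs_mul, abs_of_nonneg (by positivity)]
        exact mul_le_mul_of_nonneg_left a1 (by positivity)
      have a3 : |l ^ 2 * m ^ 2 * v t| ≤ l ^ 2 * m ^ 2 * C := by
        rw [abs_mul, abs_of_nonneg (by positivity), abs_of_pos (hv.pos t)]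
        exact mul_le_mul_of_nonneg_left (hC t) (by positivity)
      have a4 : |g (v t)| ≤ g C := by
        rw [abs_of_pos (hG.pos _ (hv.pos t))]
        exact hG.mono _ _ (hv.pos t) (hC t)
      exact (abs_add_le _ _).trans (add_le_add ((abs_sub _ _).trans (add_le_add a2 a3)) a4)) t2
  have tG : Tendsto (fun t => G (v t)) atTop (nhds (G L)) := (hG.cG.tendsto L).comp ht
  have tg : Tendsto (fun t => g (v t)) atTop (nhds (g L)) := (hG.cont L Lp).tendsto.comp ht
  have tE := ((((t3.mul t1).sub ((t2.pow 2).div_const 2)).sub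
    ((t1.pow 2).const_mul ((l ^ 2 + m ^ 2) / 2))).add
    ((ht.pow 2).const_mul (l ^ 2 * m ^ 2 / 2))).sub tG
  have E0 := tendsto_nhds_unique (tE.congr (fun t => hv.energy hl hm hG hinf t)) tendsto_const_nhds
  -- limit of the fourth derivative
  have t4 := ((t2.const_mul (l ^ 2 + m ^ 2)).sub (ht.const_mul (l ^ 2 * m ^ 2))).add tg
  have ex : ∀ t : ℝ, ∃ s, t < s ∧ (l ^ 2 + m ^ 2) * v2 s - l ^ 2 * m ^ 2 * v s + g (v s)
      = v3 (t + 1) - v3 t := by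
    intro t
    obtain ⟨s, hs, hs'⟩ := exists_hasDerivAt_eq_slope v3 _ (show t < t + 1 by linarith)
      (fun r _ => (hv.d3 r).continuousAt.continuousWithinAt) (fun r _ => hv.d3 r)
    refine ⟨s, hs.1, ?_⟩
    rw [hs']; simp
  choose σ hσ hσ' using ex
  have tσ : Tendsto σ atTop atTop := tendsto_atTop_mono (fun t => (hσ t).le) tendsto_id
  have t5 := t4.comp tσ
  have t6 : Tendsto (fun t => v3 (t + 1) - v3 t) atTop (nhds (0 - 0)) :=
    (t3.comp (tendsto_atTop_add_const_right _ 1 tendsto_id)).sub t3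
  have F0 := tendsto_nhds_unique (t5.congr (fun t => hσ' t)) t6
  have := hG.Glt L Lp
  norm_num at E0 F0
  have e1 : g L = l ^ 2 * m ^ 2 * L := by linarith
  rw [e1] at this
  nlinarith

theorem Sol.exists_max {l m : ℝ} {g G v v1 v2 v3 : ℝ → ℝ} (hl : 0 < l) (hm : 0 < m)
    (hG : GG g G) (hv : Sol l m g v v1 v2 v3) (hinf : ∀ ε > 0, ∃ t, v t < ε) :
    ∃ t0, v1 t0 = 0 ∧ v2 t0 ≤ 0 := by
  have c1 : Continuous v1 := continuous_iff_continuousAt.2 fun t => (hv.d1 t).continuousAt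
  have c0 : Continuous v := continuous_iff_continuousAt.2 fun t => (hv.d0 t).continuousAt
  have sgn : ∀ s : Set ℝ, s.OrdConnected → (∀ t ∈ s, v1 t ≠ 0) →
      (∀ t ∈ s, 0 < v1 t) ∨ (∀ t ∈ s, v1 t < 0) := by
    intro s hs hne
    by_contra hc
    push Not at hc
    obtain ⟨⟨a, ha, ha'⟩, b, hb, hb'⟩ := hc
    obtain ⟨x, hx, hx'⟩ := hs.isPreconnected.intermediate_value ha hb c1.continuousOn ⟨ha', hb'⟩
    exact hne x hx hx'
  by_cases hex : ∃ t0, v1 t0 = 0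
  · obtain ⟨t0, h0⟩ := hex
    refine ⟨t0, h0, ?_⟩
    have ev := hv.even hl hm hG t0 h0
    have uniq : ∀ t ∈ Ioi t0, v1 t ≠ 0 := by
      intro s hs hs0
      have ev2 := hv.even hl hm hG s hs0
      have hlt : t0 < s := hs
      have per : Function.Periodic v (2 * (s - t0)) := by
        intro t
        rw [ev2 (t + 2 * (s - t0)), ev t]
        congr 1; ring
      obtain ⟨x, _, hx⟩ := isCompact_Icc.exists_isMinOn (s := Icc (0:ℝ) (2 * (s - t0)))
        ⟨0, by constructor <;> linarith⟩ c0.continuousOn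
      obtain ⟨t, ht⟩ := hinf (v x) (hv.pos x)
      obtain ⟨y, hy, hy'⟩ := per.exists_mem_Ico₀ (by linarith) t
      have := hx (Ico_subset_Icc_self hy)
      simp only [mem_ofPred_eq] at this
      rw [← hy'] at this
      linarith
    rcases sgn _ ordConnected_Ioi uniq with hp | hn
    · exfalso
      have ge : ∀ t ≥ t0, v t0 ≤ v t := fun t ht =>
        le_of_dn ht (fun r _ => hv.d0 r) (fun r hr => (hp r hr.1).le)
      obtain ⟨t, ht⟩ := hinf (v t0) (hv.pos t0)
      rcases le_total t0 t with h | h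
      · linarith [ge t h]
      · have := ge (2 * t0 - t) (by linarith)
        rw [← ev t] at this
        linarith
    · by_contra hc
      push Not at hc
      obtain ⟨δ, hδ, hb⟩ := Metric.eventually_nhds_iff.1
        ((hv.d2 t0).continuousAt.eventually (lt_mem_nhds hc))
      have h1 := le_of_dn (f := v1) (a := t0) (b := t0 + δ / 2) (by linarith)
        (fun r _ => hv.d1 r) (fun r hr => by
          refine (hb (y := r) ?_).le
          rw [Real.dist_eq, abs_of_pos (by linarith [hr.1])]
          linarith [hr.2])
      have h2 := hn (t0 + δ / 2) (mem_Ioi.2 (by linarith))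
      linarith
  · push Not at hex
    rcases sgn univ ordConnected_univ (fun t _ => hex t) with hp | hn
    · exact (hv.not_increasing hl hm hG hinf (fun t => hp t (mem_univ _))).elim
    · refine ((hv.refl 0).not_increasing hl hm hG ?_ (fun t => ?_)).elim
      · intro ε hε
        obtain ⟨t, ht⟩ := hinf ε hε
        exact ⟨-t, by simpa using ht⟩
      · have := hn (0 - t) (mem_univ _)
        linarith

theorem Sol.not_gt {l m : ℝ} {g G v v1 v2 v3 w w1 w2 w3 : ℝ → ℝ} (hl : 0 < l) (hm : 0 < m)
    (hG : GG g G) (hv : Sol l m g v v1 v2 v3) (hw : Sol l m g w w1 w2 w3)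
    (iv : ∀ ε > 0, ∃ t, v t < ε) (iw : ∀ ε > 0, ∃ t, w t < ε) (t0 : ℝ)
    (a1 : v1 t0 = 0) (b1 : w1 t0 = 0) (a2 : v2 t0 ≤ 0) (b2 : w2 t0 ≤ 0)
    (h : w t0 < v t0) : False := by
  have wp := hw.pos t0
  set k := v t0 / w t0 with hk
  have k1 : 1 < k := by rw [hk, one_lt_div wp]; exact h
  have e0 : v t0 = k * w t0 := by rw [hk]; field_simp
  have Ev := hv.energy hl hm hG iv t0
  have Ew := hw.energy hl hm hG iw t0
  rw [a1, e0] at Ev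
  rw [b1] at Ew
  have hGs := hG.Gs (w t0) k wp k1
  refine hv.cone hl hm hG hw t0 k k1.le e0 (by rw [a1, b1, mul_zero]) ?_
  have hs : v2 t0 ^ 2 < (k * w2 t0) ^ 2 := by
    have : k ^ 2 * (w3 t0 * 0 - w2 t0 ^ 2 / 2 - (l ^ 2 + m ^ 2) / 2 * 0 ^ 2
      + l ^ 2 * m ^ 2 / 2 * w t0 ^ 2 - G (w t0)) = 0 := by rw [Ew, mul_zero]
    nlinarith
  have : k * w2 t0 ≤ 0 := mul_nonpos_of_nonneg_of_nonpos (by linarith) b2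
  by_contra hc
  push Not at hc
  nlinarith

theorem sol_of {n : ℕ} {g v : ℝ → ℝ} {A B : ℝ}
    (hA : A = ((n : ℝ) * ((n : ℝ) - 4) + 8) / 2)
    (hB : B = (n : ℝ) ^ 2 * ((n : ℝ) - 4) ^ 2 / 16)
    (hv4 : ContDiff ℝ 4 v) (hvpos : ∀ t, 0 < v t) (hvsol : IsSol A B g v) :
    Sol ((n : ℝ) / 2) (((n : ℝ) - 4) / 2) g v (iteratedDeriv 1 v) (iteratedDeriv 2 v)
      (iteratedDeriv 3 v) := by
  have hd : ∀ k : ℕ, k < 4 → ∀ t, HasDerivAt (iteratedDeriv k v) (iteratedDeriv (k + 1) v t) t := by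
    intro k hk t
    rw [iteratedDeriv_succ]
    refine ((hv4.differentiable_iteratedDeriv k ?_) t).hasDerivAt
    exact_mod_cast hk
  refine ⟨?_, hd 1 (by norm_num), hd 2 (by norm_num), ?_, hvpos⟩
  · have := hd 0 (by norm_num)
    simpa only [iteratedDeriv_zero] using this
  · intro t
    refine (hd 3 (by norm_num) t).congr_deriv ?_
    have := hvsol t
    subst hA hB
    norm_num
    linarith

theorem stmt_6 (n : ℕ) (hn : 5 ≤ n) (g : ℝ → ℝ) (hg : CondG n g)
    (A B : ℝ) (hA : A = ((n : ℝ) * ((n : ℝ) - 4) + 8) / 2)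
    (hB : B = (n : ℝ) ^ 2 * ((n : ℝ) - 4) ^ 2 / 16)
    (v w : ℝ → ℝ) (hv4 : ContDiff ℝ 4 v) (hw4 : ContDiff ℝ 4 w)
    (hvpos : ∀ t, 0 < v t) (hwpos : ∀ t, 0 < w t)
    (hvsol : IsSol A B g v) (hwsol : IsSol A B g w)
    (hvinf : (⨅ t : ℝ, v t) = 0) (hwinf : (⨅ t : ℝ, w t) = 0) :
    ∃ τ : ℝ, ∀ t, w t = v (t + τ) := by
  have hn' : (5 : ℝ) ≤ n := by exact_mod_cast hn
  have hl : 0 < (n : ℝ) / 2 := by linarith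
  have hm : 0 < ((n : ℝ) - 4) / 2 := by linarith
  obtain ⟨G, hG⟩ := GG_of_CondG hn hg
  have sv := sol_of hA hB hv4 hvpos hvsol
  have sw := sol_of hA hB hw4 hwpos hwsol
  have iv : ∀ ε > 0, ∃ t, v t < ε := fun ε hε => exists_lt_of_ciInf_lt (by rw [hvinf]; exact hε)
  have iw : ∀ ε > 0, ∃ t, w t < ε := fun ε hε => exists_lt_of_ciInf_lt (by rw [hwinf]; exact hε)
  obtain ⟨a, ha1, ha2⟩ := sv.exists_max hl hm hG iv
  obtain ⟨b, hb1, hb2⟩ := sw.exists_max hl hm hG iw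
  have ss := sv.shift (a - b)
  have e : b + (a - b) = a := by ring
  have is : ∀ ε > 0, ∃ t, v (t + (a - b)) < ε := by
    intro ε hε
    obtain ⟨t, ht⟩ := iv ε hε
    exact ⟨t - (a - b), by simpa using ht⟩
  refine ⟨a - b, fun t => ?_⟩
  refine (sw.same hl hm hG ss b ?_ (by simp only [e]; rw [hb1, ha1]) t)
  rcases lt_trichotomy (w b) (v (b + (a - b))) with h | h | h
  · exact (ss.not_gt hl hm hG sw is iw b (by simp only [e]; exact ha1) hb1
      (by simp only [e]; exact ha2) hb2 h).elim
  · exact h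
  · exact (sw.not_gt hl hm hG ss iw is b hb1 (by simp only [e]; exact ha1) hb2
      (by simp only [e]; exact ha2) h).elim
end
end

section
/- Let v : ℝ → ℝ be a C⁴ positive solution of the ODE v''''(t) − A·v''(t) + B·v(t) = g(v(t)) with v(t) → 0 as |t| → ∞, and assume in addition there exist r > 1 and C < ∞ such that |g(t) − β·t| ≤ C·t^r for all t ∈ (0, 1]. Then the limits lim_{t→+∞} e^{√μ·t}·v(t) and lim_{t→−∞} e^{−√μ·t}·v(t) exist and are finite, where μ = (A − √(A² − 4(B − β)))/2 and β = lim_{t→0⁺} g'(t). If moreover g(t) ≥ β·t for all t > 0, then these limits are positive. -/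
open Real Filter Set

noncomputable section

/-- A function whose derivative tends to infinity tends to infinity. -/
lemma aux_top (f f' : ℝ → ℝ) (hf : ∀ t, HasDerivAt f (f' t) t)
    (h : Tendsto f' atTop atTop) : Tendsto f atTop atTop := by
  obtain ⟨T, hT⟩ := eventually_atTop.1 (h.eventually_ge_atTop 1)
  have hmono : MonotoneOn (fun t => f t - t) (Ici T) := by
    have hd : ∀ t, HasDerivAt (fun t => f t - t) (f' t - 1) t := fun t =>
      (hf t).sub (hasDerivAt_id t)
    refine monotoneOn_of_hasDerivWithinAt_nonneg (convex_Ici T)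
      (fun t _ => (hd t).continuousAt.continuousWithinAt)
      (fun t _ => (hd t).hasDerivWithinAt) ?_
    intro t ht
    rw [interior_Ici] at ht
    have := hT t (le_of_lt ht)
    linarith
  refine tendsto_atTop_mono' _ ?_ (tendsto_atTop_add_const_right atTop (f T - T) tendsto_id)
  filter_upwards [eventually_ge_atTop T] with t ht
  have := hmono (mem_Ici.2 le_rfl) (mem_Ici.2 ht) ht
  simp only [id] at *
  linarith

lemma aux_not_top (v v1 v2 : ℝ → ℝ) (h0 : ∀ t, HasDerivAt v (v1 t) t)
    (h1 : ∀ t, HasDerivAt v1 (v2 t) t) (hv : Tendsto v atTop (nhds 0)) :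
    ¬ Tendsto v2 atTop atTop := fun h =>
  not_tendsto_atTop_of_tendsto_nhds hv (aux_top v v1 h0 (aux_top v1 v2 h1 h))

lemma exp_hd (k t : ℝ) : HasDerivAt (fun t => exp (k * t)) (k * exp (k * t)) t := by
  have := ((hasDerivAt_id t).const_mul k).exp
  simpa [mul_comm] using this

/-- Key comparison lemma. -/
lemma key (u u1 u2 : ℝ → ℝ) (k T : ℝ) (hk : 0 < k) (h0 : ∀ t, HasDerivAt u (u1 t) t)
    (h1 : ∀ t, HasDerivAt u1 (u2 t) t) (h2 : ∀ t, T ≤ t → k ^ 2 * u t ≤ u2 t)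
    (hn : ¬ Tendsto u atTop atTop) :
    ∀ t, T ≤ t → exp (k * t) * u t ≤ exp (k * T) * u T := by
  have hp : ∀ t, T ≤ t → u1 t + k * u t ≤ 0 := by
    intro t0 ht0
    by_contra hcon
    push Not at hcon
    apply hn
    have hm : MonotoneOn (fun t => exp (-k * t) * (u1 t + k * u t)) (Ici T) := by
      have hd : ∀ t, HasDerivAt (fun t => exp (-k * t) * (u1 t + k * u t))
          (-k * exp (-k * t) * (u1 t + k * u t) + exp (-k * t) * (u2 t + k * u1 t)) t :=
        fun t => (exp_hd (-k) t).mul ((h1 t).add ((h0 t).const_mul k))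
      refine monotoneOn_of_hasDerivWithinAt_nonneg (convex_Ici T)
        (fun t _ => (hd t).continuousAt.continuousWithinAt)
        (fun t _ => (hd t).hasDerivWithinAt) ?_
      intro t ht
      rw [interior_Ici] at ht
      have h := h2 t (le_of_lt ht)
      have : 0 ≤ exp (-k * t) * (u2 t - k ^ 2 * u t) :=
        mul_nonneg (exp_pos _).le (by linarith)
      linarith
    set c := exp (-k * t0) * (u1 t0 + k * u t0) with hc
    have hcpos : 0 < c := mul_pos (exp_pos _) hcon
    have hlow : ∀ t, t0 ≤ t → c * exp (k * t) ≤ u1 t + k * u t := by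
      intro t ht
      have h := hm (mem_Ici.2 ht0) (mem_Ici.2 (ht0.trans ht)) ht
      simp only at h
      rw [← hc] at h
      have h' := mul_le_mul_of_nonneg_right h (exp_pos (k * t)).le
      have e : exp (-k * t) * exp (k * t) = 1 := by rw [← exp_add]; simp
      calc c * exp (k * t) ≤ _ := h'
        _ = (exp (-k * t) * exp (k * t)) * (u1 t + k * u t) := by ring
        _ = _ := by rw [e, one_mul]
    have hm2 : MonotoneOn (fun t => exp (k * t) * u t - c / (2 * k) * exp (2 * k * t))
        (Ici t0) := by
      have hd : ∀ t, HasDerivAt (fun t => exp (k * t) * u t - c / (2 * k) * exp (2 * k * t))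
          (k * exp (k * t) * u t + exp (k * t) * u1 t
            - c / (2 * k) * (2 * k * exp (2 * k * t))) t :=
        fun t => ((exp_hd k t).mul (h0 t)).sub ((exp_hd (2 * k) t).const_mul _)
      refine monotoneOn_of_hasDerivWithinAt_nonneg (convex_Ici t0)
        (fun t _ => (hd t).continuousAt.continuousWithinAt)
        (fun t _ => (hd t).hasDerivWithinAt) ?_
      intro t ht
      rw [interior_Ici] at ht
      have h := hlow t (le_of_lt ht)
      have h3 : 0 ≤ exp (k * t) * (u1 t + k * u t - c * exp (k * t)) :=
        mul_nonneg (exp_pos _).le (by linarith)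
      have e : exp (2 * k * t) = exp (k * t) * exp (k * t) := by rw [← exp_add]; ring_nf
      have e2 : c / (2 * k) * (2 * k * exp (2 * k * t)) = c * (exp (k * t) * exp (k * t)) := by
        rw [e]; field_simp
      rw [e2]
      linarith
    set M := exp (k * t0) * u t0 - c / (2 * k) * exp (2 * k * t0) with hM
    have hlim : Tendsto (fun t => c / (2 * k) * exp (k * t) + (-|M|)) atTop atTop := by
      apply tendsto_atTop_add_const_right
      apply Tendsto.const_mul_atTop (by positivity)
      exact tendsto_exp_atTop.comp (tendsto_id.const_mul_atTop hk)
    refine tendsto_atTop_mono' _ ?_ hlim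
    filter_upwards [eventually_ge_atTop t0, eventually_ge_atTop 0] with t ht ht'
    have h := hm2 (mem_Ici.2 le_rfl) (mem_Ici.2 ht) ht
    simp only at h
    rw [← hM] at h
    have e : exp (2 * k * t) = exp (k * t) * exp (k * t) := by rw [← exp_add]; ring_nf
    rw [e] at h
    have hE : 1 ≤ exp (k * t) := one_le_exp (by positivity)
    have h4 : -|M| * exp (k * t) ≤ M := by
      have := neg_abs_le M
      have := mul_le_mul_of_nonneg_left hE (abs_nonneg M)
      linarith
    have : (c / (2 * k) * exp (k * t) + (-|M|)) * exp (k * t) ≤ u t * exp (k * t) := by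
      linarith
    exact le_of_mul_le_mul_right this (exp_pos _)
  have ha : AntitoneOn (fun t => exp (k * t) * u t) (Ici T) := by
    have hd : ∀ t, HasDerivAt (fun t => exp (k * t) * u t)
        (k * exp (k * t) * u t + exp (k * t) * u1 t) t :=
      fun t => (exp_hd k t).mul (h0 t)
    refine antitoneOn_of_hasDerivWithinAt_nonpos (convex_Ici T)
      (fun t _ => (hd t).continuousAt.continuousWithinAt)
      (fun t _ => (hd t).hasDerivWithinAt) ?_
    intro t ht
    rw [interior_Ici] at ht
    have h := hp t (le_of_lt ht)
    have : exp (k * t) * (u1 t + k * u t) ≤ 0 :=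
      mul_nonpos_of_nonneg_of_nonpos (exp_pos _).le h
    linarith
  intro t ht
  exact ha (mem_Ici.2 le_rfl) (mem_Ici.2 ht) ht

lemma key' (u u1 u2 : ℝ → ℝ) (k T : ℝ) (hk : 0 < k) (h0 : ∀ t, HasDerivAt u (u1 t) t)
    (h1 : ∀ t, HasDerivAt u1 (u2 t) t) (h2 : ∀ t, T ≤ t → k ^ 2 * u t ≤ u2 t)
    (hn : ¬ Tendsto u atTop atTop) :
    ∀ t, T ≤ t → u t ≤ (exp (k * T) * u T) * exp (-k * t) := by
  intro t ht
  have h := key u u1 u2 k T hk h0 h1 h2 hn t ht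
  have e : exp (k * t) * exp (-k * t) = 1 := by rw [← exp_add]; simp
  calc u t = (exp (k * t) * u t) * exp (-k * t) := by
        rw [mul_right_comm, e, one_mul]
    _ ≤ _ := mul_le_mul_of_nonneg_right h (exp_pos _).le

lemma exp_lim (k : ℝ) (hk : 0 < k) : Tendsto (fun t => exp (-k * t)) atTop (nhds 0) :=
  tendsto_exp_atBot.comp (tendsto_id.const_mul_atTop_of_neg (by linarith))

/-- The second derivative is eventually small from above. -/
lemma second_le (v v1 v2 v3 v4 F : ℝ → ℝ) (k : ℝ) (hk : 0 < k)
    (h0 : ∀ t, HasDerivAt v (v1 t) t) (h1 : ∀ t, HasDerivAt v1 (v2 t) t)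
    (h2 : ∀ t, HasDerivAt v2 (v3 t) t) (h3 : ∀ t, HasDerivAt v3 (v4 t) t)
    (hv : Tendsto v atTop (nhds 0)) (hF : Tendsto F atTop (nhds 0))
    (heq : ∀ t, v4 t = k ^ 2 * v2 t + F t) (δ : ℝ) (hδ : 0 < δ) :
    ∀ᶠ t in atTop, v2 t < δ := by
  have hev : ∀ᶠ t in atTop, -(k ^ 2 * (δ / 2)) < F t :=
    hF.eventually_const_lt (by have := pow_pos hk 2; nlinarith)
  obtain ⟨T, hT⟩ := eventually_atTop.1 hev
  have hk' := key' (fun t => v2 t - δ / 2) v3 v4 k T hk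
    (fun t => (h2 t).sub_const _) h3
    (fun t ht => by have := hT t ht; rw [heq]; linarith)
    (fun h => aux_not_top v v1 v2 h0 h1 hv (by
      have := tendsto_atTop_add_const_right atTop (δ / 2) h
      simpa using this))
  have hl := ((exp_lim k hk).const_mul (exp (k * T) * (v2 T - δ / 2)))
  rw [mul_zero] at hl
  filter_upwards [eventually_ge_atTop T, hl.eventually_lt_const (half_pos hδ)] with t ht ht'
  have := hk' t ht
  linarith

lemma second_lim (v v1 v2 v3 v4 F : ℝ → ℝ) (k : ℝ) (hk : 0 < k)
    (h0 : ∀ t, HasDerivAt v (v1 t) t) (h1 : ∀ t, HasDerivAt v1 (v2 t) t)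
    (h2 : ∀ t, HasDerivAt v2 (v3 t) t) (h3 : ∀ t, HasDerivAt v3 (v4 t) t)
    (hv : Tendsto v atTop (nhds 0)) (hF : Tendsto F atTop (nhds 0))
    (heq : ∀ t, v4 t = k ^ 2 * v2 t + F t) : Tendsto v2 atTop (nhds 0) := by
  rw [tendsto_order]
  constructor
  · intro δ hδ
    have := second_le (fun t => -v t) (fun t => -v1 t) (fun t => -v2 t) (fun t => -v3 t)
      (fun t => -v4 t) (fun t => -F t) k hk (fun t => (h0 t).neg) (fun t => (h1 t).neg)
      (fun t => (h2 t).neg) (fun t => (h3 t).neg) (by simpa using hv.neg)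
      (by simpa using hF.neg) (fun t => by rw [heq]; ring) (-δ) (by linarith)
    filter_upwards [this] with t ht
    linarith
  · intro δ hδ
    exact second_le v v1 v2 v3 v4 F k hk h0 h1 h2 h3 hv hF heq δ hδ

/-- Main half-line statement. -/
lemma core (v v1 v2 v3 v4 h : ℝ → ℝ) (a b r C : ℝ) (ha : 0 < a) (hab : a < b) (hr : 1 < r)
    (h0 : ∀ t, HasDerivAt v (v1 t) t) (h1 : ∀ t, HasDerivAt v1 (v2 t) t)
    (h2 : ∀ t, HasDerivAt v2 (v3 t) t) (h3 : ∀ t, HasDerivAt v3 (v4 t) t)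
    (hv : ∀ t, 0 < v t) (hT : Tendsto v atTop (nhds 0)) (hB : Tendsto v atBot (nhds 0))
    (heq : ∀ t, v4 t = (a ^ 2 + b ^ 2) * v2 t - a ^ 2 * b ^ 2 * v t + h t)
    (hh : ∀ t, 0 ≤ h t) (hC : 0 ≤ C) (hhC : ∀ t, v t ≤ 1 → h t ≤ C * v t ^ r) :
    ∃ l, Tendsto (fun t => exp (a * t) * v t) atTop (nhds l) ∧ 0 < l := by
  have hb : 0 < b := ha.trans hab
  have hgap : 0 < b ^ 2 - a ^ 2 := by nlinarith
  have hvle : ∀ᶠ t in atTop, v t ≤ 1 := by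
    filter_upwards [hT.eventually_lt_const one_pos] with t ht using ht.le
  have hpow : ∀ s : ℝ, 0 < s → Tendsto (fun t => C * v t ^ s) atTop (nhds 0) := by
    intro s hs
    have := (hT.rpow_const (p := s) (Or.inr hs.le)).const_mul C
    rwa [zero_rpow hs.ne', mul_zero] at this
  have hhlim : Tendsto h atTop (nhds 0) := by
    refine tendsto_of_tendsto_of_tendsto_of_le_of_le' tendsto_const_nhds
      (hpow r (by linarith)) (Eventually.of_forall hh) ?_
    filter_upwards [hvle] with t ht using hhC t ht
  have hv2 : Tendsto v2 atTop (nhds 0) := by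
    have hks : 0 < a ^ 2 + b ^ 2 := by positivity
    refine second_lim v v1 v2 v3 v4 (fun t => - (a ^ 2 * b ^ 2 * v t) + h t)
      (sqrt (a ^ 2 + b ^ 2)) (sqrt_pos.2 hks) h0 h1 h2 h3 hT ?_ ?_
    · simpa using ((hT.const_mul (a ^ 2 * b ^ 2)).neg).add hhlim
    · intro t
      rw [sq_sqrt hks.le, heq]; ring
  have hnt : ∀ f : ℝ → ℝ, Tendsto f atTop (nhds 0) → ¬ Tendsto f atTop atTop :=
    fun f hf => not_tendsto_atTop_of_tendsto_nhds hf
  -- crude exponential decay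
  obtain ⟨a', ha'1, ha'2⟩ : ∃ a', a / r < a' ∧ a' < a :=
    exists_between (div_lt_self ha hr)
  have ha'0 : 0 < a' := lt_trans (by positivity) ha'1
  have hσ : a < r * a' := by
    rw [div_lt_iff₀ (by linarith)] at ha'1; linarith
  have hda : 0 < a ^ 2 - a' ^ 2 := by nlinarith
  set b' := sqrt (a ^ 2 + b ^ 2 - a' ^ 2) with hb'
  have hb's : b' ^ 2 = a ^ 2 + b ^ 2 - a' ^ 2 := sq_sqrt (by nlinarith)
  have hb'0 : 0 < b' := sqrt_pos.2 (by nlinarith)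
  have hε : 0 < (a ^ 2 - a' ^ 2) * (b ^ 2 - a' ^ 2) := mul_pos hda (by linarith)
  have hsmall : ∀ᶠ t in atTop, h t ≤ (a ^ 2 - a' ^ 2) * (b ^ 2 - a' ^ 2) * v t := by
    filter_upwards [hvle, (hpow (r - 1) (by linarith)).eventually_lt_const hε] with t ht ht'
    calc h t ≤ C * v t ^ r := hhC t ht
      _ = C * v t ^ (r - 1) * v t := by
        rw [mul_assoc, ← rpow_add_one (hv t).ne']; simp
      _ ≤ _ := mul_le_mul_of_nonneg_right ht'.le (hv t).le
  obtain ⟨K, T1, hK⟩ : ∃ K T1, ∀ t, T1 ≤ t → v t ≤ K * exp (-a' * t) := by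
    obtain ⟨T, hTs⟩ := eventually_atTop.1 hsmall
    have s1 := key' (fun t => b' ^ 2 * v t - v2 t) (fun t => b' ^ 2 * v1 t - v3 t)
      (fun t => b' ^ 2 * v2 t - v4 t) a' T ha'0
      (fun t => ((h0 t).const_mul _).sub (h2 t)) (fun t => ((h1 t).const_mul _).sub (h3 t))
      (fun t ht => by
        have := hTs t ht
        simp only [heq, hb's]
        linarith)
      (hnt _ (by simpa using (hT.const_mul (b' ^ 2)).sub hv2))
    set K0 := exp (a' * T) * (b' ^ 2 * v T - v2 T) with hK0
    have hg' : 0 < b' ^ 2 - a' ^ 2 := by rw [hb's]; linarith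
    set K1 := K0 / (b' ^ 2 - a' ^ 2) with hK1
    have hK1' : K1 * (b' ^ 2 - a' ^ 2) = K0 := div_mul_cancel₀ _ hg'.ne'
    have s2 := key' (fun t => v t - K1 * exp (-a' * t))
      (fun t => v1 t - K1 * (-a' * exp (-a' * t)))
      (fun t => v2 t - K1 * (-a' * (-a' * exp (-a' * t)))) b' T hb'0
      (fun t => (h0 t).sub ((exp_hd (-a') t).const_mul K1))
      (fun t => (h1 t).sub (((exp_hd (-a') t).const_mul (-a')).const_mul K1))
      (fun t ht => by
        have := s1 t ht
        rw [← hK1'] at this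
        linarith)
      (hnt _ (by simpa using hT.sub ((exp_lim a' ha'0).const_mul K1)))
    set K2 := exp (b' * T) * (v T - K1 * exp (-a' * T)) with hK2
    refine ⟨K1 + |K2|, max T 0, fun t ht => ?_⟩
    have ht1 : T ≤ t := le_trans (le_max_left _ _) ht
    have ht0 : 0 ≤ t := le_trans (le_max_right _ _) ht
    have := s2 t ht1
    have hle : exp (-b' * t) ≤ exp (-a' * t) := by
      apply exp_le_exp.2
      have : a' ≤ b' := by nlinarith
      nlinarith
    have h5 : K2 * exp (-b' * t) ≤ |K2| * exp (-a' * t) :=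
      mul_le_mul (le_abs_self _) hle (exp_pos _).le (abs_nonneg _)
    linarith
  -- decay of h
  set σ := r * a' with hσd
  have hσ0 : 0 < σ := by linarith
  obtain ⟨D, T2, hD⟩ : ∃ D T2, ∀ t, T2 ≤ t → h t ≤ D * exp (-σ * t) := by
    obtain ⟨T, hTs⟩ := eventually_atTop.1 hvle
    refine ⟨C * K ^ r, max T T1, fun t ht => ?_⟩
    have e1 := hTs t (le_trans (le_max_left _ _) ht)
    have e2 := hK t (le_trans (le_max_right _ _) ht)
    have hKp : 0 ≤ K := by
      have := (hv t).trans_le e2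
      exact (pos_of_mul_pos_left this (exp_pos _).le).le
    calc h t ≤ C * v t ^ r := hhC t e1
      _ ≤ C * (K * exp (-a' * t)) ^ r :=
        mul_le_mul_of_nonneg_left (rpow_le_rpow (hv t).le e2 (by linarith)) hC
      _ = _ := by
        rw [mul_rpow hKp (exp_pos _).le, ← exp_mul, hσd]; ring_nf
  -- w
  have hwlim : Tendsto (fun t => v2 t - b ^ 2 * v t) atTop (nhds 0) := by
    simpa using hv2.sub (hT.const_mul (b ^ 2))
  have hanti : Antitone (fun t => exp (a * t) * (v2 t - b ^ 2 * v t)) := by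
    intro s t hst
    exact key (fun t => v2 t - b ^ 2 * v t) (fun t => v3 t - b ^ 2 * v1 t)
      (fun t => v4 t - b ^ 2 * v2 t) a s ha
      (fun t => (h2 t).sub ((h0 t).const_mul _)) (fun t => (h3 t).sub ((h1 t).const_mul _))
      (fun t _ => by
        have := hh t
        simp only [heq]
        linarith)
      (hnt _ hwlim) t hst
  obtain ⟨M, hM⟩ : ∃ M, ∀ t, M ≤ exp (a * t) * (v2 t - b ^ 2 * v t) := by
    have hs : 0 < σ ^ 2 - a ^ 2 := by nlinarith
    set E := |D| / (σ ^ 2 - a ^ 2) with hE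
    have hE0 : 0 ≤ E := by positivity
    have hE' : E * (σ ^ 2 - a ^ 2) = |D| := div_mul_cancel₀ _ hs.ne'
    have s := key (fun t => b ^ 2 * v t - v2 t + E * exp (-σ * t))
      (fun t => b ^ 2 * v1 t - v3 t + E * (-σ * exp (-σ * t)))
      (fun t => b ^ 2 * v2 t - v4 t + E * (-σ * (-σ * exp (-σ * t)))) a T2 ha
      (fun t => (((h0 t).const_mul _).sub (h2 t)).add ((exp_hd (-σ) t).const_mul E))
      (fun t => (((h1 t).const_mul _).sub (h3 t)).add
        (((exp_hd (-σ) t).const_mul (-σ)).const_mul E))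
      (fun t ht => by
        have e1 := hD t ht
        have e2 : D * exp (-σ * t) ≤ E * (σ ^ 2 - a ^ 2) * exp (-σ * t) := by
          rw [hE']
          exact mul_le_mul_of_nonneg_right (le_abs_self _) (exp_pos _).le
        simp only [heq]
        linarith)
      (hnt _ (by
        simpa using ((hT.const_mul (b ^ 2)).sub hv2).add ((exp_lim σ hσ0).const_mul E)))
    set Q := exp (a * T2) * (b ^ 2 * v T2 - v2 T2 + E * exp (-σ * T2)) with hQ
    have hlow : ∀ t, T2 ≤ t → -Q ≤ exp (a * t) * (v2 t - b ^ 2 * v t) := by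
      intro t ht
      have := s t ht
      have e : 0 ≤ exp (a * t) * (E * exp (-σ * t)) := by positivity
      linarith
    refine ⟨-Q, fun t => ?_⟩
    exact (hlow (max t T2) (le_max_right _ _)).trans (hanti (le_max_left _ _))
  set W := ⨅ t, exp (a * t) * (v2 t - b ^ 2 * v t) with hW
  have hbdd : BddBelow (Set.range fun t => exp (a * t) * (v2 t - b ^ 2 * v t)) :=
    ⟨M, by rintro _ ⟨t, rfl⟩; exact hM t⟩
  have hWlim : Tendsto (fun t => exp (a * t) * (v2 t - b ^ 2 * v t)) atTop (nhds W) :=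
    tendsto_atTop_ciInf hanti hbdd
  have hWle : ∀ t, W ≤ exp (a * t) * (v2 t - b ^ 2 * v t) := fun t => ciInf_le hbdd t
  have hWneg : W < 0 := by
    by_contra hcon
    push Not at hcon
    have hw0 : ∀ t, b ^ 2 * v t ≤ v2 t := by
      intro t
      have := hcon.trans (hWle t)
      have := nonneg_of_mul_nonneg_right this (exp_pos _)
      linarith
    have hk := fun s => key v v1 v2 b s hb h0 h1 (fun t _ => hw0 t) (hnt _ hT)
    have hlim : Tendsto (fun s => exp (b * s) * v s) atBot (nhds 0) := by
      have e : Tendsto (fun s => exp (b * s)) atBot (nhds 0) :=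
        tendsto_exp_atBot.comp (tendsto_id.const_mul_atBot hb)
      simpa using e.mul hB
    have : exp (b * 0) * v 0 ≤ 0 := by
      refine ge_of_tendsto hlim ?_
      filter_upwards [eventually_le_atBot 0] with s hs using hk s 0 hs
    have := mul_pos (exp_pos (b * 0)) (hv 0)
    linarith
  set l := -W / (b ^ 2 - a ^ 2) with hl
  have hl' : l * (b ^ 2 - a ^ 2) = -W := div_mul_cancel₀ _ hgap.ne'
  refine ⟨l, ?_, div_pos (by linarith) hgap⟩
  have eab : ∀ t, exp (a * t) * exp (-b * t) = exp (-(b - a) * t) := by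
    intro t; rw [← exp_add]; ring_nf
  have eaa : ∀ t, exp (a * t) * exp (-a * t) = 1 := by
    intro t; rw [← exp_add]; simp
  have hEl := exp_lim (b - a) (by linarith)
  rw [tendsto_order]
  constructor
  · intro m hm
    set m' := (m + l) / 2 with hm'
    have hm'l : m' * (b ^ 2 - a ^ 2) < -W := by
      rw [← hl']; exact mul_lt_mul_of_pos_right (by linarith) hgap
    obtain ⟨T, hTs⟩ := eventually_atTop.1
      (hWlim.eventually_lt_const (show W < -(m' * (b ^ 2 - a ^ 2)) by linarith))
    have s := key' (fun t => m' * exp (-a * t) - v t)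
      (fun t => m' * (-a * exp (-a * t)) - v1 t)
      (fun t => m' * (-a * (-a * exp (-a * t))) - v2 t) b T hb
      (fun t => ((exp_hd (-a) t).const_mul m').sub (h0 t))
      (fun t => (((exp_hd (-a) t).const_mul (-a)).const_mul m').sub (h1 t))
      (fun t ht => by
        have e := mul_le_mul_of_nonneg_left (hTs t ht).le (exp_pos (-a * t)).le
        rw [← mul_assoc, mul_comm (exp (-a * t)) (exp (a * t)), eaa, one_mul] at e
        linarith)
      (hnt _ (by simpa using ((exp_lim a ha).const_mul m').sub hT))
    set Q := exp (b * T) * (m' * exp (-a * T) - v T) with hQ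
    have hQl := hEl.const_mul Q
    rw [mul_zero] at hQl
    filter_upwards [eventually_ge_atTop T,
      hQl.eventually_lt_const (show 0 < m' - m by linarith)] with t ht ht'
    have e := mul_le_mul_of_nonneg_left (s t ht) (exp_pos (a * t)).le
    rw [mul_sub, mul_left_comm, eaa, mul_left_comm, eab] at e
    linarith
  · intro m hm
    set m' := (m + l) / 2 with hm'
    have hm'l : -W < m' * (b ^ 2 - a ^ 2) := by
      rw [← hl']; exact mul_lt_mul_of_pos_right (by linarith) hgap
    obtain ⟨T, hTs⟩ := eventually_atTop.1
      (hWlim.eventually_const_lt (show -(m' * (b ^ 2 - a ^ 2)) < W by linarith))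
    have s := key' (fun t => v t - m' * exp (-a * t))
      (fun t => v1 t - m' * (-a * exp (-a * t)))
      (fun t => v2 t - m' * (-a * (-a * exp (-a * t)))) b T hb
      (fun t => (h0 t).sub ((exp_hd (-a) t).const_mul m'))
      (fun t => (h1 t).sub (((exp_hd (-a) t).const_mul (-a)).const_mul m'))
      (fun t ht => by
        have e := mul_le_mul_of_nonneg_left (hTs t ht).le (exp_pos (-a * t)).le
        rw [← mul_assoc (exp (-a * t)) (exp (a * t)),
          mul_comm (exp (-a * t)) (exp (a * t)), eaa, one_mul] at e
        linarith)
      (hnt _ (by simpa using hT.sub ((exp_lim a ha).const_mul m')))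
    set Q := exp (b * T) * (v T - m' * exp (-a * T)) with hQ
    have hQl := hEl.const_mul Q
    rw [mul_zero] at hQl
    filter_upwards [eventually_ge_atTop T,
      hQl.eventually_lt_const (show 0 < m - m' by linarith)] with t ht ht'
    have e := mul_le_mul_of_nonneg_left (s t ht) (exp_pos (a * t)).le
    rw [mul_sub, mul_left_comm _ m', eaa, mul_left_comm, eab] at e
    linarith

/-- `g t ≥ β t` follows from the conditions. -/
lemma g_ge (n : ℕ) (g : ℝ → ℝ) (hg : CondG n g) (β : ℝ)
    (hnear : ∃ r C : ℝ, 1 < r ∧ ∀ t : ℝ, 0 < t → t ≤ 1 → |g t - β * t| ≤ C * t ^ r) :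
    ∀ t > 0, β * t ≤ g t := by
  obtain ⟨hg1, -, -, hg4, -⟩ := hg
  obtain ⟨r, C, hr, hC⟩ := hnear
  have hd : ∀ t > 0, HasDerivAt (fun t => g t / t) ((deriv g t * t - g t * 1) / t ^ 2) t := by
    intro t ht
    have : DifferentiableAt ℝ g t :=
      ((hg1.differentiableOn (by norm_num)) t ht).differentiableAt (Ioi_mem_nhds ht)
    exact this.hasDerivAt.div (hasDerivAt_id t) ht.ne'
  have hmono : MonotoneOn (fun t => g t / t) (Ioi 0) := by
    refine monotoneOn_of_hasDerivWithinAt_nonneg (convex_Ioi 0)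
      (fun t ht => (hd t ht).continuousAt.continuousWithinAt)
      (fun t ht => (hd t (by simpa using ht)).hasDerivWithinAt) ?_
    intro t ht
    rw [interior_Ioi] at ht
    have ht' : 0 < t := ht
    have := (hg4 t ht).1
    rw [div_lt_iff₀ ht'] at this
    exact div_nonneg (by linarith) (by positivity)
  intro t ht
  rw [← le_div_iff₀ ht]
  have hlim : Tendsto (fun s : ℝ => β - C * s ^ (r - 1)) (nhdsWithin 0 (Ioi 0)) (nhds β) := by
    have e : Tendsto (fun s : ℝ => s) (nhdsWithin 0 (Ioi 0)) (nhds 0) :=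
      tendsto_id.mono_left nhdsWithin_le_nhds
    have := (e.rpow_const (p := r - 1) (Or.inr (by linarith))).const_mul C
    rw [zero_rpow (by linarith), mul_zero] at this
    simpa using this.const_sub β
  refine le_of_tendsto hlim ?_
  have hmem : Ioc 0 (min t 1) ∈ nhdsWithin (0 : ℝ) (Ioi 0) :=
    Ioc_mem_nhdsGT (by positivity)
  filter_upwards [hmem] with s hs
  have hs0 : 0 < s := hs.1
  have e1 := hC s hs0 (hs.2.trans (min_le_right _ _))
  have e2 : g s / s ≤ g t / t := hmono hs0 ht (hs.2.trans (min_le_left _ _))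
  refine le_trans ?_ e2
  rw [le_div_iff₀ hs0, sub_mul, mul_assoc, ← rpow_add_one hs0.ne', sub_add_cancel]
  have := (abs_le.1 e1).1
  linarith

lemma half (A B β a b : ℝ) (g v : ℝ → ℝ) (ha : 0 < a) (hab : a < b)
    (hs : a ^ 2 + b ^ 2 = A) (hp : a ^ 2 * b ^ 2 = B - β)
    (hv4 : ContDiff ℝ 4 v) (hvpos : ∀ t, 0 < v t) (hvsol : IsSol A B g v)
    (hlimT : Tendsto v atTop (nhds 0)) (hlimB : Tendsto v atBot (nhds 0))
    (hge : ∀ t > 0, β * t ≤ g t)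
    (hnear : ∃ r C : ℝ, 1 < r ∧ ∀ t : ℝ, 0 < t → t ≤ 1 → |g t - β * t| ≤ C * t ^ r) :
    ∃ l, Tendsto (fun t => exp (a * t) * v t) atTop (nhds l) ∧ 0 < l := by
  obtain ⟨r, C, hr, hC⟩ := hnear
  have hder : ∀ m : ℕ, m < 4 → ∀ t,
      HasDerivAt (iteratedDeriv m v) (iteratedDeriv (m + 1) v t) t := by
    intro m hm t
    rw [iteratedDeriv_succ]
    exact ((hv4.differentiable_iteratedDeriv m (by exact_mod_cast hm)) t).hasDerivAt
  have hd0 := hder 0 (by norm_num)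
  rw [iteratedDeriv_zero] at hd0
  refine core v (iteratedDeriv 1 v) (iteratedDeriv 2 v) (iteratedDeriv 3 v) (iteratedDeriv 4 v)
    (fun t => g (v t) - β * v t) a b r |C| ha hab hr hd0 (hder 1 (by norm_num))
    (hder 2 (by norm_num)) (hder 3 (by norm_num)) hvpos hlimT hlimB ?_ ?_ (abs_nonneg C) ?_
  · intro t
    have := hvsol t
    rw [hs, hp]; linarith
  · intro t
    have := hge (v t) (hvpos t)
    linarith
  · intro t ht
    refine (le_abs_self _).trans ((hC _ (hvpos t) ht).trans ?_)
    exact mul_le_mul_of_nonneg_right (le_abs_self C) (rpow_nonneg (hvpos t).le _)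

theorem stmt_7 (n : ℕ) (hn : 5 ≤ n) (g : ℝ → ℝ) (hg : CondG n g)
    (A B : ℝ) (hA : A = ((n : ℝ) * ((n : ℝ) - 4) + 8) / 2)
    (hB : B = (n : ℝ) ^ 2 * ((n : ℝ) - 4) ^ 2 / 16)
    (β : ℝ) (hβ : Filter.Tendsto (deriv g) (nhdsWithin 0 (Set.Ioi 0)) (nhds β))
    (μ : ℝ) (hμ : μ = (A - Real.sqrt (A ^ 2 - 4 * (B - β))) / 2)
    (v : ℝ → ℝ) (hv4 : ContDiff ℝ 4 v) (hvpos : ∀ t, 0 < v t) (hvsol : IsSol A B g v)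
    (hlimT : Filter.Tendsto v Filter.atTop (nhds 0))
    (hlimB : Filter.Tendsto v Filter.atBot (nhds 0))
    (hnear : ∃ r C : ℝ, 1 < r ∧ ∀ t : ℝ, 0 < t → t ≤ 1 → |g t - β * t| ≤ C * t ^ r) :
    (∃ l : ℝ, Filter.Tendsto (fun t => Real.exp (Real.sqrt μ * t) * v t) Filter.atTop (nhds l) ∧
      ((∀ t > 0, β * t ≤ g t) → 0 < l)) ∧
    (∃ l : ℝ, Filter.Tendsto (fun t => Real.exp (-(Real.sqrt μ * t)) * v t) Filter.atBot (nhds l) ∧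
      ((∀ t > 0, β * t ≤ g t) → 0 < l)) := by
  have hge := g_ge n g hg β hnear
  obtain ⟨-, -, -, -, ⟨β', hβ0', hβB', hβ'⟩, -, -⟩ := hg
  have hββ : β' = β := tendsto_nhds_unique hβ' hβ
  subst hββ
  have hn' : (5 : ℝ) ≤ n := by exact_mod_cast hn
  have hBβ : 0 < B - β' := by rw [hB]; linarith
  have hdisc : 0 < A ^ 2 - 4 * (B - β') := by rw [hA, hB]; nlinarith
  have hA0 : 0 < A := by rw [hA]; nlinarith
  set s := Real.sqrt (A ^ 2 - 4 * (B - β')) with hs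
  have hs0 : 0 < s := Real.sqrt_pos.2 hdisc
  have hss : s ^ 2 = A ^ 2 - 4 * (B - β') := Real.sq_sqrt hdisc.le
  have hsA : s < A := by nlinarith
  have hμ0 : 0 < μ := by rw [hμ]; linarith
  have ha := Real.sqrt_pos.2 hμ0
  have haa : Real.sqrt μ ^ 2 = μ := Real.sq_sqrt hμ0.le
  have hbb : Real.sqrt ((A + s) / 2) ^ 2 = (A + s) / 2 := Real.sq_sqrt (by linarith)
  have hab : Real.sqrt μ < Real.sqrt ((A + s) / 2) :=
    Real.sqrt_lt_sqrt hμ0.le (by rw [hμ]; linarith)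
  have hsum : Real.sqrt μ ^ 2 + Real.sqrt ((A + s) / 2) ^ 2 = A := by
    rw [haa, hbb, hμ]; ring
  have hprod : Real.sqrt μ ^ 2 * Real.sqrt ((A + s) / 2) ^ 2 = B - β' := by
    rw [haa, hbb, hμ]; linarith
  constructor
  · obtain ⟨l, h1, h2⟩ := half A B β' _ _ g v ha hab hsum hprod hv4 hvpos hvsol hlimT hlimB
      hge hnear
    exact ⟨l, h1, fun _ => h2⟩
  · obtain ⟨l, h1, h2⟩ := half A B β' _ _ g (fun t => v (-t)) ha hab hsum hprod
      (hv4.comp contDiff_neg) (fun t => hvpos (-t))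
      (fun t => by
        have := hvsol (-t)
        rw [iteratedDeriv_comp_neg, iteratedDeriv_comp_neg]
        norm_num; linarith)
      (hlimB.comp tendsto_neg_atTop_atBot) (hlimT.comp tendsto_neg_atBot_atTop)
      hge hnear
    refine ⟨l, ?_, fun _ => h2⟩
    have := h1.comp tendsto_neg_atBot_atTop
    refine this.congr (fun t => ?_)
    simp
end
end

section
/- Let v : ℝ → ℝ be a C⁴ nonnegative solution of the ODE v''''(t) − A·v''(t) + B·v(t) = g(v(t)) and suppose v'(t₀) = 0 for some t₀ ∈ ℝ. Then v is symmetric with respect to t₀, that is, v(t₀ + t) = v(t₀ − t) for all t ∈ ℝ. -/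
open Real Filter Set

noncomputable section

lemma aux_mono {f f' : ℝ → ℝ} {a b : ℝ} (hab : a ≤ b) (hf : ∀ x, HasDerivAt f (f' x) x)
    (h : ∀ x ∈ Set.Icc a b, 0 ≤ f' x) : f a ≤ f b := by
  have hm : MonotoneOn f (Set.Icc a b) := by
    apply monotoneOn_of_deriv_nonneg (convex_Icc a b)
    · exact fun x _ => (hf x).continuousAt.continuousWithinAt
    · exact fun x _ => (hf x).differentiableAt.differentiableWithinAt
    · intro x hx
      rw [(hf x).deriv]
      exact h x (interior_subset hx)
  exact hm (Set.left_mem_Icc.2 hab) (Set.right_mem_Icc.2 hab) hab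

/-- A second order differential inequality with nonnegative data gives `f ≥ 0`. -/
lemma aux_second {f f1 f2 : ℝ → ℝ} {k T : ℝ} (hf : ∀ x, HasDerivAt f (f1 x) x)
    (hf1 : ∀ x, HasDerivAt f1 (f2 x) x) (hk : 0 ≤ k) (h0 : 0 ≤ f 0) (h1 : 0 ≤ f1 0)
    (h : ∀ x ∈ Set.Icc 0 T, k ^ 2 * f x ≤ f2 x) : ∀ x ∈ Set.Icc 0 T, 0 ≤ f x := by
  have hp : ∀ x ∈ Set.Icc 0 T, 0 ≤ f1 x + k * f x := by
    intro x hx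
    have hd : ∀ y, HasDerivAt (fun y => (f1 y + k * f y) * Real.exp (-k * y))
        ((f2 y + k * f1 y) * Real.exp (-k * y) +
          (f1 y + k * f y) * (Real.exp (-k * y) * (-k * 1))) y := fun y =>
      ((hf1 y).add ((hf y).const_mul k)).mul (((hasDerivAt_id y).const_mul (-k)).exp)
    have := aux_mono hx.1 hd (by
      intro y hy
      have h2 := h y ⟨hy.1, hy.2.trans hx.2⟩
      have : (f2 y + k * f1 y) * Real.exp (-k * y) +
          (f1 y + k * f y) * (Real.exp (-k * y) * (-k * 1)) =
          (f2 y - k ^ 2 * f y) * Real.exp (-k * y) := by ring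
      rw [this]
      exact mul_nonneg (by linarith) (Real.exp_pos _).le)
    have h3 : 0 ≤ (f1 x + k * f x) * Real.exp (-k * x) := by
      refine le_trans ?_ this
      exact mul_nonneg (by positivity) (Real.exp_pos _).le
    exact nonneg_of_mul_nonneg_left h3 (Real.exp_pos _)
  intro x hx
  have hd : ∀ y, HasDerivAt (fun y => f y * Real.exp (k * y))
      (f1 y * Real.exp (k * y) + f y * (Real.exp (k * y) * (k * 1))) y := fun y =>
    (hf y).mul (((hasDerivAt_id y).const_mul k).exp)
  have := aux_mono hx.1 hd (by
    intro y hy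
    have h2 := hp y ⟨hy.1, hy.2.trans hx.2⟩
    have : f1 y * Real.exp (k * y) + f y * (Real.exp (k * y) * (k * 1)) =
        (f1 y + k * f y) * Real.exp (k * y) := by ring
    rw [this]
    exact mul_nonneg h2 (Real.exp_pos _).le)
  have h3 : 0 ≤ f x * Real.exp (k * x) := by
    refine le_trans ?_ this
    exact mul_nonneg h0 (Real.exp_pos _).le
  exact nonneg_of_mul_nonneg_left h3 (Real.exp_pos _)

/-- Taylor lower bound. -/
lemma aux_taylor {d0 d1 d2 d3 d4 : ℝ → ℝ} (e0 : ∀ x, HasDerivAt d0 (d1 x) x)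
    (e1 : ∀ x, HasDerivAt d1 (d2 x) x) (e2 : ∀ x, HasDerivAt d2 (d3 x) x)
    (e3 : ∀ x, HasDerivAt d3 (d4 x) x) {t m : ℝ} (p1 : 0 ≤ d1 t) (p2 : 0 ≤ d2 t) (p3 : 0 ≤ d3 t)
    (h : ∀ s, t ≤ s → m ≤ d4 s) (s : ℝ) (hs : t ≤ s) :
    d0 t + m * (s - t) ^ 4 / 24 ≤ d0 s := by
  have q3 : ∀ s, t ≤ s → m * (s - t) ≤ d3 s := by
    intro s hs
    have hd : ∀ y, HasDerivAt (fun y => d3 y - m * (y - t)) (d4 y - m * 1) y := fun y =>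
      (e3 y).sub (((hasDerivAt_id y).sub_const t).const_mul m)
    have := aux_mono hs hd (fun y hy => by linarith [h y hy.1])
    simp only [sub_self, mul_zero] at this
    linarith
  have q2 : ∀ s, t ≤ s → m * (s - t) ^ 2 / 2 ≤ d2 s := by
    intro s hs
    have hd : ∀ y, HasDerivAt (fun y => d2 y - m * (y - t) ^ 2 / 2)
        (d3 y - m * (((2:ℕ):ℝ) * (y - t) ^ (2 - 1) * 1) / 2) y := fun y =>
      (e2 y).sub (((((hasDerivAt_id y).sub_const t).pow 2).const_mul m).div_const 2)
    have := aux_mono hs hd (fun y hy => by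
      have := q3 y hy.1
      norm_num
      linarith)
    norm_num at this
    linarith
  have q1 : ∀ s, t ≤ s → m * (s - t) ^ 3 / 6 ≤ d1 s := by
    intro s hs
    have hd : ∀ y, HasDerivAt (fun y => d1 y - m * (y - t) ^ 3 / 6)
        (d2 y - m * (((3:ℕ):ℝ) * (y - t) ^ (3 - 1) * 1) / 6) y := fun y =>
      (e1 y).sub (((((hasDerivAt_id y).sub_const t).pow 3).const_mul m).div_const 6)
    have := aux_mono hs hd (fun y hy => by
      have := q2 y hy.1
      norm_num
      linarith)
    norm_num at this
    linarith
  have hd : ∀ y, HasDerivAt (fun y => d0 y - m * (y - t) ^ 4 / 24)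
      (d1 y - m * (((4:ℕ):ℝ) * (y - t) ^ (4 - 1) * 1) / 24) y := fun y =>
    (e0 y).sub (((((hasDerivAt_id y).sub_const t).pow 4).const_mul m).div_const 24)
  have := aux_mono hs hd (fun y hy => by
    have := q1 y hy.1
    norm_num
    linarith)
  norm_num at this
  linarith

/-- Blow-up in finite time. -/
lemma aux_blowup {d0 d1 d2 d3 d4 : ℝ → ℝ} (e0 : ∀ x, HasDerivAt d0 (d1 x) x)
    (e1 : ∀ x, HasDerivAt d1 (d2 x) x) (e2 : ∀ x, HasDerivAt d2 (d3 x) x)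
    (e3 : ∀ x, HasDerivAt d3 (d4 x) x) {T q c : ℝ} (p1 : ∀ t, T ≤ t → 0 ≤ d1 t)
    (p2 : ∀ t, T ≤ t → 0 ≤ d2 t) (p3 : ∀ t, T ≤ t → 0 ≤ d3 t) (hT : 1 ≤ d0 T)
    (hq : 1 < q) (hc : 0 < c) (h : ∀ t, T ≤ t → 1 ≤ d0 t → c * d0 t ^ q ≤ d4 t) : False := by
  have mono : ∀ a b, T ≤ a → a ≤ b → d0 a ≤ d0 b := fun a b ha hab =>
    aux_mono hab e0 (fun y hy => p1 y (ha.trans hy.1))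
  set r : ℝ := (2:ℝ) ^ (-(q - 1) / 4) with hr
  have hr0 : 0 < r := Real.rpow_pos_of_pos two_pos _
  have hr1 : r < 1 := Real.rpow_lt_one_of_one_lt_of_neg one_lt_two (by linarith)
  have hr4 : r ^ 4 * 2 ^ (q - 1) = 1 := by
    rw [hr, ← Real.rpow_natCast, ← Real.rpow_mul two_pos.le, ← Real.rpow_add two_pos]
    convert Real.rpow_zero 2 using 2
    push_cast; ring
  set H : ℝ := 24 / c + 1 with hH
  have hdc : 0 < 24 / c := by positivity
  have hH4 : 24 ≤ c * H ^ 4 := by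
    have : H ≤ H ^ 4 := le_self_pow₀ (by linarith) (by norm_num)
    calc (24:ℝ) = c * (24 / c) := by field_simp
      _ ≤ c * H ^ 4 := by gcongr; linarith
  have hH0 : 0 < H := by linarith
  have sumnn : ∀ k, 0 ≤ ∑ i ∈ Finset.range k, r ^ i := fun k =>
    Finset.sum_nonneg (fun i _ => by positivity)
  have key : ∀ k : ℕ, (2:ℝ) ^ k ≤ d0 (T + H * ∑ i ∈ Finset.range k, r ^ i) := by
    intro k
    induction k with
    | zero => simpa using hT
    | succ k ih =>
      set t := T + H * ∑ i ∈ Finset.range k, r ^ i with ht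
      have hTt : T ≤ t := by have := mul_nonneg hH0.le (sumnn k); linarith
      have h1k : (1:ℝ) ≤ 2 ^ k := one_le_pow₀ one_le_two
      have h1 : 1 ≤ d0 t := h1k.trans ih
      have hx0 : 0 < d0 t := by linarith
      have hh : 0 ≤ H * r ^ k := by positivity
      have tay := aux_taylor e0 e1 e2 e3 (t := t) (m := c * d0 t ^ q) (p1 t hTt) (p2 t hTt)
        (p3 t hTt) (by
          intro s hs
          have hm := mono t s hTt hs
          refine le_trans ?_ (h s (hTt.trans hs) (h1.trans hm))
          gcongr) (t + H * r ^ k) (by linarith)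
      have e : T + H * ∑ i ∈ Finset.range (k + 1), r ^ i = t + H * r ^ k := by
        rw [Finset.sum_range_succ, ht]; ring
      rw [e]
      have hsub : t + H * r ^ k - t = H * r ^ k := by ring
      rw [hsub] at tay
      have hpow : 1 ≤ d0 t ^ (q - 1) * (r ^ k) ^ 4 := by
        have : ((2:ℝ) ^ k) ^ (q - 1) ≤ d0 t ^ (q - 1) :=
          Real.rpow_le_rpow (by positivity) ih (by linarith)
        calc (1:ℝ) = (r ^ 4 * 2 ^ (q - 1)) ^ k := by rw [hr4, one_pow]
          _ = ((2:ℝ) ^ k) ^ (q - 1) * (r ^ k) ^ 4 := by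
            rw [mul_pow, ← Real.rpow_natCast 2 k, ← Real.rpow_mul two_pos.le, mul_comm (k:ℝ),
              Real.rpow_mul two_pos.le, Real.rpow_natCast]
            ring
          _ ≤ _ := by gcongr
      have hqs : d0 t ^ q = d0 t * d0 t ^ (q - 1) := by
        rw [← Real.rpow_one_add' hx0.le (by linarith)]
        congr 1; ring
      have : d0 t ≤ c * d0 t ^ q * (H * r ^ k) ^ 4 / 24 := by
        have e : c * d0 t ^ q * (H * r ^ k) ^ 4 / 24 =
            d0 t * ((c * H ^ 4) / 24 * (d0 t ^ (q - 1) * (r ^ k) ^ 4)) := by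
          rw [hqs]; ring
        rw [e]
        apply le_mul_of_one_le_right hx0.le
        apply one_le_mul_of_one_le_of_one_le _ hpow
        linarith
      rw [pow_succ]
      linarith
  have hsum : ∀ k, ∑ i ∈ Finset.range k, r ^ i ≤ (1 - r)⁻¹ := fun k => by
    rw [← tsum_geometric_of_lt_one hr0.le hr1]
    exact (summable_geometric_of_lt_one hr0.le hr1).sum_le_tsum _ (fun i _ => by positivity)
  obtain ⟨k, hk⟩ := pow_unbounded_of_one_lt (d0 (T + H * (1 - r)⁻¹)) one_lt_two
  have h1 := key k
  have h2 := mono (T + H * ∑ i ∈ Finset.range k, r ^ i) (T + H * (1 - r)⁻¹)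
    (by have := mul_nonneg hH0.le (sumnn k); linarith)
    (by have := mul_le_mul_of_nonneg_left (hsum k) hH0.le; linarith)
  linarith

/-- Quotient monotonicity. -/
lemma aux_quot {n : ℕ} {g : ℝ → ℝ} (hg : CondG n g) {x y : ℝ} (hx : 0 < x) (hxy : x ≤ y) :
    g x / x ≤ g y / y := by
  obtain ⟨h1, h2, h3, h4, h5, h6, h7⟩ := hg
  have hd : ∀ z ∈ Set.Ioi (0:ℝ), HasDerivAt g (deriv g z) z := fun z hz =>
    ((h1.differentiableOn one_ne_zero).differentiableAt (Ioi_mem_nhds hz)).hasDerivAt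
  have hq : ∀ z ∈ Set.Ioi (0:ℝ), HasDerivAt (fun z => g z / z)
      ((deriv g z * z - g z * 1) / z ^ 2) z := fun z hz =>
    (hd z hz).div (hasDerivAt_id z) (ne_of_gt hz)
  have hm : MonotoneOn (fun z => g z / z) (Set.Ioi 0) := by
    apply monotoneOn_of_deriv_nonneg (convex_Ioi 0)
    · exact fun z hz => (hq z hz).continuousAt.continuousWithinAt
    · exact fun z hz => (hq z (interior_subset hz)).differentiableAt.differentiableWithinAt
    · intro z hz
      have hz' : (0:ℝ) < z := interior_subset hz
      rw [(hq z hz').deriv]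
      have := (h4 z hz').1
      rw [div_lt_iff₀ hz'] at this
      apply div_nonneg _ (by positivity)
      linarith
  exact hm hx (lt_of_lt_of_le hx hxy) hxy

lemma aux_super {n : ℕ} {g : ℝ → ℝ} (hg : CondG n g) {x y : ℝ} (hx : 0 ≤ x) (hy : 0 ≤ y) :
    g x + g y ≤ g (x + y) := by
  have h0 : g 0 = 0 := hg.2.2.2.2.2.2
  rcases hx.eq_or_lt with rfl | hx
  · simp [h0]
  rcases hy.eq_or_lt with rfl | hy
  · simp [h0]
  have a := aux_quot hg hx (show x ≤ x + y by linarith)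
  have b := aux_quot hg hy (show y ≤ x + y by linarith)
  rw [div_le_iff₀ hx] at a
  rw [div_le_iff₀ hy] at b
  have : g (x + y) = g (x + y) / (x + y) * (x + y) := by field_simp
  linarith

lemma aux_nonneg {n : ℕ} {g : ℝ → ℝ} (hg : CondG n g) {x : ℝ} (hx : 0 ≤ x) : 0 ≤ g x := by
  rcases hx.eq_or_lt with rfl | hx
  · exact hg.2.2.2.2.2.2.ge
  · exact (hg.2.1 x hx).le

lemma aux_lip {n : ℕ} (hn : 5 ≤ n) {g : ℝ → ℝ} (hg : CondG n g) {M : ℝ} (hM : 0 < M) :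
    ∃ L, 0 ≤ L ∧ ∀ x ∈ Set.Icc 0 M, ∀ y ∈ Set.Icc 0 M, |g x - g y| ≤ L * |x - y| := by
  have hn' : (5:ℝ) ≤ n := by exact_mod_cast hn
  have hC : 1 ≤ ((n : ℝ) + 4) / ((n : ℝ) - 4) := by
    rw [le_div_iff₀ (by linarith)]; linarith
  set C := ((n : ℝ) + 4) / ((n : ℝ) - 4) with hCdef
  have hgM := hg.2.1 M hM
  have h0 : g 0 = 0 := hg.2.2.2.2.2.2
  have hgM' : 0 < g M / M := by positivity
  refine ⟨C * (g M / M), by positivity, ?_⟩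
  have hz : ∀ x, 0 ≤ x → x ≤ M → |g x| ≤ C * (g M / M) * |x| := by
    intro x hx hxM
    rw [abs_of_nonneg (aux_nonneg hg hx), abs_of_nonneg hx]
    rcases hx.eq_or_lt with rfl | hx
    · simp [h0]
    have a := aux_quot hg hx hxM
    rw [div_le_iff₀ hx] at a
    refine a.trans ?_
    gcongr
    exact le_mul_of_one_le_left hgM'.le hC
  intro x hx y hy
  rcases hx.1.eq_or_lt with hx0 | hx0
  · rw [← hx0, h0, zero_sub, zero_sub, abs_neg, abs_neg]; exact hz y hy.1 hy.2
  rcases hy.1.eq_or_lt with hy0 | hy0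
  · rw [← hy0, h0, sub_zero, sub_zero]; exact hz x hx.1 hx.2
  have := (convex_Ioc (0:ℝ) M).norm_image_sub_le_of_norm_deriv_le (f := g) (C := C * (g M / M))
    (x := y) (y := x)
    (fun z hz => (hg.1.differentiableOn one_ne_zero).differentiableAt (Ioi_mem_nhds hz.1))
    (fun z hz => by
      have h4 := hg.2.2.2.1 z hz.1
      have hgz := hg.2.1 z hz.1
      have hz0 : 0 < z := hz.1
      have : 0 < g z / z := by positivity
      rw [Real.norm_eq_abs, abs_of_nonneg (by linarith)]
      exact h4.2.trans (mul_le_mul_of_nonneg_left (aux_quot hg hz.1 hz.2) (by linarith)))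
    ⟨hy0, hy.2⟩ ⟨hx0, hx.2⟩
  simpa [Real.norm_eq_abs] using this

/-- First-order system form of the equation -/
structure Sol4 (A B : ℝ) (g V0 V1 V2 V3 : ℝ → ℝ) : Prop where
  nn : ∀ t, 0 ≤ V0 t
  e0 : ∀ t, HasDerivAt V0 (V1 t) t
  e1 : ∀ t, HasDerivAt V1 (V2 t) t
  e2 : ∀ t, HasDerivAt V2 (V3 t) t
  e3 : ∀ t, HasDerivAt V3 (A * V2 t - B * V0 t + g (V0 t)) t

lemma core1 {n : ℕ} (hn : 5 ≤ n) {g : ℝ → ℝ} (hg : CondG n g)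
    {A B : ℝ} (hA : A = ((n : ℝ) * ((n : ℝ) - 4) + 8) / 2)
    (hB : B = (n : ℝ) ^ 2 * ((n : ℝ) - 4) ^ 2 / 16)
    {V0 V1 V2 V3 W0 W1 W2 W3 : ℝ → ℝ} (hV : Sol4 A B g V0 V1 V2 V3)
    (hW : Sol4 A B g W0 W1 W2 W3) (h0 : V0 0 = W0 0) (h1 : V1 0 = W1 0) (h2 : V2 0 = W2 0)
    (h3 : W3 0 < V3 0) : False := by
  have hn' : (5:ℝ) ≤ n := by exact_mod_cast hn
  set a : ℝ := n / 2 with ha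
  set b : ℝ := (n - 4) / 2 with hb
  have ha0 : 0 < a := by rw [ha]; linarith
  have hb0 : 0 < b := by rw [hb]; linarith
  have hA' : A = a ^ 2 + b ^ 2 := by rw [hA, ha, hb]; ring
  have hB' : B = a ^ 2 * b ^ 2 := by rw [hB, ha, hb]; ring
  clear_value a b
  set d0 : ℝ → ℝ := fun t => V0 t - W0 t with hd0
  set d1 : ℝ → ℝ := fun t => V1 t - W1 t with hd1
  set d2 : ℝ → ℝ := fun t => V2 t - W2 t with hd2
  set d3 : ℝ → ℝ := fun t => V3 t - W3 t with hd3
  set d4 : ℝ → ℝ := fun t => A * d2 t - B * d0 t + (g (V0 t) - g (W0 t)) with hd4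
  have e0 : ∀ t, HasDerivAt d0 (d1 t) t := fun t => (hV.e0 t).sub (hW.e0 t)
  have e1 : ∀ t, HasDerivAt d1 (d2 t) t := fun t => (hV.e1 t).sub (hW.e1 t)
  have e2 : ∀ t, HasDerivAt d2 (d3 t) t := fun t => (hV.e2 t).sub (hW.e2 t)
  have e3 : ∀ t, HasDerivAt d3 (d4 t) t := fun t => by
    have := (hV.e3 t).sub (hW.e3 t)
    have e : d4 t = (A * V2 t - B * V0 t + g (V0 t)) - (A * W2 t - B * W0 t + g (W0 t)) := by
      change A * (V2 t - W2 t) - B * (V0 t - W0 t) + (g (V0 t) - g (W0 t)) = _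
      ring
    rw [e]
    exact this
  have z0 : d0 0 = 0 := by simp [hd0, h0]
  have z1 : d1 0 = 0 := by simp [hd1, h1]
  have z2 : d2 0 = 0 := by simp [hd2, h2]
  have z3 : 0 < d3 0 := by simp [hd3, h3]
  have hG : ∀ t, 0 ≤ d0 t → g (d0 t) ≤ g (V0 t) - g (W0 t) := by
    intro t ht
    have := aux_super hg ht (hW.nn t)
    have e : d0 t + W0 t = V0 t := by simp [hd0]
    rw [e] at this
    linarith
  clear_value d0 d1 d2 d3
  -- consequences of `d3 ≥ 0` on an interval
  have cons : ∀ T, 0 ≤ T → (∀ x ∈ Set.Icc 0 T, 0 ≤ d3 x) → ∀ x ∈ Set.Icc 0 T,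
      0 ≤ d0 x ∧ 0 ≤ d1 x ∧ 0 ≤ d2 x ∧ d3 0 ≤ d3 x ∧ a ^ 2 * d0 x ≤ d2 x := by
    intro T hT h
    have p2 : ∀ x ∈ Set.Icc 0 T, 0 ≤ d2 x := fun x hx => by
      have := aux_mono hx.1 e2 (fun y hy => h y ⟨hy.1, hy.2.trans hx.2⟩)
      linarith
    have p1 : ∀ x ∈ Set.Icc 0 T, 0 ≤ d1 x := fun x hx => by
      have := aux_mono hx.1 e1 (fun y hy => p2 y ⟨hy.1, hy.2.trans hx.2⟩)
      linarith
    have p0 : ∀ x ∈ Set.Icc 0 T, 0 ≤ d0 x := fun x hx => by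
      have := aux_mono hx.1 e0 (fun y hy => p1 y ⟨hy.1, hy.2.trans hx.2⟩)
      linarith
    have f0 : ∀ t, HasDerivAt (fun t => d2 t - a ^ 2 * d0 t) (d3 t - a ^ 2 * d1 t) t :=
      fun t => (e2 t).sub ((e0 t).const_mul _)
    have f1 : ∀ t, HasDerivAt (fun t => d3 t - a ^ 2 * d1 t) (d4 t - a ^ 2 * d2 t) t :=
      fun t => (e3 t).sub ((e1 t).const_mul _)
    have hf : ∀ x ∈ Set.Icc 0 T, b ^ 2 * (d2 x - a ^ 2 * d0 x) ≤ d4 x - a ^ 2 * d2 x := by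
      intro x hx
      have := (aux_nonneg hg (p0 x hx)).trans (hG x (p0 x hx))
      simp only [hd4, hA', hB']
      linarith
    have q := aux_second f0 f1 hb0.le (by simp [z0, z2]) (by simp only [z1]; linarith) hf
    intro x hx
    have m := aux_mono hx.1 f1 (fun y hy => by
      have hy' : y ∈ Set.Icc 0 T := ⟨hy.1, hy.2.trans hx.2⟩
      exact (mul_nonneg (by positivity) (q y hy')).trans (hf y hy'))
    simp only [z1] at m
    have := mul_nonneg (sq_nonneg a) (p1 x hx)
    have := q x hx
    exact ⟨p0 x hx, p1 x hx, p2 x hx, by linarith, by linarith⟩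
  have pos : ∀ t, 0 ≤ t → 0 < d3 t := by
    by_contra! hcon
    have hc3 : Continuous d3 := continuous_iff_continuousAt.2 fun t => (e3 t).continuousAt
    set S := {t | 0 ≤ t ∧ d3 t ≤ 0} with hS
    have hSc : IsClosed S := (isClosed_Ici (a := (0:ℝ))).inter (isClosed_le hc3 continuous_const)
    have hSb : BddBelow S := ⟨0, fun x hx => hx.1⟩
    have hmem : sInf S ∈ S := hSc.csInf_mem hcon hSb
    have := cons (sInf S) hmem.1 (by
      intro x hx
      rcases hx.2.eq_or_lt with hx' | hx'
      · by_contra! hneg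
        have hx0 : 0 < x := by
          rcases hx.1.eq_or_lt with h | h
          · rw [← h] at hneg; linarith
          · exact h
        -- by continuity negative slightly before
        have hev : ∀ᶠ y in nhdsWithin x (Set.Iio x), d3 y < 0 ∧ 0 < y :=
          nhdsWithin_le_nhds ((hc3.continuousAt.eventually_lt_const hneg).and
            (lt_mem_nhds hx0))
        obtain ⟨y, hy, hyx⟩ := (hev.and self_mem_nhdsWithin).exists
        have := csInf_le hSb (show y ∈ S from ⟨hy.2.le, hy.1.le⟩)
        rw [← hx'] at this
        exact absurd hyx (not_lt.2 this)
      · by_contra! hneg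
        exact absurd hx' (not_lt.2 (csInf_le hSb ⟨hx.1, hneg.le⟩))) (sInf S) ⟨hmem.1, le_rfl⟩
    have h5 : d3 (sInf S) ≤ 0 := hmem.2
    linarith [this.2.2.2.1]
  have all : ∀ x, 0 ≤ x → 0 ≤ d0 x ∧ 0 ≤ d1 x ∧ 0 ≤ d2 x ∧ d3 0 ≤ d3 x ∧ a ^ 2 * d0 x ≤ d2 x :=
    fun x hx => cons x hx (fun y hy => (pos y hy.1).le) x ⟨hx, le_rfl⟩
  have hd4g : ∀ x, 0 ≤ x → g (d0 x) ≤ d4 x := by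
    intro x hx
    obtain ⟨q0, q1, q2, q3, q4⟩ := all x hx
    have := hG x q0
    have h5 : B * d0 x ≤ A * d2 x := by
      rw [hA', hB']
      have := mul_le_mul_of_nonneg_left q4 (sq_nonneg b)
      have := mul_nonneg (sq_nonneg a) q2
      linarith
    simp only [hd4]
    linarith
  obtain ⟨q, c, hq, hc, hgq⟩ := hg.2.2.2.2.2.1
  -- growth
  have g2 : ∀ x, 0 ≤ x → d3 0 * x ≤ d2 x := by
    intro x hx
    have := aux_mono hx (fun y => (e2 y).sub ((hasDerivAt_id y).const_mul (d3 0)))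
      (fun y hy => by linarith [(all y hy.1).2.2.2.1])
    simp [z2] at this
    linarith
  have g1 : ∀ x, 1 ≤ x → d3 0 * (x - 1) ≤ d1 x := by
    intro x hx
    have := aux_mono hx (fun y => (e1 y).sub (((hasDerivAt_id y).sub_const 1).const_mul (d3 0)))
      (fun y hy => by
        have hy1 : 1 ≤ y := hy.1
        have := g2 y (by linarith)
        have := mul_le_mul_of_nonneg_left hy1 z3.le
        linarith)
    simp at this
    linarith [(all 1 zero_le_one).2.1]
  have g0 : ∀ x, 2 ≤ x → d3 0 * (x - 2) ≤ d0 x := by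
    intro x hx
    have := aux_mono hx (fun y => (e0 y).sub (((hasDerivAt_id y).sub_const 2).const_mul (d3 0)))
      (fun y hy => by
        have hy1 : 2 ≤ y := hy.1
        have := g1 y (by linarith)
        have := mul_le_mul_of_nonneg_left (show 1 ≤ y - 1 by linarith) z3.le
        linarith)
    simp at this
    linarith [(all 2 zero_le_two).1]
  have hT0 : 0 < 1 / d3 0 := by positivity
  have hT : 1 ≤ d0 (2 + 1 / d3 0) := by
    refine le_trans (le_of_eq ?_) (g0 _ (by linarith))
    field_simp
    ring
  exact aux_blowup e0 e1 e2 e3 (T := 2 + 1 / d3 0) (fun t ht => (all t (by linarith)).2.1)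
    (fun t ht => (all t (by linarith)).2.2.1) (fun t ht => (pos t (by linarith)).le) hT hq hc
    (fun t ht h1 => (hgq _ h1).trans (hd4g t (by linarith)))

lemma core2 {n : ℕ} (hn : 5 ≤ n) {g : ℝ → ℝ} (hg : CondG n g)
    {A B : ℝ} (hA : 0 ≤ A) (hB : 0 ≤ B)
    {V0 V1 V2 V3 W0 W1 W2 W3 : ℝ → ℝ} (hV : Sol4 A B g V0 V1 V2 V3)
    (hW : Sol4 A B g W0 W1 W2 W3) (h0 : V0 0 = W0 0) (h1 : V1 0 = W1 0) (h2 : V2 0 = W2 0)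
    (h3 : V3 0 = W3 0) (T : ℝ) (hT : 0 ≤ T) : V0 T = W0 T := by
  have cV : Continuous V0 := continuous_iff_continuousAt.2 fun t => (hV.e0 t).continuousAt
  have cW : Continuous W0 := continuous_iff_continuousAt.2 fun t => (hW.e0 t).continuousAt
  obtain ⟨M1, hM1⟩ := (isCompact_Icc (a := 0) (b := T)).exists_bound_of_continuousOn cV.continuousOn
  obtain ⟨M2, hM2⟩ := (isCompact_Icc (a := 0) (b := T)).exists_bound_of_continuousOn cW.continuousOn
  obtain ⟨L, hL0, hL⟩ := aux_lip hn hg (M := |M1| + |M2| + 1) (by positivity)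
  set K := 2 + A + B + L with hK
  have hd : ∀ t, HasDerivAt (fun t => -((V0 t - W0 t) ^ 2 + (V1 t - W1 t) ^ 2 + (V2 t - W2 t) ^ 2
      + (V3 t - W3 t) ^ 2) * Real.exp (-K * t)) _ t := fun t =>
    ((((((hV.e0 t).sub (hW.e0 t)).pow 2).add (((hV.e1 t).sub (hW.e1 t)).pow 2)).add
      (((hV.e2 t).sub (hW.e2 t)).pow 2)).add (((hV.e3 t).sub (hW.e3 t)).pow 2)).neg.mul
      (((hasDerivAt_id t).const_mul (-K)).exp)
  have := aux_mono hT hd (by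
    intro t ht
    have l := hL (V0 t) ⟨hV.nn t, by
      have := (le_abs_self _).trans (hM1 t ht)
      linarith [le_abs_self M1, abs_nonneg M2]⟩ (W0 t) ⟨hW.nn t, by
      have := (le_abs_self _).trans (hM2 t ht)
      linarith [le_abs_self M2, abs_nonneg M1]⟩
    simp only [Pi.add_apply, Pi.pow_apply, Pi.sub_apply, Pi.neg_apply, id]
    generalize V0 t = v0 at *
    generalize W0 t = w0 at *
    have key : ∀ x0 x1 x2 x3 G : ℝ, |G| ≤ L * |x0| →
        2 * x0 * x1 + 2 * x1 * x2 + 2 * x2 * x3 + 2 * x3 * (A * x2 - B * x0 + G) ≤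
        K * (x0 ^ 2 + x1 ^ 2 + x2 ^ 2 + x3 ^ 2) := by
      intro x0 x1 x2 x3 G hG
      have b1 : 2 * x3 * G ≤ L * (x0 ^ 2 + x3 ^ 2) := by
        calc 2 * x3 * G ≤ |2 * x3 * G| := le_abs_self _
          _ = 2 * |x3| * |G| := by rw [abs_mul, abs_mul]; norm_num
          _ ≤ 2 * |x3| * (L * |x0|) := by gcongr
          _ = L * (2 * |x0| * |x3|) := by ring
          _ ≤ L * (x0 ^ 2 + x3 ^ 2) := by
            gcongr
            have := two_mul_le_add_sq |x0| |x3|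
            simpa using this
      have b2 := mul_nonneg hA (sq_nonneg (x3 - x2))
      have b3 := mul_nonneg hB (sq_nonneg (x3 + x0))
      have b4 := mul_nonneg hA (add_nonneg (sq_nonneg x0) (sq_nonneg x1))
      have b5 := mul_nonneg hB (add_nonneg (sq_nonneg x1) (sq_nonneg x2))
      have b6 := mul_nonneg hL0 (add_nonneg (sq_nonneg x1) (sq_nonneg x2))
      rw [hK]
      nlinarith [sq_nonneg (x0 - x1), sq_nonneg (x1 - x2), sq_nonneg (x2 - x3), sq_nonneg x0,
        sq_nonneg x3]
    have k := key (v0 - w0) (V1 t - W1 t) (V2 t - W2 t) (V3 t - W3 t) (g v0 - g w0) l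
    have := mul_nonneg (sub_nonneg.2 k) (Real.exp_pos (-K * t)).le
    refine this.trans (le_of_eq ?_)
    norm_num
    ring)
  simp only [h0, h1, h2, h3, sub_self] at this
  norm_num at this
  have h5 : (V0 T - W0 T) ^ 2 + (V1 T - W1 T) ^ 2 + (V2 T - W2 T) ^ 2 + (V3 T - W3 T) ^ 2 ≤ 0 := by
    by_contra! hc
    have := mul_pos hc (Real.exp_pos (-(K * T)))
    linarith
  have h6 : (V0 T - W0 T) ^ 2 = 0 := le_antisymm (by
    linarith [sq_nonneg (V1 T - W1 T), sq_nonneg (V2 T - W2 T), sq_nonneg (V3 T - W3 T)])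
    (sq_nonneg _)
  have := pow_eq_zero_iff (two_ne_zero) |>.1 h6
  linarith

theorem stmt_11 (n : ℕ) (hn : 5 ≤ n) (g : ℝ → ℝ) (hg : CondG n g)
    (A B : ℝ) (hA : A = ((n : ℝ) * ((n : ℝ) - 4) + 8) / 2)
    (hB : B = (n : ℝ) ^ 2 * ((n : ℝ) - 4) ^ 2 / 16)
    (v : ℝ → ℝ) (hv4 : ContDiff ℝ 4 v) (hvnn : ∀ t, 0 ≤ v t) (hvsol : IsSol A B g v)
    (t₀ : ℝ) (ht₀ : deriv v t₀ = 0) :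
    ∀ t : ℝ, v (t₀ + t) = v (t₀ - t) := by
  have hn' : (5:ℝ) ≤ n := by exact_mod_cast hn
  have hder : ∀ k : ℕ, k < 4 → ∀ t, HasDerivAt (iteratedDeriv k v) (iteratedDeriv (k + 1) v t) t := by
    intro k hk t
    rw [iteratedDeriv_succ]
    exact ((hv4.differentiable_iteratedDeriv k (by exact_mod_cast hk)) t).hasDerivAt
  have d0 : ∀ t, HasDerivAt v (iteratedDeriv 1 v t) t := fun t => by
    simpa using hder 0 (by norm_num) t
  have d3 : ∀ t, HasDerivAt (iteratedDeriv 3 v)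
      (A * iteratedDeriv 2 v t - B * v t + g (v t)) t := fun t => by
    have := hder 3 (by norm_num) t
    convert this using 1
    have := hvsol t
    norm_num
    linarith
  have hV : Sol4 A B g (fun t => v (t₀ + t)) (fun t => iteratedDeriv 1 v (t₀ + t))
      (fun t => iteratedDeriv 2 v (t₀ + t)) (fun t => iteratedDeriv 3 v (t₀ + t)) :=
    { nn := fun t => hvnn _
      e0 := fun t => (d0 (t₀ + t)).comp_const_add t₀ t
      e1 := fun t => (hder 1 (by norm_num) (t₀ + t)).comp_const_add t₀ t
      e2 := fun t => (hder 2 (by norm_num) (t₀ + t)).comp_const_add t₀ t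
      e3 := fun t => (d3 (t₀ + t)).comp_const_add t₀ t }
  have hW : Sol4 A B g (fun t => v (t₀ - t)) (fun t => -iteratedDeriv 1 v (t₀ - t))
      (fun t => iteratedDeriv 2 v (t₀ - t)) (fun t => -iteratedDeriv 3 v (t₀ - t)) :=
    { nn := fun t => hvnn _
      e0 := fun t => (d0 (t₀ - t)).comp_const_sub t₀ t
      e1 := fun t => by
        have := ((hder 1 (by norm_num) (t₀ - t)).comp_const_sub t₀ t).neg
        rw [neg_neg] at this
        exact this
      e2 := fun t => (hder 2 (by norm_num) (t₀ - t)).comp_const_sub t₀ t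
      e3 := fun t => by
        have := ((d3 (t₀ - t)).comp_const_sub t₀ t).neg
        rw [neg_neg] at this
        exact this }
  have h1 : iteratedDeriv 1 v t₀ = 0 := by rw [iteratedDeriv_one]; exact ht₀
  have h3 : iteratedDeriv 3 v t₀ = 0 := by
    rcases lt_trichotomy (iteratedDeriv 3 v t₀) 0 with h | h | h
    · exact (core1 hn hg hA hB hW hV (by simp) (by simp [h1]) (by simp)
        (by simp only [add_zero, sub_zero]; linarith)).elim
    · exact h
    · exact (core1 hn hg hA hB hV hW (by simp) (by simp [h1]) (by simp)
        (by simp only [add_zero, sub_zero]; linarith)).elim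
  have hA0 : 0 ≤ A := by
    rw [hA]
    have : 0 ≤ (n:ℝ) * (n - 4) := mul_nonneg (by linarith) (by linarith)
    linarith
  have hB0 : 0 ≤ B := by rw [hB]; positivity
  have main : ∀ t, 0 ≤ t → v (t₀ + t) = v (t₀ - t) := fun t ht =>
    core2 hn hg hA0 hB0 hV hW (by simp) (by simp [h1]) (by simp) (by simp [h3]) t ht
  intro t
  rcases le_total 0 t with ht | ht
  · exact main t ht
  · have := main (-t) (by linarith)
    rw [sub_neg_eq_add, ← sub_eq_add_neg] at this
    exact this.symm
end
end

section
/- Let v : ℝ → ℝ be a C⁴ positive solution of the ODE v''''(t) − A·v''(t) + B·v(t) = g(v(t)) with v'(0) = 0 and v'''(0) = 0. Assume that either (v(0) ≥ a₀ and v''(0) ≥ 0) or (v(0) ≤ a₀ and v''(0) ≤ 0). Then v is the constant function a₀. -/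
open Real Filter Set

noncomputable section

/-- Monotonicity from a nonnegative derivative in the interior. -/
lemma aux_mono_s12 {f f' : ℝ → ℝ} (hf : ∀ t, HasDerivAt f (f' t) t) {s T : ℝ} (hsT : s ≤ T)
    (h : ∀ t, s < t → t < T → 0 ≤ f' t) : f s ≤ f T := by
  have := monotoneOn_of_deriv_nonneg (convex_Icc s T)
    (fun t _ => (hf t).continuousAt.continuousWithinAt)
    (fun t _ => (hf t).differentiableAt.differentiableWithinAt)
    (fun t ht => by
      rw [interior_Icc] at ht
      rw [(hf t).deriv]; exact h t ht.1 ht.2)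
  exact this (left_mem_Icc.2 hsT) (right_mem_Icc.2 hsT) hsT

lemma aux_strict {f f' : ℝ → ℝ} (hf : ∀ t, HasDerivAt f (f' t) t) {s T : ℝ} (hsT : s < T)
    (h : ∀ t, s < t → t < T → 0 < f' t) : f s < f T := by
  have := strictMonoOn_of_deriv_pos (convex_Icc s T)
    (fun t _ => (hf t).continuousAt.continuousWithinAt)
    (fun t ht => by
      rw [interior_Icc] at ht
      rw [(hf t).deriv]; exact h t ht.1 ht.2)
  exact this (left_mem_Icc.2 hsT.le) (right_mem_Icc.2 hsT.le) hsT

lemma aux_stay {A : ℝ} (hA : 0 < A) {w0 w1 w2 w3 w4 : ℝ → ℝ}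
    (d0 : ∀ t, HasDerivAt w0 (w1 t) t) (d1 : ∀ t, HasDerivAt w1 (w2 t) t)
    (d2 : ∀ t, HasDerivAt w2 (w3 t) t) (d3 : ∀ t, HasDerivAt w3 (w4 t) t)
    (hw : ∀ t, 0 ≤ w0 t → A * w2 t ≤ w4 t) {s : ℝ} (i0 : 0 ≤ w0 s) (i1 : 0 ≤ w1 s)
    (i2 : 0 < w2 s) (i3 : 0 ≤ w3 s) :
    ∀ t, s ≤ t → 0 ≤ w0 t ∧ 0 ≤ w1 t ∧ w2 s ≤ w2 t ∧ 0 ≤ w3 t := by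
  have key : ∀ T, s ≤ T → (∀ t, s < t → t < T → 0 < w2 t) →
      0 ≤ w0 T ∧ 0 ≤ w1 T ∧ w2 s ≤ w2 T ∧ 0 ≤ w3 T := by
    intro T hT hp
    have a1 : ∀ t, s ≤ t → t ≤ T → 0 ≤ w1 t := fun t h h' =>
      i1.trans (aux_mono_s12 d1 h fun x hx hx' => (hp x hx (hx'.trans_le h')).le)
    have a0 : ∀ t, s ≤ t → t ≤ T → 0 ≤ w0 t := fun t h h' =>
      i0.trans (aux_mono_s12 d0 h fun x hx hx' => a1 x hx.le (hx'.le.trans h'))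
    have a3 : ∀ t, s ≤ t → t ≤ T → 0 ≤ w3 t := fun t h h' =>
      i3.trans (aux_mono_s12 d3 h fun x hx hx' =>
        (mul_pos hA (hp x hx (hx'.trans_le h'))).le.trans (hw x (a0 x hx.le (hx'.le.trans h'))))
    exact ⟨a0 T hT le_rfl, a1 T hT le_rfl,
      aux_mono_s12 d2 hT fun x hx hx' => a3 x hx.le hx'.le, a3 T hT le_rfl⟩
  have pos : ∀ t, s ≤ t → 0 < w2 t := by
    by_contra! hc
    obtain ⟨T, hT, hT2⟩ := hc
    have c2 : Continuous w2 := continuous_iff_continuousAt.2 fun t => (d2 t).continuousAt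
    have hK : IsCompact (Icc s T ∩ {t | w2 t ≤ 0}) :=
      isCompact_Icc.inter_right (isClosed_le c2 continuous_const)
    obtain ⟨t1, ⟨ht1, ht1'⟩, hmin⟩ := hK.exists_isLeast ⟨T, ⟨hT, le_rfl⟩, hT2⟩
    have := (key t1 ht1.1 fun t h h' => by
      by_contra! hh
      exact absurd (hmin ⟨⟨h.le, h'.le.trans ht1.2⟩, hh⟩) (not_le.2 h')).2.2.1
    simp only [mem_ofPred_eq] at ht1'
    linarith
  intro t ht
  exact key t ht fun x hx _ => pos x hx.le

lemma aux_start {A : ℝ} (hA : 0 < A) {w0 w1 w2 w3 w4 : ℝ → ℝ}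
    (d0 : ∀ t, HasDerivAt w0 (w1 t) t) (d1 : ∀ t, HasDerivAt w1 (w2 t) t)
    (d2 : ∀ t, HasDerivAt w2 (w3 t) t) (d3 : ∀ t, HasDerivAt w3 (w4 t) t)
    (c4 : Continuous w4)
    (hw : ∀ t, 0 ≤ w0 t → A * w2 t ≤ w4 t) (hw' : ∀ t, 0 < w0 t → A * w2 t < w4 t)
    (i0 : 0 ≤ w0 0) (i1 : w1 0 = 0)
    (i2 : 0 ≤ w2 0) (i3 : w3 0 = 0) (hne : ¬ (w0 0 = 0 ∧ w2 0 = 0)) :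
    ∃ s d : ℝ, 0 < d ∧ ∀ t, s ≤ t → 0 ≤ w0 t ∧ 0 ≤ w1 t ∧ d ≤ w2 t ∧ 0 ≤ w3 t := by
  rcases i2.lt_or_eq with h | h
  · exact ⟨0, w2 0, h, aux_stay hA d0 d1 d2 d3 hw i0 i1.ge h i3.ge⟩
  · have p0 : 0 < w0 0 := lt_of_le_of_ne i0 fun h' => hne ⟨h'.symm, h.symm⟩
    have p4 : 0 < w4 0 := by have := hw' 0 p0; rw [← h] at this; simpa using this
    obtain ⟨e, he, hb⟩ := Metric.eventually_nhds_iff.1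
      (c4.continuousAt.eventually (lt_mem_nhds p4) : ∀ᶠ x in nhds 0, 0 < w4 x)
    have q4 : ∀ t, 0 < t → t < e → 0 < w4 t := fun t h1 h2 => hb (by
      rw [Real.dist_eq, sub_zero, abs_of_pos h1]; exact h2)
    have q3 : ∀ t, 0 < t → t < e → 0 < w3 t := fun t h1 h2 => by
      have := aux_strict d3 h1 fun x hx hx' => q4 x hx (hx'.trans h2)
      linarith
    have q2 : ∀ t, 0 < t → t < e → 0 < w2 t := fun t h1 h2 => by
      have := aux_strict d2 h1 fun x hx hx' => q3 x hx (hx'.trans h2)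
      linarith
    have q1 : ∀ t, 0 < t → t < e → 0 < w1 t := fun t h1 h2 => by
      have := aux_strict d1 h1 fun x hx hx' => q2 x hx (hx'.trans h2)
      linarith
    have q0 : ∀ t, 0 < t → t < e → 0 < w0 t := fun t h1 h2 => by
      have := aux_strict d0 h1 fun x hx hx' => q1 x hx (hx'.trans h2)
      linarith
    have u : 0 < e / 2 := by linarith
    have u' : e / 2 < e := by linarith
    exact ⟨e / 2, w2 (e / 2), q2 _ u u', aux_stay hA d0 d1 d2 d3 hw (q0 _ u u').le
      (q1 _ u u').le (q2 _ u u') (q3 _ u u').le⟩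

/-- Quantitative comparison. -/
lemma aux_cmp {F F' G G' : ℝ → ℝ} {s k : ℝ} (hk : 0 < k)
    (dF : ∀ t, HasDerivAt F (F' t) t) (dG : ∀ t, HasDerivAt G (G' t) t)
    (hG' : ∀ t, s ≤ t → 0 ≤ G' t) (hG : ∀ t, s ≤ t → 0 < G t) (hF : 0 < F s)
    (h : ∀ t, s ≤ t → k * G' t ≤ F' t) : ∃ k' > 0, ∀ t, s ≤ t → k' * G t ≤ F t := by
  have hGs := hG s le_rfl
  refine ⟨min k (F s / G s), lt_min hk (div_pos hF hGs), fun t ht => ?_⟩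
  set m := min k (F s / G s)
  have h1 : F s - m * G s ≤ F t - m * G t :=
    aux_mono_s12 (f := fun t => F t - m * G t) (f' := fun t => F' t - m * G' t)
      (fun x => (dF x).sub ((dG x).const_mul m)) ht fun x hx _ => by
        have := h x hx.le
        have := mul_le_mul_of_nonneg_right (min_le_left k (F s / G s)) (hG' x hx.le)
        show 0 ≤ F' x - m * G' x
        linarith
  have h2 : m * G s ≤ F s := by
    have := mul_le_mul_of_nonneg_right (min_le_right k (F s / G s)) hGs.le
    rwa [div_mul_cancel₀ _ hGs.ne'] at this
  linarith

lemma aux_blowup_s12 {w0 w1 w2 w3 w4 : ℝ → ℝ} {q k s : ℝ} (hq : 1 < q) (hk : 0 < k)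
    (d0 : ∀ t, HasDerivAt w0 (w1 t) t) (d1 : ∀ t, HasDerivAt w1 (w2 t) t)
    (d2 : ∀ t, HasDerivAt w2 (w3 t) t) (d3 : ∀ t, HasDerivAt w3 (w4 t) t)
    (p0 : ∀ t, 0 < w0 t) (p1 : ∀ t, s ≤ t → 0 < w1 t) (p2 : ∀ t, s ≤ t → 0 < w2 t)
    (p3 : ∀ t, s ≤ t → 0 < w3 t) (h : ∀ t, s ≤ t → k * w0 t ^ q ≤ w4 t) : False := by
  have dp : ∀ r : ℝ, ∀ t, HasDerivAt (fun t => w0 t ^ (r + 1)) ((r + 1) * w0 t ^ r * w1 t) t := by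
    intro r t
    have := (d0 t).rpow_const (p := r + 1) (Or.inl (p0 t).ne')
    rw [add_sub_cancel_right] at this
    convert this using 1; ring
  have step : ∀ (r k : ℝ) (F F' : ℝ → ℝ), 0 < r + 1 → 0 < k → (∀ t, HasDerivAt F (F' t) t) →
      0 < F s → (∀ t, s ≤ t → k * (w0 t ^ r) * w1 t ≤ F' t) →
      ∃ k' > 0, ∀ t, s ≤ t → k' * w0 t ^ (r + 1) ≤ F t := by
    intro r k F F' hr hk dF hF hh
    refine aux_cmp (k := k / (r + 1)) (by positivity) dF (dp r) (fun t ht => ?_) (fun t _ => ?_) hF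
      (fun t ht => ?_)
    · have := p1 t ht; have := p0 t; positivity
    · have := p0 t; positivity
    · refine le_trans (le_of_eq ?_) (hh t ht)
      field_simp
  obtain ⟨k1, hk1, H1⟩ := step q k (fun t => w3 t * w1 t) _ (by linarith) hk
    (fun t => (d3 t).mul (d1 t)) (mul_pos (p3 s le_rfl) (p1 s le_rfl)) (fun t ht => by
      have a := mul_le_mul_of_nonneg_right (h t ht) (p1 t ht).le
      have b := mul_pos (p3 t ht) (p2 t ht)
      linarith)
  obtain ⟨k2, hk2, H2⟩ := step (q + 1) k1 (fun t => w2 t * (w1 t * w1 t)) _ (by linarith) hk1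
    (fun t => (d2 t).mul ((d1 t).mul (d1 t)))
    (mul_pos (p2 s le_rfl) (mul_pos (p1 s le_rfl) (p1 s le_rfl))) (fun t ht => by
      have a := mul_le_mul_of_nonneg_right (H1 t ht) (p1 t ht).le
      have b := mul_pos (p2 t ht) (mul_pos (p2 t ht) (p1 t ht))
      linarith)
  obtain ⟨k3, hk3, H3⟩ := step (q + 1 + 1) (4 * k2) (fun t => w1 t ^ 4) _ (by linarith)
    (by linarith)
    (fun t => (d1 t).pow 4)
    (pow_pos (p1 s le_rfl) 4) (fun t ht => by
      have a := mul_le_mul_of_nonneg_right (H2 t ht) (p1 t ht).le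
      refine le_trans (le_of_eq ?_) (le_trans (mul_le_mul_of_nonneg_left a (by norm_num : (0 : ℝ) ≤ 4)) (le_of_eq ?_))
      · ring
      · norm_num; ring)
  -- first order inequality
  set p : ℝ := (q + 1 + 1 + 1) / 4 with hp
  have hp1 : 0 < p - 1 := by rw [hp]; linarith
  have H4 : ∀ t, s ≤ t → k3 ^ (1 / 4 : ℝ) * w0 t ^ p ≤ w1 t := by
    intro t ht
    have h0 := p0 t
    refine le_of_pow_le_pow_left₀ (n := 4) (by norm_num) (p1 t ht).le (le_trans (le_of_eq ?_) (H3 t ht))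
    rw [mul_pow, ← Real.rpow_natCast, ← Real.rpow_natCast, ← Real.rpow_mul hk3.le,
      ← Real.rpow_mul h0.le, hp]
    norm_num
  set m := k3 ^ (1 / 4 : ℝ) with hm
  have hm0 : 0 < m := by positivity
  have dz : ∀ t, HasDerivAt (fun t => -(w0 t ^ (1 - p)) - (p - 1) * m * t)
      ((p - 1) * (w0 t ^ (-p) * w1 t) - (p - 1) * m) t := by
    intro t
    have := (dp (-p) t).neg.sub ((hasDerivAt_id t).const_mul ((p - 1) * m))
    rw [show -p + 1 = 1 - p by ring] at this
    exact this.congr_deriv (by ring)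
  have mono : ∀ T, s ≤ T → -(w0 s ^ (1 - p)) - (p - 1) * m * s ≤
      -(w0 T ^ (1 - p)) - (p - 1) * m * T := fun T hT => aux_mono_s12 dz hT fun x hx _ => by
    have h0 := p0 x
    have a : w0 x ^ (-p) * (m * w0 x ^ p) ≤ w0 x ^ (-p) * w1 x :=
      mul_le_mul_of_nonneg_left (H4 x hx.le) (by positivity)
    have b : w0 x ^ (-p) * w0 x ^ p = 1 := by
      rw [← Real.rpow_add h0]; simp
    have c : m ≤ w0 x ^ (-p) * w1 x := by
      calc m = w0 x ^ (-p) * (m * w0 x ^ p) := by linear_combination (-m) * b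
        _ ≤ _ := a
    have := mul_le_mul_of_nonneg_left c hp1.le
    linarith
  have hs0 := p0 s
  have hC : 0 < w0 s ^ (1 - p) := by positivity
  have hpm : 0 < (p - 1) * m := by positivity
  have := mono (s + w0 s ^ (1 - p) / ((p - 1) * m)) (by
    have : 0 < w0 s ^ (1 - p) / ((p - 1) * m) := by positivity
    linarith)
  rw [mul_add, mul_div_cancel₀ _ hpm.ne'] at this
  have h0 := p0 (s + w0 s ^ (1 - p) / ((p - 1) * m))
  have : 0 < w0 (s + w0 s ^ (1 - p) / ((p - 1) * m)) ^ (1 - p) := by positivity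
  linarith

/-- Uniqueness by a Gronwall-type argument, forward in time. -/
lemma aux_unique {w0 w1 w2 w3 w4 : ℝ → ℝ} {T L : ℝ} (hT : 0 ≤ T) (hL : 0 ≤ L)
    (d0 : ∀ t, HasDerivAt w0 (w1 t) t) (d1 : ∀ t, HasDerivAt w1 (w2 t) t)
    (d2 : ∀ t, HasDerivAt w2 (w3 t) t) (d3 : ∀ t, HasDerivAt w3 (w4 t) t)
    (i0 : w0 0 = 0) (i1 : w1 0 = 0) (i2 : w2 0 = 0) (i3 : w3 0 = 0)
    (h : ∀ t, 0 ≤ t → t ≤ T → |w4 t| ≤ L * (|w0 t| + |w2 t|)) : w0 T = 0 := by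
  set E : ℝ → ℝ := fun t => w0 t ^ 2 + w1 t ^ 2 + w2 t ^ 2 + w3 t ^ 2 with hE
  set E' : ℝ → ℝ := fun t => 2 * (w0 t * w1 t + w1 t * w2 t + w2 t * w3 t + w3 t * w4 t) with hE'
  set C : ℝ := 2 + 2 * L with hC
  have dE : ∀ t, HasDerivAt E (E' t) t := fun t => by
    have := ((((d0 t).pow 2).add ((d1 t).pow 2)).add ((d2 t).pow 2)).add ((d3 t).pow 2)
    exact this.congr_deriv (by simp only [hE']; norm_num; ring)
  have bd : ∀ t, 0 ≤ t → t ≤ T → E' t ≤ C * E t := by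
    intro t h0 h1
    have a : w3 t * w4 t ≤ |w3 t| * (L * (|w0 t| + |w2 t|)) :=
      (le_abs_self _).trans (by rw [abs_mul]; exact mul_le_mul_of_nonneg_left (h t h0 h1) (abs_nonneg _))
    have b : |w3 t| * (|w0 t| + |w2 t|) ≤ w0 t ^ 2 + w2 t ^ 2 + w3 t ^ 2 := by
      rw [← sq_abs (w0 t), ← sq_abs (w2 t), ← sq_abs (w3 t)]
      nlinarith [sq_nonneg (|w3 t| - 2 * |w0 t|), sq_nonneg (|w3 t| - 2 * |w2 t|),
        sq_nonneg (|w3 t| - |w0 t|), sq_nonneg (|w3 t| - |w2 t|), sq_nonneg (|w0 t|)]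
    have b' := mul_le_mul_of_nonneg_left b hL
    simp only [hE, hE', hC]
    nlinarith [sq_nonneg (w0 t - w1 t), sq_nonneg (w1 t - w2 t), sq_nonneg (w2 t - w3 t),
      mul_nonneg hL (sq_nonneg (w1 t)), sq_nonneg (w0 t), sq_nonneg (w3 t)]
  have dz : ∀ t, HasDerivAt (fun t => -(E t * Real.exp (-C * t)))
      ((C * E t - E' t) * Real.exp (-C * t)) t := fun t => by
    have := ((dE t).mul (((hasDerivAt_id t).const_mul (-C)).exp)).neg
    exact this.congr_deriv (by simp only [id]; ring)
  have := aux_mono_s12 dz hT fun t h0 h1 => mul_nonneg (sub_nonneg.2 (bd t h0.le h1.le)) (Real.exp_pos _).le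
  have e0 : E 0 = 0 := by simp [hE, i0, i1, i2, i3]
  rw [e0] at this
  have hexp := Real.exp_pos (-C * T)
  have eT : E T ≤ 0 := by
    by_contra! hh
    have := mul_pos hh hexp
    linarith
  simp only [hE] at eT
  have : w0 T ^ 2 = 0 := by nlinarith [sq_nonneg (w0 T), sq_nonneg (w1 T), sq_nonneg (w2 T), sq_nonneg (w3 T)]
  simpa using this

theorem stmt_12 (n : ℕ) (hn : 5 ≤ n) (g : ℝ → ℝ) (hg : CondG n g)
    (A B : ℝ) (hA : A = ((n : ℝ) * ((n : ℝ) - 4) + 8) / 2)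
    (hB : B = (n : ℝ) ^ 2 * ((n : ℝ) - 4) ^ 2 / 16)
    (a₀ : ℝ) (ha₀ : 0 < a₀) (hga₀ : g a₀ = B * a₀)
    (v : ℝ → ℝ) (hv4 : ContDiff ℝ 4 v) (hvpos : ∀ t, 0 < v t) (hvsol : IsSol A B g v)
    (h1 : deriv v 0 = 0) (h3 : iteratedDeriv 3 v 0 = 0)
    (hcase : (a₀ ≤ v 0 ∧ 0 ≤ iteratedDeriv 2 v 0) ∨ (v 0 ≤ a₀ ∧ iteratedDeriv 2 v 0 ≤ 0)) :
    ∀ t, v t = a₀ := by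
  have hn' : (5 : ℝ) ≤ n := by exact_mod_cast hn
  have hApos : 0 < A := by rw [hA]; nlinarith
  have hBpos : 0 < B := by
    rw [hB]
    have : (0 : ℝ) < (n : ℝ) - 4 := by linarith
    positivity
  obtain ⟨gC, gpos, -, gder, -, ⟨q, c, hq, hc, hgq⟩, -⟩ := hg
  have gd : ∀ t > 0, HasDerivAt g (deriv g t) t := fun t ht =>
    ((gC.differentiableOn (by norm_num)).differentiableAt (Ioi_mem_nhds ht)).hasDerivAt
  -- monotonicity of `g t / t`
  have ratio : StrictMonoOn (fun t => g t / t) (Ioi 0) := by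
    have hd : ∀ t > 0, HasDerivAt (fun t => g t / t) ((deriv g t * t - g t * 1) / t ^ 2) t :=
      fun t ht => (gd t ht).div (hasDerivAt_id t) (ne_of_gt ht)
    refine strictMonoOn_of_deriv_pos (convex_Ioi 0)
      (fun t ht => (hd t ht).continuousAt.continuousWithinAt) (fun t ht => ?_)
    rw [interior_Ioi] at ht
    have ht' : 0 < t := ht
    rw [(hd t ht).deriv]
    have := (gder t ht).1
    rw [div_lt_iff₀ ht'] at this
    apply div_pos _ (by positivity)
    linarith
  have ra : g a₀ / a₀ = B := by rw [hga₀]; field_simp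
  have gt1 : ∀ x, a₀ < x → B * x < g x := fun x hx => by
    have hx0 : 0 < x := ha₀.trans hx
    have : g a₀ / a₀ < g x / x := ratio ha₀ hx0 hx
    rw [ra, lt_div_iff₀ hx0] at this
    exact this
  have lt1 : ∀ x, 0 < x → x < a₀ → g x < B * x := fun x hx0 hx => by
    have : g x / x < g a₀ / a₀ := ratio hx0 ha₀ hx
    rw [ra, div_lt_iff₀ hx0] at this
    exact this
  -- derivatives
  have dv : ∀ k : ℕ, k < 4 → ∀ t, HasDerivAt (iteratedDeriv k v) (iteratedDeriv (k + 1) v t) t := by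
    intro k hk t
    rw [iteratedDeriv_succ]
    exact (hv4.differentiable_iteratedDeriv k (by exact_mod_cast hk) t).hasDerivAt
  have d0 : ∀ t, HasDerivAt v (iteratedDeriv 1 v t) t := by
    have := dv 0 (by norm_num); simpa [iteratedDeriv_zero] using this
  have d1 : ∀ t, HasDerivAt (iteratedDeriv 1 v) (iteratedDeriv 2 v t) t := dv 1 (by norm_num)
  have d2 : ∀ t, HasDerivAt (iteratedDeriv 2 v) (iteratedDeriv 3 v t) t := dv 2 (by norm_num)
  have d3 : ∀ t, HasDerivAt (iteratedDeriv 3 v) (iteratedDeriv 4 v t) t := dv 3 (by norm_num)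
  have c4 : Continuous (iteratedDeriv 4 v) := hv4.continuous_iteratedDeriv 4 le_rfl
  have cv : Continuous v := hv4.continuous
  have i1 : iteratedDeriv 1 v 0 = 0 := by rw [iteratedDeriv_one]; exact h1
  have sol : ∀ t, iteratedDeriv 4 v t = A * iteratedDeriv 2 v t + (g (v t) - B * v t) := fun t => by
    have := hvsol t; linarith
  by_cases hne : v 0 = a₀ ∧ iteratedDeriv 2 v 0 = 0
  · -- uniqueness
    obtain ⟨e0, e2⟩ := hne
    intro T
    have hlip : ∃ L : ℝ, 0 ≤ L ∧ ∀ t, |t| ≤ |T| → |g (v t) - B * v t| ≤ L * |v t - a₀| := by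
      have hK : IsCompact (Set.image v (Icc (-|T|) |T|)) := isCompact_Icc.image cv
      have hKc : Convex ℝ (Set.image v (Icc (-|T|) |T|)) :=
        (isPreconnected_Icc.image v cv.continuousOn).ordConnected.convex
      have hKpos : Set.image v (Icc (-|T|) |T|) ⊆ Ioi 0 := by
        rintro _ ⟨t, -, rfl⟩; exact hvpos t
      have cg : ContinuousOn (deriv g) (Ioi 0) :=
        gC.continuousOn_deriv_of_isOpen isOpen_Ioi le_rfl
      obtain ⟨C, hC⟩ := hK.exists_bound_of_continuousOn (cg.mono hKpos)
      have hz : a₀ ∈ Set.image v (Icc (-|T|) |T|) := ⟨0, by simp, e0⟩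
      have hC0 : 0 ≤ C := (norm_nonneg _).trans (hC _ hz)
      refine ⟨C + B, by linarith, fun t ht => ?_⟩
      have := hKc.norm_image_sub_le_of_norm_deriv_le
        (fun x hx => (gd x (hKpos hx)).differentiableAt) hC hz
        (mem_image_of_mem v (abs_le.1 ht))
      rw [Real.norm_eq_abs, Real.norm_eq_abs, hga₀] at this
      calc |g (v t) - B * v t| = |(g (v t) - B * a₀) - B * (v t - a₀)| := by congr 1; ring
        _ ≤ |g (v t) - B * a₀| + |B * (v t - a₀)| := abs_sub _ _
        _ ≤ _ := by rw [abs_mul, abs_of_pos hBpos]; linarith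
    obtain ⟨L, hL, hl⟩ := hlip
    have hb : ∀ t, |t| ≤ |T| →
        |iteratedDeriv 4 v t| ≤ (L + A) * (|v t - a₀| + |iteratedDeriv 2 v t|) := fun t ht => by
      rw [sol t]
      have e := abs_add_le (A * iteratedDeriv 2 v t) (g (v t) - B * v t)
      rw [abs_mul, abs_of_pos hApos] at e
      have := hl t ht
      have := mul_nonneg hL (abs_nonneg (iteratedDeriv 2 v t))
      have := mul_nonneg hApos.le (abs_nonneg (v t - a₀))
      linarith
    rcases le_total 0 T with hT | hT
    · have := aux_unique (w0 := fun t => v t - a₀) (L := L + A) hT (by linarith)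
        (fun t => (d0 t).sub_const a₀) d1 d2 d3 (by simp [e0]) i1 e2 h3
        (fun t h h' => hb t (by rwa [abs_of_nonneg h, abs_of_nonneg hT]))
      linarith
    · have r : ∀ {f f' : ℝ → ℝ}, (∀ t, HasDerivAt f (f' t) t) →
          ∀ t, HasDerivAt (fun t => f (-t)) (-f' (-t)) t := fun {f f'} hf t => by
        have := (hf (-t)).scomp t (hasDerivAt_neg t)
        simpa [Function.comp_def] using this
      have r' : ∀ {f f' : ℝ → ℝ}, (∀ t, HasDerivAt f (f' t) t) →
          ∀ t, HasDerivAt (fun t => -f (-t)) (f' (-t)) t := fun {f f'} hf t => by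
        exact (r hf t).neg.congr_deriv (neg_neg _)
      have := aux_unique (w0 := fun t => v (-t) - a₀) (L := L + A) (T := -T) (by linarith)
        (by linarith)
        (fun t => (r d0 t).sub_const a₀) (r' d1) (r d2) (r' d3) (by simp [e0]) (by simp [i1])
        (by simp [e2]) (by simp [h3])
        (fun t h h' => hb (-t) (by rwa [abs_neg, abs_of_nonneg h, abs_of_nonpos hT]))
      simp only [neg_neg] at this
      linarith
  · exfalso
    rcases hcase with ⟨ha, hb⟩ | ⟨ha, hb⟩
    · obtain ⟨s, d, hd, hs⟩ := aux_start hApos (w0 := fun t => v t - a₀)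
        (fun t => (d0 t).sub_const a₀) d1 d2 d3 c4
        (fun t ht => by
          have e := sol t
          rcases (sub_nonneg.1 ht).lt_or_eq with h | h
          · have := gt1 _ h; linarith
          · rw [← h] at e; linarith)
        (fun t ht => by
          have e := sol t
          have := gt1 _ (sub_pos.1 ht); linarith)
        (sub_nonneg.2 ha) i1 hb h3 (fun h => hne ⟨by simpa [sub_eq_zero] using h.1, h.2⟩)
      have g1 : ∀ t, s ≤ t → d * (t - s) ≤ iteratedDeriv 1 v t := fun t ht => by
        have := aux_mono_s12 (f := fun t => iteratedDeriv 1 v t - d * t)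
          (fun t => (d1 t).sub ((hasDerivAt_id t).const_mul d)) ht
          fun x hx _ => by have := (hs x hx.le).2.2.1; linarith
        have := (hs s le_rfl).2.1
        linarith
      have g0 : ∀ t, s + 1 ≤ t → d * (t - (s + 1)) ≤ v t := fun t ht => by
        have := aux_mono_s12 (f := fun t => v t - d * t)
          (fun t => (d0 t).sub ((hasDerivAt_id t).const_mul d)) ht
          fun x hx _ => by
            have := g1 x (by linarith)
            have : d * 1 ≤ d * (x - s) := mul_le_mul_of_nonneg_left (by linarith) hd.le
            linarith
        have := hvpos (s + 1)
        linarith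
      have g3 : ∀ t, s < t → 0 < iteratedDeriv 3 v t := fun t ht => by
        have := aux_strict d3 ht fun x hx _ => by
          have a := hs x hx.le
          have e := sol x
          have : 0 ≤ g (v x) - B * v x := by
            rcases (sub_nonneg.1 a.1).lt_or_eq with h | h
            · have := gt1 _ h; linarith
            · rw [← h]; linarith
          have : 0 < A * iteratedDeriv 2 v x := mul_pos hApos (by linarith)
          linarith
        have := (hs s le_rfl).2.2.2
        linarith
      have lim : Tendsto v atTop atTop := by
        refine tendsto_atTop_mono' atTop ((eventually_ge_atTop (s + 1)).mono g0) ?_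
        exact (tendsto_atTop_add_const_right _ (-(s + 1)) tendsto_id).const_mul_atTop hd
      have lim2 : Tendsto (fun t => v t ^ (q - 1)) atTop atTop :=
        (tendsto_rpow_atTop (by linarith)).comp lim
      obtain ⟨s', hs'⟩ := eventually_atTop.1
        ((lim.eventually_ge_atTop 1).and ((lim2.eventually_ge_atTop (2 * B / c)).and
          (eventually_ge_atTop (s + 1))))
      refine aux_blowup_s12 (s := s') (k := c / 2) hq (by linarith) d0 d1 d2 d3 hvpos ?_ ?_ ?_ ?_
      · intro t ht
        obtain ⟨-, -, h⟩ := hs' t ht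
        have := g1 t (by linarith)
        have : 0 < d * (t - s) := mul_pos hd (by linarith)
        linarith
      · intro t ht
        obtain ⟨-, -, h⟩ := hs' t ht
        have := (hs t (by linarith)).2.2.1
        linarith
      · intro t ht
        obtain ⟨-, -, h⟩ := hs' t ht
        exact g3 t (by linarith)
      · intro t ht
        obtain ⟨hv1, hvq, h⟩ := hs' t ht
        have a := (hs t (by linarith)).2.2.1
        have e := sol t
        have b := hgq _ hv1
        have hp := hvpos t
        have f : v t ^ q = v t ^ (q - 1) * v t := by
          rw [← Real.rpow_add_one hp.ne']; ring_nf
        have : B * v t ≤ c / 2 * v t ^ q := by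
          rw [f]
          rw [div_le_iff₀ hc] at hvq
          have := mul_le_mul_of_nonneg_right hvq hp.le
          linarith
        have : 0 < A * iteratedDeriv 2 v t := mul_pos hApos (by linarith)
        linarith
    · obtain ⟨s, d, hd, hs⟩ := aux_start hApos (w0 := fun t => a₀ - v t)
        (fun t => (d0 t).const_sub a₀) (fun t => (d1 t).neg) (fun t => (d2 t).neg)
        (fun t => (d3 t).neg) c4.neg
        (fun t ht => by
          have e := sol t
          rcases (sub_nonneg.1 ht).lt_or_eq with h | h
          · have := lt1 _ (hvpos t) h
            show A * -iteratedDeriv 2 v t ≤ - iteratedDeriv 4 v t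
            linarith
          · rw [h] at e
            show A * -iteratedDeriv 2 v t ≤ - iteratedDeriv 4 v t
            linarith)
        (fun t ht => by
          have e := sol t
          have := lt1 _ (hvpos t) (sub_pos.1 ht)
          show A * -iteratedDeriv 2 v t < - iteratedDeriv 4 v t
          linarith)
        (sub_nonneg.2 ha) (by simp [i1]) (by simpa using hb) (by simp [h3])
        (fun h => hne ⟨by have := h.1; linarith, by simpa using h.2⟩)
      have g1 : ∀ t, s ≤ t → d * (t - s) ≤ -iteratedDeriv 1 v t := fun t ht => by
        have := aux_mono_s12 (f := fun t => -iteratedDeriv 1 v t - d * t)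
          (fun t => (d1 t).neg.sub ((hasDerivAt_id t).const_mul d)) ht
          fun x hx _ => by have := (hs x hx.le).2.2.1; linarith
        have := (hs s le_rfl).2.1
        linarith
      have g0 : ∀ t, s + 1 ≤ t → v t ≤ v (s + 1) - d * (t - (s + 1)) := fun t ht => by
        have := aux_mono_s12 (f := fun t => -v t - d * t)
          (fun t => (d0 t).neg.sub ((hasDerivAt_id t).const_mul d)) ht
          fun x hx _ => by
            have := g1 x (by linarith)
            have : d * 1 ≤ d * (x - s) := mul_le_mul_of_nonneg_left (by linarith) hd.le
            linarith
        linarith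
      have hp := hvpos (s + 1)
      have : 0 < v (s + 1) / d := by positivity
      have a := g0 (s + 1 + v (s + 1) / d) (by linarith)
      rw [add_sub_cancel_left, mul_div_cancel₀ _ hd.ne', sub_self] at a
      have := hvpos (s + 1 + v (s + 1) / d)
      linarith
end
end

section
/- Let n ≥ 5 be an integer, g a function satisfying conditions (G), and let u be a C⁴ positive function on ℝⁿ \ {0} satisfying Δ²u(x) = |x|^{−(n+4)/2}·g(|x|^{(n−4)/2}·u(x)) for all x ∈ ℝⁿ \ {0}. Fix z ∈ ℝⁿ \ {0}, let z* = z/|z|², and define u_z*(x) = |x|^{−(n−4)}·u(x/|x|² + z) and k_z(x) = |z*|/(|x|·|x + z*|) for x ∈ ℝⁿ \ {0, −z*}. Then u_z* satisfies Δ²u_z*(x) = k_z(x)^{(n+4)/2}·g(k_z(x)^{−(n−4)/2}·u_z*(x)) for all x ∈ ℝⁿ \ {0, −z*}. In particular (the case z → 0), if u solves the equation then so does u*(x) = |x|^{−(n−4)}·u(x/|x|²) with k₀(x) = |x|^{−1}. -/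
open Real Filter Set

noncomputable section

/-- The Laplacian of `f : ℝⁿ → ℝ`, as the sum of the second partial derivatives. -/
def lap (n : ℕ) (f : EuclideanSpace ℝ (Fin n) → ℝ) (x : EuclideanSpace ℝ (Fin n)) : ℝ :=
  ∑ i : Fin n,
    fderiv ℝ (fun y => fderiv ℝ f y (EuclideanSpace.single i 1)) x (EuclideanSpace.single i 1)

/-- The Bilaplacian `Δ² = Δ ∘ Δ`. -/
def bilap (n : ℕ) (f : EuclideanSpace ℝ (Fin n) → ℝ) : EuclideanSpace ℝ (Fin n) → ℝ :=
  lap n (lap n f)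

open scoped Topology

/-- Partial derivative. -/
def pd {n : ℕ} (i : Fin n) (f : EuclideanSpace ℝ (Fin n) → ℝ) (y : EuclideanSpace ℝ (Fin n)) : ℝ :=
  fderiv ℝ f y (EuclideanSpace.single i 1)

/-- Euler operator. -/
def eul {n : ℕ} (f : EuclideanSpace ℝ (Fin n) → ℝ) (y : EuclideanSpace ℝ (Fin n)) : ℝ :=
  fderiv ℝ f y y

/-- Weighted inversion. -/
def kel {n : ℕ} (b : ℝ) (f : EuclideanSpace ℝ (Fin n) → ℝ) (x : EuclideanSpace ℝ (Fin n)) : ℝ :=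
  (‖x‖ ^ 2) ^ b * f ((‖x‖ ^ 2)⁻¹ • x)

lemma lap_eq {n : ℕ} (f : EuclideanSpace ℝ (Fin n) → ℝ) (x : EuclideanSpace ℝ (Fin n)) :
    lap n f x = ∑ i, pd i (pd i f) x := rfl

lemma sum_pd {n : ℕ} (f : EuclideanSpace ℝ (Fin n) → ℝ) (x : EuclideanSpace ℝ (Fin n)) :
    ∑ i, x i * pd i f x = eul f x := by
  have h : x = ∑ i, x i • (EuclideanSpace.single i (1:ℝ)) := by
    ext j
    simp [Finset.sum_apply, Pi.single_apply]
  unfold eul pd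
  have h2 := congrArg (fderiv ℝ f x) h
  rw [map_sum] at h2
  rw [h2]
  simp

lemma hasFDerivAt_kel {n : ℕ} (b : ℝ) {f : EuclideanSpace ℝ (Fin n) → ℝ}
    {x : EuclideanSpace ℝ (Fin n)} (hx : x ≠ 0)
    (hf : DifferentiableAt ℝ f ((‖x‖ ^ 2)⁻¹ • x)) :
    DifferentiableAt ℝ (kel b f) x ∧ ∀ v, fderiv ℝ (kel b f) x v =
      b * (‖x‖ ^ 2) ^ (b - 1) * (2 * inner ℝ x v) * f ((‖x‖ ^ 2)⁻¹ • x) +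
      (‖x‖ ^ 2) ^ b * fderiv ℝ f ((‖x‖ ^ 2)⁻¹ • x)
        ((‖x‖ ^ 2)⁻¹ • v - ((2 * inner ℝ x v) / (‖x‖ ^ 2) ^ 2) • x) := by
  have h0 : ‖x‖ ^ 2 ≠ 0 := by simpa using hx
  have hN : HasFDerivAt (fun x : EuclideanSpace ℝ (Fin n) => ‖x‖ ^ 2)
      (2 • (innerSL ℝ x)) x := (hasStrictFDerivAt_norm_sq x).hasFDerivAt
  have h1 := hN.rpow_const (p := b) (Or.inl h0)
  have h2 : HasFDerivAt (fun x : EuclideanSpace ℝ (Fin n) => (‖x‖ ^ 2)⁻¹) _ x :=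
    (hasDerivAt_inv h0).comp_hasFDerivAt x hN
  have h3 : HasFDerivAt (fun x : EuclideanSpace ℝ (Fin n) => (‖x‖ ^ 2)⁻¹ • x) _ x :=
    h2.smul (hasFDerivAt_id x)
  have h4 := HasFDerivAt.comp (f := fun x : EuclideanSpace ℝ (Fin n) => (‖x‖ ^ 2)⁻¹ • x) x
    hf.hasFDerivAt h3
  have h5 : HasFDerivAt (kel b f) _ x := h1.mul h4
  refine ⟨h5.differentiableAt, fun v => ?_⟩
  rw [h5.fderiv]
  have e : (‖x‖ ^ 2)⁻¹ • v - ((2 * inner ℝ x v) / (‖x‖ ^ 2) ^ 2) • x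
      = (‖x‖ ^ 2)⁻¹ • v + (-((‖x‖ ^ 2) ^ 2)⁻¹ * (2 * inner ℝ x v)) • x := by
    rw [sub_eq_add_neg, ← neg_smul]; congr 2; ring
  rw [e]
  simp
  ring

lemma pd_kel {n : ℕ} (b : ℝ) (i : Fin n) {f : EuclideanSpace ℝ (Fin n) → ℝ}
    {x : EuclideanSpace ℝ (Fin n)} (hx : x ≠ 0)
    (hf : DifferentiableAt ℝ f ((‖x‖ ^ 2)⁻¹ • x)) :
    pd i (kel b f) x = kel (b - 1) (pd i f) x +
      kel b (fun y => y i * (2 * b * f y - 2 * eul f y)) x := by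
  have h0 : 0 < ‖x‖ ^ 2 := by positivity
  rw [pd, (hasFDerivAt_kel b hx hf).2]
  simp only [kel, pd, eul, map_sub, map_smul, PiLp.smul_apply, smul_eq_mul,
    EuclideanSpace.inner_single_right, Real.rpow_sub_one h0.ne']
  simp
  field_simp
  ring

lemma cdiff_pd {n : ℕ} {m k : ℕ} (i : Fin n) {f : EuclideanSpace ℝ (Fin n) → ℝ}
    {x : EuclideanSpace ℝ (Fin n)} (hf : ContDiffAt ℝ k f x) (hm : m + 1 ≤ k) :
    ContDiffAt ℝ m (pd i f) x := by
  have := hf.fderiv_right (m := (m : WithTop ℕ∞)) (by exact_mod_cast hm)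
  exact this.clm_apply contDiffAt_const

lemma cdiff_eul {n : ℕ} {m k : ℕ} {f : EuclideanSpace ℝ (Fin n) → ℝ}
    {x : EuclideanSpace ℝ (Fin n)} (hf : ContDiffAt ℝ k f x) (hm : m + 1 ≤ k) :
    ContDiffAt ℝ m (eul f) x := by
  have := hf.fderiv_right (m := (m : WithTop ℕ∞)) (by exact_mod_cast hm)
  exact this.clm_apply contDiffAt_id

lemma cdiff_lap {n : ℕ} {m k : ℕ} {f : EuclideanSpace ℝ (Fin n) → ℝ}
    {x : EuclideanSpace ℝ (Fin n)} (hf : ContDiffAt ℝ k f x) (hm : m + 2 ≤ k) :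
    ContDiffAt ℝ m (lap n f) x := by
  have : lap n f = fun x => ∑ i, pd i (pd i f) x := by ext x; rfl
  rw [this]
  apply ContDiffAt.sum
  intro i _
  exact cdiff_pd i (cdiff_pd (m := m + 1) i hf hm) le_rfl

lemma cdiff_diff {n : ℕ} {k : ℕ} {f : EuclideanSpace ℝ (Fin n) → ℝ}
    {x : EuclideanSpace ℝ (Fin n)} (hf : ContDiffAt ℝ k f x) (hm : 1 ≤ k) :
    DifferentiableAt ℝ f x := hf.differentiableAt (by exact_mod_cast (by omega : k ≠ 0))

lemma cdiff_ev {n : ℕ} {k : ℕ} {f : EuclideanSpace ℝ (Fin n) → ℝ}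
    {x : EuclideanSpace ℝ (Fin n)} (hf : ContDiffAt ℝ k f x) :
    ∀ᶠ y in 𝓝 x, ContDiffAt ℝ k f y := hf.eventually (by simp)

lemma pd_congr {n : ℕ} {i : Fin n} {f h : EuclideanSpace ℝ (Fin n) → ℝ}
    {x : EuclideanSpace ℝ (Fin n)} (H : f =ᶠ[𝓝 x] h) : pd i f x = pd i h x := by
  rw [pd, pd, H.fderiv_eq]

lemma pd_congr' {n : ℕ} {i : Fin n} {f h : EuclideanSpace ℝ (Fin n) → ℝ}
    {x : EuclideanSpace ℝ (Fin n)} (H : f =ᶠ[𝓝 x] h) : pd i f =ᶠ[𝓝 x] pd i h := by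
  filter_upwards [H.eventuallyEq_nhds] with y hy using pd_congr hy

lemma lap_congr {n : ℕ} {f h : EuclideanSpace ℝ (Fin n) → ℝ}
    {x : EuclideanSpace ℝ (Fin n)} (H : f =ᶠ[𝓝 x] h) : lap n f x = lap n h x := by
  simp only [lap_eq]
  exact Finset.sum_congr rfl fun i _ => pd_congr (pd_congr' H)

lemma pd_add {n : ℕ} {i : Fin n} {f h : EuclideanSpace ℝ (Fin n) → ℝ}
    {x : EuclideanSpace ℝ (Fin n)} (hf : DifferentiableAt ℝ f x) (hh : DifferentiableAt ℝ h x) :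
    pd i (fun x => f x + h x) x = pd i f x + pd i h x := by
  rw [pd, fderiv_fun_add hf hh]; rfl

lemma pd_sub {n : ℕ} {i : Fin n} {f h : EuclideanSpace ℝ (Fin n) → ℝ}
    {x : EuclideanSpace ℝ (Fin n)} (hf : DifferentiableAt ℝ f x) (hh : DifferentiableAt ℝ h x) :
    pd i (fun x => f x - h x) x = pd i f x - pd i h x := by
  rw [pd, fderiv_fun_sub hf hh]; rfl

lemma lap_sub {n : ℕ} {f h : EuclideanSpace ℝ (Fin n) → ℝ}
    {x : EuclideanSpace ℝ (Fin n)} (hf : ContDiffAt ℝ (2:ℕ) f x) (hh : ContDiffAt ℝ (2:ℕ) h x) :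
    lap n (fun x => f x - h x) x = lap n f x - lap n h x := by
  simp only [lap_eq, ← Finset.sum_sub_distrib]
  refine Finset.sum_congr rfl fun i _ => ?_
  rw [← pd_sub (cdiff_diff (cdiff_pd (m := 1) i hf le_rfl) le_rfl)
    (cdiff_diff (cdiff_pd (m := 1) i hh le_rfl) le_rfl)]
  apply pd_congr
  filter_upwards [cdiff_ev hf, cdiff_ev hh] with y h1 h2
  exact pd_sub (cdiff_diff h1 (by norm_num)) (cdiff_diff h2 (by norm_num))

lemma pd_smul {n : ℕ} {i : Fin n} (c : ℝ) {f : EuclideanSpace ℝ (Fin n) → ℝ}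
    {x : EuclideanSpace ℝ (Fin n)} :
    pd i (fun x => c * f x) x = c * pd i f x := by
  rw [pd]
  change fderiv ℝ (c • f) x _ = _
  rw [fderiv_const_smul_field]; rfl

lemma lap_lin {n : ℕ} (c d : ℝ) {f h : EuclideanSpace ℝ (Fin n) → ℝ}
    {x : EuclideanSpace ℝ (Fin n)} (hf : ContDiffAt ℝ (2:ℕ) f x) (hh : ContDiffAt ℝ (2:ℕ) h x) :
    lap n (fun x => c * f x + d * h x) x = c * lap n f x + d * lap n h x := by
  have key : ∀ (c : ℝ) (f : EuclideanSpace ℝ (Fin n) → ℝ), lap n (fun x => c * f x) x = c * lap n f x := by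
    intro c f
    simp only [lap_eq, Finset.mul_sum]
    refine Finset.sum_congr rfl fun i _ => ?_
    have : pd i (fun x => c * f x) = fun x => c * pd i f x := by ext y; exact pd_smul c
    rw [this, pd_smul]
  have := lap_sub (f := fun x => c * f x) (h := fun x => (-d) * h x)
    (contDiffAt_const.mul hf) (contDiffAt_const.mul hh)
  simp only [key] at this
  rw [← sub_neg_eq_add, ← neg_mul, ← this]
  congr 1; ext y; ring

lemma pd_eul {n : ℕ} (i : Fin n) {f : EuclideanSpace ℝ (Fin n) → ℝ}
    {x : EuclideanSpace ℝ (Fin n)} (hf : ContDiffAt ℝ (2:ℕ) f x) :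
    pd i (eul f) x = eul (pd i f) x + pd i f x := by
  have h1 : DifferentiableAt ℝ (fderiv ℝ f) x :=
    (hf.fderiv_right (m := 1) (by norm_num)).differentiableAt (by norm_num)
  have h2 := h1.hasFDerivAt.clm_apply (hasFDerivAt_id x)
  have h3 := h1.hasFDerivAt.clm_apply (hasFDerivAt_const (EuclideanSpace.single i (1:ℝ)) x)
  have hs : IsSymmSndFDerivAt ℝ f x := hf.isSymmSndFDerivAt (by simp)
  have e1 : fderiv ℝ (eul f) x = _ := h2.fderiv
  have e2 : fderiv ℝ (pd i f) x = _ := h3.fderiv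
  rw [pd, e1, eul, e2]
  have := hs.eq (EuclideanSpace.single i (1:ℝ)) x
  simp [this, pd]
  ring

lemma lap_eul {n : ℕ} {f : EuclideanSpace ℝ (Fin n) → ℝ}
    {x : EuclideanSpace ℝ (Fin n)} (hf : ContDiffAt ℝ (3:ℕ) f x) :
    lap n (eul f) x = eul (lap n f) x + 2 * lap n f x := by
  have e : eul (lap n f) x = ∑ i, eul (pd i (pd i f)) x := by
    have : lap n f = fun x => ∑ i, pd i (pd i f) x := by ext x; rfl
    rw [eul, this, fderiv_fun_sum]
    · simp [eul]
    · intro i _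
      exact cdiff_diff (cdiff_pd (m := 1) i (cdiff_pd (m := 2) i hf le_rfl) le_rfl) le_rfl
  rw [e, lap_eq, lap_eq, Finset.mul_sum, ← Finset.sum_add_distrib]
  refine Finset.sum_congr rfl fun i _ => ?_
  have h1 := cdiff_pd (m := 2) i hf le_rfl
  have : pd i (eul f) =ᶠ[𝓝 x] fun y => eul (pd i f) y + pd i f y := by
    filter_upwards [cdiff_ev hf] with y hy
    exact pd_eul i (hy.of_le (by norm_num))
  rw [pd_congr this, pd_add (cdiff_diff (cdiff_eul (m := 1) h1 le_rfl) le_rfl)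
    (cdiff_diff h1 (by norm_num)), pd_eul i h1]
  ring

lemma pd_coord_mul {n : ℕ} (i : Fin n) {h : EuclideanSpace ℝ (Fin n) → ℝ}
    {x : EuclideanSpace ℝ (Fin n)} (hh : DifferentiableAt ℝ h x) :
    DifferentiableAt ℝ (fun y : EuclideanSpace ℝ (Fin n) => y i * h y) x ∧
    pd i (fun y => y i * h y) x = h x + x i * pd i h x ∧
    eul (fun y => y i * h y) x = x i * h x + x i * eul h x := by
  have h1 : HasFDerivAt (fun y : EuclideanSpace ℝ (Fin n) => y i)
    (EuclideanSpace.proj i : EuclideanSpace ℝ (Fin n) →L[ℝ] ℝ) x :=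
    (EuclideanSpace.proj i : EuclideanSpace ℝ (Fin n) →L[ℝ] ℝ).hasFDerivAt
  have h2 := h1.mul hh.hasFDerivAt
  refine ⟨h2.differentiableAt, ?_, ?_⟩
  · rw [pd]
    erw [h2.fderiv]
    simp [pd]; ring
  · rw [eul]
    erw [h2.fderiv]
    simp [eul]; ring

lemma inv_cont {n : ℕ} {x : EuclideanSpace ℝ (Fin n)} (hx : x ≠ 0) :
    ContinuousAt (fun x : EuclideanSpace ℝ (Fin n) => (‖x‖ ^ 2)⁻¹ • x) x := by
  have h0 : ‖x‖ ^ 2 ≠ 0 := by simpa using hx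
  exact ((continuous_norm.pow 2).continuousAt.inv₀ h0).smul continuousAt_id

lemma lap_kel {n : ℕ} (a : ℝ) {f : EuclideanSpace ℝ (Fin n) → ℝ}
    {x : EuclideanSpace ℝ (Fin n)} (hx : x ≠ 0)
    (hf : ContDiffAt ℝ (2:ℕ) f ((‖x‖ ^ 2)⁻¹ • x)) :
    lap n (kel a f) x = kel (a - 2) (lap n f) x +
      kel (a - 1) (fun y => 2 * a * (2 * a + n - 2) * f y - (4 * a + 2 * n - 4) * eul f y) x := by
  have h0 : 0 < ‖x‖ ^ 2 := by positivity
  set y := (‖x‖ ^ 2)⁻¹ • x with hy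
  set h : EuclideanSpace ℝ (Fin n) → ℝ := fun y => 2 * a * f y - 2 * eul f y with hh
  have dE : DifferentiableAt ℝ (eul f) y := cdiff_diff (cdiff_eul (m := 1) hf le_rfl) le_rfl
  have dF : DifferentiableAt ℝ f y := cdiff_diff hf (by norm_num)
  have dh : DifferentiableAt ℝ h y := (dF.const_mul _).sub (dE.const_mul _)
  have dP : ∀ i, DifferentiableAt ℝ (pd i f) y := fun i =>
    cdiff_diff (cdiff_pd (m := 1) i hf le_rfl) le_rfl
  have eh : eul h y = 2 * a * eul f y - 2 * eul (eul f) y := by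
    rw [eul, hh, fderiv_fun_sub (dF.const_mul _) (dE.const_mul _), fderiv_const_mul dF,
      fderiv_const_mul dE]
    simp [eul]
  have term : ∀ i, pd i (pd i (kel a f)) x = (‖x‖^2)^(a-2) * pd i (pd i f) y
      + (‖x‖^2)^(a-1) * (2 * (a-1) * (y i * pd i f y)
          - 2 * (y i * pd i (eul f) y - y i * pd i f y) + h y + y i * pd i h y)
      + (‖x‖^2)^a * ((y i)^2 * ((2 * a - 2) * h y - 2 * eul h y)) := by
    intro i
    have hev : pd i (kel a f) =ᶠ[𝓝 x] fun x => kel (a-1) (pd i f) x + kel a (fun y => y i * h y) x := by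
      filter_upwards [(inv_cont hx).eventually (cdiff_ev hf), isOpen_ne.mem_nhds hx] with w h1 h2
      exact pd_kel a i h2 (cdiff_diff h1 (by norm_num))
    obtain ⟨c1, c2, c3⟩ := pd_coord_mul i dh
    rw [pd_congr hev, pd_add (hasFDerivAt_kel _ hx (dP i)).1 (hasFDerivAt_kel _ hx c1).1,
      pd_kel _ i hx (dP i), pd_kel _ i hx c1]
    simp only [kel, ← hy]
    rw [c2, c3, pd_eul i hf, show a - 1 - 1 = a - 2 by ring]
    ring
  have hyy : ∑ i, (y i)^2 = (‖x‖^2)⁻¹ := by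
    have : ‖y‖^2 = ∑ i, (y i)^2 := by
      rw [EuclideanSpace.norm_sq_eq]; simp
    rw [← this, hy, norm_smul]
    have : ‖x‖ ≠ 0 := by simpa using hx
    simp
    field_simp
  have hA : (‖x‖^2)^a = (‖x‖^2)^(a-1) * ‖x‖^2 := by
    rw [Real.rpow_sub_one h0.ne']; field_simp
  rw [lap_eq, Finset.sum_congr rfl fun i _ => term i]
  simp only [Finset.sum_add_distrib, ← Finset.mul_sum, Finset.sum_sub_distrib, ← Finset.sum_mul,
    sum_pd, hyy, Finset.sum_const, Finset.card_univ, Fintype.card_fin]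
  rw [hA, eh]
  simp only [kel, ← hy, lap_eq, hh, nsmul_eq_mul]
  have : ‖x‖ ≠ 0 := by simpa using hx
  field_simp
  ring

lemma bilap_kel {n : ℕ} {f : EuclideanSpace ℝ (Fin n) → ℝ}
    {x : EuclideanSpace ℝ (Fin n)} (hx : x ≠ 0)
    (hf : ContDiffAt ℝ (4:ℕ) f ((‖x‖ ^ 2)⁻¹ • x)) :
    bilap n (kel ((4 - n) / 2) f) x = kel ((4 - n) / 2 - 4) (bilap n f) x := by
  set a : ℝ := (4 - n) / 2 with ha
  have hn : (n : ℝ) = 4 - 2 * a := by rw [ha]; ring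
  have h2 : ContDiffAt ℝ (2:ℕ) f ((‖x‖ ^ 2)⁻¹ • x) := hf.of_le (by norm_num)
  have hL : ContDiffAt ℝ (2:ℕ) (lap n f) ((‖x‖ ^ 2)⁻¹ • x) := cdiff_lap hf le_rfl
  have hE : ContDiffAt ℝ (2:ℕ) (eul f) ((‖x‖ ^ 2)⁻¹ • x) := cdiff_eul hf (by norm_num)
  have hev : lap n (kel a f) =ᶠ[𝓝 x] fun x => kel (a - 2) (lap n f) x -
      kel (a - 1) (fun y => (-4 * a) * f y + 4 * eul f y) x := by
    filter_upwards [(inv_cont hx).eventually (cdiff_ev hf), isOpen_ne.mem_nhds hx] with w h1 h2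
    rw [lap_kel a h2 (h1.of_le (by norm_num)), sub_eq_add_neg]
    simp only [kel, hn]
    ring
  have hM : ContDiffAt ℝ (2:ℕ) (fun y => (-4 * a) * f y + 4 * eul f y) ((‖x‖ ^ 2)⁻¹ • x) :=
    (contDiffAt_const.mul h2).add (contDiffAt_const.mul hE)
  have ck : ∀ (b : ℝ) (h : EuclideanSpace ℝ (Fin n) → ℝ),
      ContDiffAt ℝ (2:ℕ) h ((‖x‖ ^ 2)⁻¹ • x) → ContDiffAt ℝ (2:ℕ) (kel b h) x := by
    intro b h hh
    have h0 : ‖x‖ ^ 2 ≠ 0 := by simpa using hx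
    have e1 : ContDiffAt ℝ (2:ℕ) (fun x : EuclideanSpace ℝ (Fin n) => ‖x‖ ^ 2) x :=
      (contDiff_norm_sq ℝ).contDiffAt
    have e2 : ContDiffAt ℝ (2:ℕ) (fun x : EuclideanSpace ℝ (Fin n) => (‖x‖ ^ 2)⁻¹ • x) x :=
      (e1.inv h0).smul contDiffAt_id
    exact (e1.rpow_const_of_ne h0).mul (ContDiffAt.comp
      (f := fun x : EuclideanSpace ℝ (Fin n) => (‖x‖ ^ 2)⁻¹ • x) x hh e2)
  rw [bilap, lap_congr hev, lap_sub (ck _ _ hL) (ck _ _ hM), lap_kel _ hx hL, lap_kel _ hx hM]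
  simp only [kel]
  rw [lap_lin _ _ h2 hE, lap_eul (hf.of_le (by norm_num))]
  rw [hn, show a - 2 - 2 = a - 4 by ring, show a - 2 - 1 = a - 3 by ring,
    show a - 1 - 2 = a - 3 by ring]
  simp only [bilap]
  ring

lemma lap_shift {n : ℕ} (u : EuclideanSpace ℝ (Fin n) → ℝ) (z : EuclideanSpace ℝ (Fin n)) :
    lap n (fun y => u (y + z)) = fun y => lap n u (y + z) := by
  ext y
  simp only [lap, fderiv_comp_add_right]
  refine Finset.sum_congr rfl fun i _ => ?_
  rw [fderiv_comp_add_right (f := fun y => fderiv ℝ u y (EuclideanSpace.single i 1))]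

lemma main_aux {n : ℕ} {g : ℝ → ℝ}
    {u : EuclideanSpace ℝ (Fin n) → ℝ}
    (hu4 : ContDiffOn ℝ 4 u {(0 : EuclideanSpace ℝ (Fin n))}ᶜ)
    (hsol : ∀ x : EuclideanSpace ℝ (Fin n), x ≠ 0 →
      bilap n u x = ‖x‖ ^ (-(((n : ℝ) + 4) / 2)) * g (‖x‖ ^ (((n : ℝ) - 4) / 2) * u x))
    (z : EuclideanSpace ℝ (Fin n)) 
    (uz : EuclideanSpace ℝ (Fin n) → ℝ)
    (huz : ∀ x : EuclideanSpace ℝ (Fin n),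
      uz x = ‖x‖ ^ (-((n : ℝ) - 4)) * u ((‖x‖ ^ 2)⁻¹ • x + z))
    (x : EuclideanSpace ℝ (Fin n)) (hx : x ≠ 0) (hy : (‖x‖ ^ 2)⁻¹ • x + z ≠ 0)
    (k : ℝ) (hk : k = (‖x‖ ^ 2 * ‖(‖x‖ ^ 2)⁻¹ • x + z‖)⁻¹) :
    bilap n uz x = k ^ (((n : ℝ) + 4) / 2) * g (k ^ (-(((n : ℝ) - 4) / 2)) * uz x) := by
  have e : uz = kel ((4 - n) / 2) (fun y => u (y + z)) := by
    ext w
    rw [huz, kel, ← Real.rpow_natCast_mul (norm_nonneg _)]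
    congr 2
    push_cast; ring
  have hf : ContDiffAt ℝ (4:ℕ) (fun y => u (y + z)) ((‖x‖ ^ 2)⁻¹ • x) := by
    have : ContDiffAt ℝ (4:ℕ) u ((‖x‖ ^ 2)⁻¹ • x + z) :=
      hu4.contDiffAt (isOpen_compl_singleton.mem_nhds hy)
    exact ContDiffAt.comp (f := fun y : EuclideanSpace ℝ (Fin n) => y + z) _ this
      (contDiffAt_id.add contDiffAt_const)
  have key := bilap_kel hx hf
  rw [← e, bilap.eq_def n (fun y => u (y + z)), lap_shift, lap_shift] at key
  rw [key, kel]
  change _ * bilap n u _ = _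
  rw [hsol _ hy, huz, hk]
  set r := ‖(‖x‖ ^ 2)⁻¹ • x + z‖ with hr
  have hr0 : 0 < r := norm_pos_iff.2 hy
  have hx0 : 0 < ‖x‖ := norm_pos_iff.2 hx
  have p1 : (‖x‖ ^ 2 * r)⁻¹ ^ (((n : ℝ) + 4) / 2)
      = (‖x‖ ^ 2) ^ (((4:ℝ) - n) / 2 - 4) * r ^ (-(((n : ℝ) + 4) / 2)) := by
    rw [Real.inv_rpow (by positivity), ← Real.rpow_neg (by positivity),
      Real.mul_rpow (by positivity) hr0.le]
    congr 2; ring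
  have p2 : (‖x‖ ^ 2 * r)⁻¹ ^ (-(((n : ℝ) - 4) / 2)) * ‖x‖ ^ (-((n : ℝ) - 4))
      = r ^ (((n : ℝ) - 4) / 2) := by
    rw [Real.inv_rpow (by positivity), ← Real.rpow_neg (by positivity), neg_neg,
      Real.mul_rpow (by positivity) hr0.le, ← Real.rpow_natCast_mul hx0.le, mul_right_comm,
      ← Real.rpow_add hx0]
    have : ((2:ℕ):ℝ) * (((n : ℝ) - 4) / 2) + -((n : ℝ) - 4) = 0 := by push_cast; ring
    rw [this]; simp
  rw [p1, ← mul_assoc ((‖x‖ ^ 2 * r)⁻¹ ^ (-(((n : ℝ) - 4) / 2))), p2, mul_assoc]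

theorem stmt_18 (n : ℕ) (hn : 5 ≤ n) (g : ℝ → ℝ) (hg : CondG n g)
    (u : EuclideanSpace ℝ (Fin n) → ℝ)
    (hu4 : ContDiffOn ℝ 4 u {(0 : EuclideanSpace ℝ (Fin n))}ᶜ)
    (hupos : ∀ x : EuclideanSpace ℝ (Fin n), x ≠ 0 → 0 < u x)
    (hsol : ∀ x : EuclideanSpace ℝ (Fin n), x ≠ 0 →
      bilap n u x = ‖x‖ ^ (-(((n : ℝ) + 4) / 2)) * g (‖x‖ ^ (((n : ℝ) - 4) / 2) * u x))
    (z : EuclideanSpace ℝ (Fin n)) (hz : z ≠ 0)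
    (zs : EuclideanSpace ℝ (Fin n)) (hzs : zs = (‖z‖ ^ 2)⁻¹ • z)
    (uz : EuclideanSpace ℝ (Fin n) → ℝ)
    (huz : ∀ x : EuclideanSpace ℝ (Fin n),
      uz x = ‖x‖ ^ (-((n : ℝ) - 4)) * u ((‖x‖ ^ 2)⁻¹ • x + z))
    (k : EuclideanSpace ℝ (Fin n) → ℝ)
    (hk : ∀ x : EuclideanSpace ℝ (Fin n), k x = ‖zs‖ / (‖x‖ * ‖x + zs‖)) :
    (∀ x : EuclideanSpace ℝ (Fin n), x ≠ 0 → x ≠ -zs →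
      bilap n uz x = (k x) ^ (((n : ℝ) + 4) / 2) * g ((k x) ^ (-(((n : ℝ) - 4) / 2)) * uz x)) ∧
    (∀ us : EuclideanSpace ℝ (Fin n) → ℝ,
      (∀ x : EuclideanSpace ℝ (Fin n), us x = ‖x‖ ^ (-((n : ℝ) - 4)) * u ((‖x‖ ^ 2)⁻¹ • x)) →
      ∀ x : EuclideanSpace ℝ (Fin n), x ≠ 0 →
        bilap n us x = (‖x‖⁻¹) ^ (((n : ℝ) + 4) / 2) *
          g ((‖x‖⁻¹) ^ (-(((n : ℝ) - 4) / 2)) * us x)) := by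
  constructor
  · intro x hx hxz
    have hz0 : ‖z‖ ≠ 0 := by simpa using hz
    have hx0 : ‖x‖ ≠ 0 := by simpa using hx
    have hN : ‖x‖ * ‖(‖x‖ ^ 2)⁻¹ • x + z‖ = ‖z‖ * ‖x + zs‖ := by
      rw [← sq_eq_sq₀ (by positivity) (by positivity), mul_pow, mul_pow, norm_add_sq_real,
        norm_add_sq_real, hzs]
      simp only [norm_smul, inner_smul_left, inner_smul_right]
      simp
      field_simp
      ring
    have hs0 : ‖x + zs‖ ≠ 0 := by
      rw [norm_ne_zero_iff]
      intro h
      exact hxz (eq_neg_of_add_eq_zero_left h)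
    have hy : (‖x‖ ^ 2)⁻¹ • x + z ≠ 0 := by
      intro h
      rw [h, norm_zero, mul_zero] at hN
      exact mul_ne_zero hz0 hs0 hN.symm
    refine main_aux hu4 hsol z uz huz x hx hy (k x) ?_
    rw [hk, sq, mul_assoc, ← sq, hN]
    have : ‖zs‖ = ‖z‖⁻¹ := by
      rw [hzs, norm_smul]
      simp
      field_simp
    rw [this]
    field_simp
  · intro us hus x hx
    have hx0 : ‖x‖ ≠ 0 := by simpa using hx
    refine main_aux hu4 hsol 0 us (by simpa using hus) x hx ?_ _ ?_
    · simpa using hx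
    · rw [add_zero, norm_smul]
      simp
      field_simp
end
end
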